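/- arXiv:2207.02040 — 3 statements merged into one kernel-verified Lean document; each statement's English description precedes it below -/
import Mathlib

section
/- Let n ≥ 9 and let x be an integer with 3 ≤ x ≤ ⌊(n−3)/2⌋. Then the multiset {(x+2)^2, n+2−2x, 3^(n−6), 2^3} is outerplane-unigraphic: there exists an outerplane graph on n vertices with this degree multiset, and any two outerplane graphs on n vertices with this degree multiset are isomorphic. (Type B1 of the paper's Theorem 2, corresponding to the polytope degree sequence p−1, (x+3)^2, p−1−2x+3, 4^(p−7), 3^3 with p = n+1 ≥ 10 and 3 ≤ x ≤ ⌊(p−4)/2⌋.) -/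
/-- The vertices strictly between `a` and `b`, traversing the cycle `ZMod n`
from `a` towards `b` in the direction of increasing residues. -/
def Between (n : ℕ) (a b v : ZMod n) : Prop :=
  0 < (v - a).val ∧ (v - a).val < (b - a).val

/-- `e` is an edge of the standard `n`-cycle on `ZMod n`. -/
def IsCycleEdge (n : ℕ) (e : Sym2 (ZMod n)) : Prop :=
  ∃ i : ZMod n, e = s(i, i + 1)

/-- A chord: an unordered pair of distinct vertices of `ZMod n` that is not an
edge of the standard `n`-cycle. -/
def IsChord (n : ℕ) (e : Sym2 (ZMod n)) : Prop :=
  ¬ e.IsDiag ∧ ¬ IsCycleEdge n e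

/-- Two chords cross if exactly one endpoint of the second lies strictly between
the endpoints of the first (traversing in the direction of increasing residues). -/
def Cross (n : ℕ) (e f : Sym2 (ZMod n)) : Prop :=
  ∀ a b c d : ZMod n, e = s(a, b) → f = s(c, d) →
    Xor' (Between n a b c) (Between n a b d)

/-- `S` is a set of pairwise non-crossing chords of the standard `n`-cycle. -/
def NonCrossingChords (n : ℕ) (S : Set (Sym2 (ZMod n))) : Prop :=
  (∀ e ∈ S, IsChord n e) ∧ ∀ e ∈ S, ∀ f ∈ S, e ≠ f → ¬ Cross n e f

/-- The chord graph of a set `S` of chords: the simple graph on `ZMod n`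
whose edge set is `S`. -/
def chordGraph (n : ℕ) (S : Set (Sym2 (ZMod n))) : SimpleGraph (ZMod n) :=
  SimpleGraph.fromEdgeSet S

/-- A vertex is chord-free for `S` if it is incident to no chord of `S`. -/
def ChordFree (n : ℕ) (S : Set (Sym2 (ZMod n))) (v : ZMod n) : Prop :=
  ∀ e ∈ S, v ∉ e

/-- An outerplane graph on `n` vertices: a simple graph on `ZMod n` whose edge
set is the (disjoint) union of the standard `n`-cycle and a set of pairwise
non-crossing chords. -/
def IsOuterplane (n : ℕ) (G : SimpleGraph (ZMod n)) : Prop :=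
  ∃ S : Set (Sym2 (ZMod n)), NonCrossingChords n S ∧
    G.edgeSet = {e | IsCycleEdge n e} ∪ S

/-- The multiset of vertex degrees of a graph on a finite vertex type. -/
noncomputable def degMultiset {V : Type*} [Fintype V] (G : SimpleGraph V) : Multiset ℕ := by
  classical exact Finset.univ.val.map fun v => G.degree v

/-- The multiset of vertex degrees of a graph on `ZMod n` (junk value for `n = 0`). -/
noncomputable def degreeMultiset (n : ℕ) (G : SimpleGraph (ZMod n)) : Multiset ℕ :=
  if h : n = 0 then 0
  else by haveI : NeZero n := ⟨h⟩; exact degMultiset G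

/-- `M` is outerplane-unigraphic on `n` vertices: there is an outerplane graph on
`n` vertices with degree multiset `M`, and any two such are isomorphic. -/
def OuterplaneUnigraphic (n : ℕ) (M : Multiset ℕ) : Prop :=
  (∃ G : SimpleGraph (ZMod n), IsOuterplane n G ∧ degreeMultiset n G = M) ∧
  ∀ G G' : SimpleGraph (ZMod n), IsOuterplane n G → IsOuterplane n G' →
    degreeMultiset n G = M → degreeMultiset n G' = M → Nonempty (G ≃g G')

/-- A caterpillar: a connected acyclic graph (tree) in which all vertices of
degree at least two lie on a common path. -/
def IsCaterpillar {V : Type*} (G : SimpleGraph V) : Prop :=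
  G.Connected ∧ G.IsAcyclic ∧
    ∃ (u w : V) (p : G.Walk u w), p.IsPath ∧
      ∀ v : V, (∃ a b : V, a ≠ b ∧ G.Adj v a ∧ G.Adj v b) → v ∈ p.support

/-- Type B1 of the paper's Theorem 2: for `n ≥ 9` and `3 ≤ x ≤ ⌊(n-3)/2⌋`, the
multiset `{(x+2)^2, n+2-2x, 3^(n-6), 2^3}` is outerplane-unigraphic. -/

theorem ug_count {V : Type*} [Fintype V] [DecidableEq V] (C : SimpleGraph V) [DecidableRel C.Adj]
    (A B D : V) (hAB : A ≠ B) (hAD : A ≠ D) (hBD : B ≠ D) (N : ℕ)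
    (hbig : C.degree A + C.degree B + C.degree D = N + 6)
    (hsmall : ∑ v ∈ ({A, B, D} : Finset V)ᶜ, C.degree v = N) :
    C.Adj A B ∧ C.Adj A D ∧ C.Adj B D ∧
      ∀ v ∈ ({A, B, D} : Finset V)ᶜ, ∀ w ∈ ({A, B, D} : Finset V)ᶜ, ¬ C.Adj v w := by
  classical
  have hdeg : ∀ v, C.degree v = ∑ w, if C.Adj v w then 1 else 0 := by
    intro v
    rw [← SimpleGraph.card_neighborFinset_eq_degree, SimpleGraph.neighborFinset_eq_filter,
      Finset.card_filter]
  set T : Finset V := {A, B, D} with hT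
  have hsplit : ∀ v, C.degree v = (∑ w ∈ T, if C.Adj v w then 1 else 0) +
      ∑ w ∈ Tᶜ, if C.Adj v w then 1 else 0 := by
    intro v
    rw [hdeg, Finset.sum_add_sum_compl]
  have hTsum : ∀ f : V → ℕ, ∑ v ∈ T, f v = f A + f B + f D := by
    intro f
    rw [hT, Finset.sum_insert (by simp [hAB, hAD]), Finset.sum_insert (by simp [hBD]),
      Finset.sum_singleton, add_assoc]
  have h1 : ∑ v ∈ T, C.degree v = N + 6 := by rw [hTsum, hbig]
  rw [Finset.sum_congr rfl (fun v _ => hsplit v), Finset.sum_add_distrib] at h1 hsmall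
  have h2 : (∑ v ∈ T, ∑ w ∈ Tᶜ, if C.Adj v w then 1 else 0) =
      ∑ v ∈ Tᶜ, ∑ w ∈ T, if C.Adj v w then 1 else 0 := by
    rw [Finset.sum_comm]
    simp only [C.adj_comm]
  have h3 : (∑ v ∈ T, ∑ w ∈ T, if C.Adj v w then 1 else 0) =
     2 * ((if C.Adj A B then 1 else 0) + (if C.Adj A D then 1 else 0)
        + (if C.Adj B D then 1 else 0)) := by
    simp only [hTsum, SimpleGraph.irrefl, C.adj_comm B A, C.adj_comm D A, C.adj_comm D B]
    simp
    ring
  have hm : (∑ v ∈ Tᶜ, ∑ w ∈ Tᶜ, if C.Adj v w then 1 else 0) = 0 ∧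
      (C.Adj A B ∧ C.Adj A D ∧ C.Adj B D) := by
    rw [h3] at h1
    rw [h2] at h1
    by_cases hh1 : C.Adj A B <;> by_cases hh2 : C.Adj A D <;> by_cases hh3 : C.Adj B D <;>
      simp only [hh1, hh2, hh3, if_true, if_false] at h1 ⊢ <;>
      first | (refine ⟨?_, trivial, trivial, trivial⟩; omega) | omega
  refine ⟨hm.2.1, hm.2.2.1, hm.2.2.2, ?_⟩
  intro v hv w hw hvw
  have := hm.1
  rw [Finset.sum_eq_zero_iff] at this
  have := this v hv
  rw [Finset.sum_eq_zero_iff] at this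
  have := this w hw
  simp [hvw] at this

structure UCfg (n : ℕ) (H : ℕ → ℕ → Prop) : Prop where
  symm : ∀ i j, H i j → H j i
  per : ∀ i j, H i (j + n) ↔ H i j
  nocyc : ∀ i, ¬ H i (i + 1)
  nc : ∀ a c b d, a < c → c < b → b < d → d < a + n → H a b → H c d → False

/-- forward fan -/
def UCw (H : ℕ → ℕ → Prop) (p q : ℕ) : Prop :=
  ∀ v, p < v → v < q → ((H p v ↔ v ≠ p + 1) ∧ ¬ H q v)

/-- backward fan -/
def UCcw (H : ℕ → ℕ → Prop) (p q : ℕ) : Prop :=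
  ∀ v, p < v → v < q → ((H q v ↔ v + 1 ≠ q) ∧ ¬ H p v)

theorem ug_arc {n : ℕ} {H : ℕ → ℕ → Prop} (h : UCfg n H) (p q r : ℕ) (hpq : p < q) (hqr : q < r)
    (hr : r < p + n) (hH : H p q)
    (hs : ∀ v, p < v → v < q → (∀ w, ¬ H v w) ∨ H v p ∨ H v q ∨ H v r) :
    (∀ v, p < v → v < q → ¬ H v r) ∧
    ∃ f, p < f ∧ f < q ∧ (∀ w, ¬ H f w) ∧
      ((∀ v, p < v → v < q → v ≠ f → ¬ (∀ w, ¬ H v w)) → UCw H p q ∨ UCcw H p q) := by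
  have hr' : ∀ v, p < v → v < q → ¬ H v r := fun v h1 h2 h3 => h.nc p v q r h1 h2 hqr hr hH h3
  refine ⟨hr', ?_⟩
  have hs' : ∀ v, p < v → v < q → (∀ w, ¬ H v w) ∨ H p v ∨ H v q := by
    intro v h1 h2
    rcases hs v h1 h2 with h3 | h3 | h3 | h3
    · exact .inl h3
    · exact .inr (.inl (h.symm _ _ h3))
    · exact .inr (.inr h3)
    · exact absurd h3 (hr' v h1 h2)
  have hpq2 : p + 1 < q := by
    rcases Nat.lt_or_ge (p+1) q with h1 | h1
    · exact h1
    · have : q = p + 1 := by omega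
      exact absurd (this ▸ hH) (h.nocyc p)
  have nq : ∀ v, v + 1 = q → ¬ H v q := by
    rintro v rfl; exact h.nocyc v
  by_cases hc : H (p+1) q
  · -- all to q
    have hp : ∀ v, p < v → v < q → ¬ H p v := by
      intro v h1 h2 h3
      by_cases h4 : v = p + 1
      · exact h.nocyc p (h4 ▸ h3)
      · exact h.nc p (p+1) v q (by omega) (by omega) h2 (by omega) h3 hc
    refine ⟨q - 1, by omega, by omega, ?_, ?_⟩
    · rcases hs' (q-1) (by omega) (by omega) with h3 | h3 | h3
      · exact h3
      · exact absurd h3 (hp _ (by omega) (by omega))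
      · exact absurd h3 (nq _ (by omega))
    · intro hall
      right
      intro v h1 h2
      refine ⟨⟨?_, ?_⟩, hp v h1 h2⟩
      · intro h3 h4
        exact nq v h4 (h.symm _ _ h3)
      · intro h3
        rcases hs' v h1 h2 with h4 | h4 | h4
        · exact absurd h4 (hall v h1 h2 (by omega))
        · exact absurd h4 (hp _ h1 h2)
        · exact h.symm _ _ h4
  · refine ⟨p + 1, by omega, by omega, ?_, ?_⟩
    · rcases hs' (p+1) (by omega) (by omega) with h3 | h3 | h3
      · exact h3
      · exact absurd h3 (h.nocyc p)
      · exact absurd h3 hc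
    · intro hall
      left
      have hq : ∀ v, p < v → v < q → ¬ H v q := by
        intro v h1 h2 h3
        by_cases h4 : v + 1 = q
        · exact nq v h4 h3
        · rcases hs' (q-1) (by omega) (by omega) with h5 | h5 | h5
          · exact hall _ (by omega) (by omega) (by omega) h5
          · exact h.nc p v (q-1) q h1 (by omega) (by omega) (by omega) h5 h3
          · exact nq _ (by omega) h5
      intro v h1 h2
      refine ⟨⟨?_, ?_⟩, fun h3 => hq v h1 h2 (h.symm _ _ h3)⟩
      · rintro h3 rfl
        exact h.nocyc p h3
      · intro h3
        rcases hs' v h1 h2 with h4 | h4 | h4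
        · exact absurd h4 (hall v h1 h2 h3)
        · exact h4
        · exact absurd h4 (hq v h1 h2)

open Classical in
/-- degree count at `p` with arcs (p,q), (q,r), (r,p+n) -/
theorem ug_deg {n : ℕ} {H : ℕ → ℕ → Prop} (h : UCfg n H) (p q r : ℕ) (hpq : p < q) (hqr : q < r)
    (hr : r < p + n) (h1 : H p q) (h2 : H p r) (hmid : ∀ v, q < v → v < r → ¬ H p v)
    (hpp : ¬ H p p) (e1 e2 : ℕ)
    (ha : (UCw H p q ∧ e1 = 1) ∨ (UCcw H p q ∧ e1 = 0))
    (hb : (UCw H r (p+n) ∧ e2 = 0) ∨ (UCcw H r (p+n) ∧ e2 = 1)) :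
    ((Finset.Ico p (p+n)).filter (H p)).card = 2 + e1 * (q - p - 2) + e2 * (p + n - r - 2) := by
  have hpn : ∀ v, H (p+n) v ↔ H p v := by
    intro v
    constructor
    · intro h3; exact h.symm _ _ ((h.per v p).1 (h.symm _ _ h3))
    · intro h3; exact h.symm _ _ ((h.per v p).2 (h.symm _ _ h3))
  have hL : ((Finset.Ioo p q).filter (H p)).card = e1 * (q - p - 2) := by
    rcases ha with ⟨ha, rfl⟩ | ⟨ha, rfl⟩
    · have : (Finset.Ioo p q).filter (H p) = Finset.Ioo (p+1) q := by
        ext v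
        simp only [Finset.mem_filter, Finset.mem_Ioo]
        constructor
        · rintro ⟨⟨h3, h4⟩, h5⟩
          have := (ha v h3 h4).1.1 h5
          omega
        · rintro ⟨h3, h4⟩
          exact ⟨⟨by omega, h4⟩, (ha v (by omega) h4).1.2 (by omega)⟩
      rw [this, Nat.card_Ioo]; omega
    · rw [Finset.filter_false_of_mem]
      · simp
      · intro v hv
        rw [Finset.mem_Ioo] at hv
        exact (ha v hv.1 hv.2).2
  have hR : ((Finset.Ioo r (p+n)).filter (H p)).card = e2 * (p + n - r - 2) := by
    rcases hb with ⟨ha, rfl⟩ | ⟨ha, rfl⟩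
    · rw [Finset.filter_false_of_mem]
      · simp
      · intro v hv
        rw [Finset.mem_Ioo] at hv
        rw [← hpn]
        exact (ha v hv.1 hv.2).2
    · have : (Finset.Ioo r (p+n)).filter (H p) = Finset.Ioo r (p+n-1) := by
        ext v
        simp only [Finset.mem_filter, Finset.mem_Ioo]
        constructor
        · rintro ⟨⟨h3, h4⟩, h5⟩
          have := (ha v h3 h4).1.1 ((hpn v).2 h5)
          omega
        · rintro ⟨h3, h4⟩
          exact ⟨⟨by omega, by omega⟩, (hpn v).1 ((ha v (by omega) (by omega)).1.2 (by omega))⟩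
      rw [this, Nat.card_Ioo]; omega
  have hM : (Finset.Ico p (p+n)).filter (H p) =
      ({q, r} ∪ (Finset.Ioo p q).filter (H p)) ∪ (Finset.Ioo r (p+n)).filter (H p) := by
    ext v
    simp only [Finset.mem_union, Finset.mem_filter, Finset.mem_Ioo, Finset.mem_Ico,
      Finset.mem_insert, Finset.mem_singleton]
    constructor
    · rintro ⟨⟨h3, h4⟩, h5⟩
      by_cases hv : v = p
      · subst hv; exact absurd h5 hpp
      by_cases hv1 : v = q
      · simp [hv1]
      by_cases hv2 : v = r
      · simp [hv2]
      by_cases hv3 : v < q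
      · left; right; exact ⟨⟨by omega, hv3⟩, h5⟩
      by_cases hv4 : v < r
      · exact absurd h5 (hmid v (by omega) hv4)
      · right; exact ⟨⟨by omega, h4⟩, h5⟩
    · rintro (((rfl | rfl) | ⟨h3, h4⟩) | ⟨h3, h4⟩)
      · exact ⟨⟨by omega, by omega⟩, h1⟩
      · exact ⟨⟨by omega, by omega⟩, h2⟩
      · exact ⟨⟨by omega, by omega⟩, h4⟩
      · exact ⟨⟨by omega, by omega⟩, h4⟩
  rw [hM, Finset.card_union_of_disjoint, Finset.card_union_of_disjoint, hL, hR,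
    Finset.card_pair (by omega)]
  · rw [Finset.disjoint_left]
    intro v
    simp only [Finset.mem_filter, Finset.mem_Ioo, Finset.mem_insert, Finset.mem_singleton]
    omega
  · rw [Finset.disjoint_left]
    intro v
    simp only [Finset.mem_union, Finset.mem_filter, Finset.mem_Ioo, Finset.mem_insert, Finset.mem_singleton]
    omega

def UK (x y i j : ℕ) : Prop :=
  (i = 0 ∧ 2 ≤ j ∧ j ≤ y) ∨ (i = 0 ∧ j = x + y) ∨ (i = y ∧ y + 2 ≤ j ∧ j ≤ x + y) ∨
    (i = x + y ∧ x + y + 2 ≤ j ∧ j < 2 * x + y)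

def UKr (x y i j : ℕ) : Prop :=
  (i = 0 ∧ 2 * x ≤ j ∧ j + 2 ≤ 2 * x + y) ∨ (i = 0 ∧ j = x) ∨ (j = x ∧ 1 ≤ i ∧ i + 2 ≤ x) ∨
    (j = 2 * x ∧ x ≤ i ∧ i + 2 ≤ 2 * x)

open Classical in
theorem ug_core {n x y : ℕ} {H : ℕ → ℕ → Prop} (h : UCfg n H) (hn : n = 2 * x + y)
    (hx : 3 ≤ x) (hy : 3 ≤ y) (b c : ℕ) (hb : 0 < b) (hbc : b < c) (hc : c < n)
    (h0b : H 0 b) (h0c : H 0 c) (hHbc : H b c) (hirr : ∀ i, ¬ H i i)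
    (hs : ∀ v, v < n → v ≠ 0 → v ≠ b → v ≠ c → (∀ w, ¬ H v w) ∨ H v 0 ∨ H v b ∨ H v c)
    (hss : ∀ v w, v < n → v ≠ 0 → v ≠ b → v ≠ c → w < n → w ≠ 0 → w ≠ b → w ≠ c → ¬ H v w)
    (hfree : ∀ f1 f2 f3 v, f1 < f2 → f2 < f3 → f3 < n → v < n → v ≠ f1 → v ≠ f2 → v ≠ f3 →
      (∀ w, ¬ H f1 w) → (∀ w, ¬ H f2 w) → (∀ w, ¬ H f3 w) → ¬ (∀ w, ¬ H v w))
    (d0 : ((Finset.Ico 0 (0+n)).filter (H 0)).card = y)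
    (db : ((Finset.Ico b (b+n)).filter (H b)).card = x)
    (dc : ((Finset.Ico c (c+n)).filter (H c)).card = x) :
    (∀ i j, i < j → j < n → (H i j ↔ UK x y i j)) ∨
    (∀ i j, i < j → j < n → (H i j ↔ UKr x y i j)) := by
  have perl : ∀ i j, H (i+n) j ↔ H i j := by
    intro i j
    constructor
    · intro h3; exact h.symm _ _ ((h.per _ _).1 (h.symm _ _ h3))
    · intro h3; exact h.symm _ _ ((h.per _ _).2 (h.symm _ _ h3))
  have p0 : ∀ i, H i n ↔ H i 0 := by intro i; have := h.per i 0; rwa [zero_add] at this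
  have p0' : ∀ i, H n i ↔ H 0 i := by intro i; have := perl 0 i; rwa [zero_add] at this
  have hHcn : H c n := (p0 c).2 (h.symm _ _ h0c)
  obtain ⟨r1, f1, hf1, hf1', hf1f, fan1⟩ := ug_arc h 0 b c hb hbc (by omega) h0b
    (fun v h1 h2 => hs v (by omega) (by omega) (by omega) (by omega))
  obtain ⟨r2, f2, hf2, hf2', hf2f, fan2⟩ := ug_arc h b c n hbc hc (by omega) hHbc
    (fun v h1 h2 => by
      rw [p0]
      have := hs v (by omega) (by omega) (by omega) (by omega)
      tauto)
  obtain ⟨r3, f3, hf3, hf3', hf3f, fan3⟩ := ug_arc h c n (b+n) hc (by omega) (by omega) hHcn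
    (fun v h1 h2 => by
      rw [p0, h.per]
      have := hs v (by omega) (by omega) (by omega) (by omega)
      tauto)
  replace r2 : ∀ v, b < v → v < c → ¬ H 0 v := fun v h1 h2 h3 =>
    r2 v h1 h2 ((p0 v).2 (h.symm _ _ h3))
  replace r3 : ∀ v, c < v → v < n → ¬ H b v := fun v h1 h2 h3 =>
    r3 v h1 h2 ((h.per v b).2 (h.symm _ _ h3))
  replace r1 : ∀ v, 0 < v → v < b → ¬ H c v := fun v h1 h2 h3 => r1 v h1 h2 (h.symm _ _ h3)
  have F := hfree f1 f2 f3
  replace fan1 := fan1 (fun v h1 h2 h3 => F v (by omega) (by omega) (by omega) (by omega)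
    (by omega) (by omega) (by omega) hf1f hf2f hf3f)
  replace fan2 := fan2 (fun v h1 h2 h3 => F v (by omega) (by omega) (by omega) (by omega)
    (by omega) (by omega) (by omega) hf1f hf2f hf3f)
  replace fan3 := fan3 (fun v h1 h2 h3 => F v (by omega) (by omega) (by omega) (by omega)
    (by omega) (by omega) (by omega) hf1f hf2f hf3f)
  -- shifted fans
  have s1 : ∀ v, n < v → v < b + n → ∃ u, v = u + n ∧ 0 < u ∧ u < b := fun v h1 h2 =>
    ⟨v - n, by omega, by omega, by omega⟩
  have s2 : ∀ v, b + n < v → v < c + n → ∃ u, v = u + n ∧ b < u ∧ u < c := fun v h1 h2 =>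
    ⟨v - n, by omega, by omega, by omega⟩
  have fan1w : UCw H 0 b → UCw H n (b+n) := by
    intro hw v h1 h2
    obtain ⟨u, rfl, h3, h4⟩ := s1 v h1 h2
    rw [p0', h.per, perl, h.per]
    have := hw u h3 h4
    refine ⟨⟨fun h5 => ?_, fun h5 => this.1.2 (by omega)⟩, this.2⟩
    have := this.1.1 h5
    omega
  have fan1c : UCcw H 0 b → UCcw H n (b+n) := by
    intro hw v h1 h2
    obtain ⟨u, rfl, h3, h4⟩ := s1 v h1 h2
    rw [p0', h.per, perl, h.per]
    have := hw u h3 h4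
    refine ⟨⟨fun h5 => ?_, fun h5 => this.1.2 (by omega)⟩, this.2⟩
    have := this.1.1 h5
    omega
  have fan2w : UCw H b c → UCw H (b+n) (c+n) := by
    intro hw v h1 h2
    obtain ⟨u, rfl, h3, h4⟩ := s2 v h1 h2
    rw [perl, h.per, perl, h.per]
    have := hw u h3 h4
    refine ⟨⟨fun h5 => ?_, fun h5 => this.1.2 (by omega)⟩, this.2⟩
    have := this.1.1 h5
    omega
  have fan2c : UCcw H b c → UCcw H (b+n) (c+n) := by
    intro hw v h1 h2
    obtain ⟨u, rfl, h3, h4⟩ := s2 v h1 h2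
    rw [perl, h.per, perl, h.per]
    have := hw u h3 h4
    refine ⟨⟨fun h5 => ?_, fun h5 => this.1.2 (by omega)⟩, this.2⟩
    have := this.1.1 h5
    omega
  have bw : ∃ e, (UCw H 0 b ∧ e = 1) ∨ (UCcw H 0 b ∧ e = 0) := by
    rcases fan1 with hh | hh
    · exact ⟨1, .inl ⟨hh, rfl⟩⟩
    · exact ⟨0, .inr ⟨hh, rfl⟩⟩
  have bw2 : ∃ e, (UCw H b c ∧ e = 1) ∨ (UCcw H b c ∧ e = 0) := by
    rcases fan2 with hh | hh
    · exact ⟨1, .inl ⟨hh, rfl⟩⟩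
    · exact ⟨0, .inr ⟨hh, rfl⟩⟩
  have bw3 : ∃ e, (UCw H c n ∧ e = 1) ∨ (UCcw H c n ∧ e = 0) := by
    rcases fan3 with hh | hh
    · exact ⟨1, .inl ⟨hh, rfl⟩⟩
    · exact ⟨0, .inr ⟨hh, rfl⟩⟩
  obtain ⟨e1, E1⟩ := bw
  obtain ⟨e2, E2⟩ := bw2
  obtain ⟨e3, E3⟩ := bw3
  have E3' : (UCw H c (0+n) ∧ 1 - e3 = 0) ∨ (UCcw H c (0+n) ∧ 1 - e3 = 1) := by
    rw [zero_add]
    rcases E3 with ⟨a, rfl⟩ | ⟨a, rfl⟩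
    · exact .inl ⟨a, rfl⟩
    · exact .inr ⟨a, rfl⟩
  have E1' : (UCw H n (b+n) ∧ 1 - e1 = 0) ∨ (UCcw H n (b+n) ∧ 1 - e1 = 1) := by
    rcases E1 with ⟨a, rfl⟩ | ⟨a, rfl⟩
    · exact .inl ⟨fan1w a, rfl⟩
    · exact .inr ⟨fan1c a, rfl⟩
  have E2' : (UCw H (b+n) (c+n) ∧ 1 - e2 = 0) ∨ (UCcw H (b+n) (c+n) ∧ 1 - e2 = 1) := by
    rcases E2 with ⟨a, rfl⟩ | ⟨a, rfl⟩
    · exact .inl ⟨fan2w a, rfl⟩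
    · exact .inr ⟨fan2c a, rfl⟩
  have D0 := ug_deg h 0 b c hb hbc (by omega) h0b h0c r2 (hirr 0) e1 (1-e3) E1 E3'
  have D1 := ug_deg h b c n hbc hc (by omega) hHbc ((p0 b).2 (h.symm _ _ h0b)) r3 (hirr b)
    e2 (1-e1) E2 E1'
  have D2 := ug_deg h c n (b+n) hc (by omega) (by omega) hHcn ((h.per c b).2 (h.symm _ _ hHbc))
    (fun v h1 h2 h3 => by
      obtain ⟨u, rfl, h4, h5⟩ := s1 v h1 h2
      exact r1 u h4 h5 ((h.per _ _).1 h3)) (hirr c) e3 (1-e2) E3 E2'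
  rw [d0] at D0
  rw [db] at D1
  rw [dc] at D2
  clear E1' E2' E3' fan1w fan1c fan2w fan2c fan1 fan2 fan3 s1 s2 F hfree d0 db dc
  -- generic evaluation
  rcases E1 with ⟨a1, rfl⟩ | ⟨a1, rfl⟩ <;> rcases E2 with ⟨a2, rfl⟩ | ⟨a2, rfl⟩ <;>
    rcases E3 with ⟨a3, rfl⟩ | ⟨a3, rfl⟩ <;> try omega
  · left
    have hb' : b = y := by omega
    have hc' : c = x + y := by omega
    intro i j hij hj
    unfold UK
    by_cases i0 : i = 0
    · rcases lt_trichotomy j b with h1 | h1 | h1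
      · have := (a1 j (by omega) h1).1
        rw [i0, this]; omega
      · have : H i j := by rw [i0, h1]; exact h0b
        simp only [this, true_iff]; omega
      rcases lt_trichotomy j c with h2 | h2 | h2
      · have := r2 j (by omega) h2
        rw [i0]; simp only [this, false_iff]; omega
      · have : H i j := by rw [i0, h2]; exact h0c
        simp only [this, true_iff]; omega
      · have := (a3 j h2 hj).2
        rw [p0'] at this
        rw [i0]; simp only [this, false_iff]; omega
    by_cases ib : i = b
    · rcases lt_trichotomy j c with h2 | h2 | h2
      · have := (a2 j (by omega) h2).1
        rw [ib, this]; omega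
      · have : H i j := by rw [ib, h2]; exact hHbc
        simp only [this, true_iff]; omega
      · have := r3 j h2 hj
        rw [ib]; simp only [this, false_iff]; omega
    by_cases ic : i = c
    · have := (a3 j (by omega) hj).1
      rw [ic, this]; omega
    have : ¬ H i j := by
      by_cases jb : j = b
      · intro h3
        exact (a1 i (by omega) (by omega)).2 (h.symm _ _ (jb ▸ h3))
      by_cases jc : j = c
      · intro h3
        rcases Nat.lt_or_ge i b with h4 | h4
        · exact r1 i (by omega) h4 (h.symm _ _ (jc ▸ h3))
        · exact (a2 i (by omega) (by omega)).2 (h.symm _ _ (jc ▸ h3))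
      exact hss i j (by omega) i0 ib ic hj (by omega) jb jc
    simp only [this, false_iff]; omega
  · right
    have hb' : b = x := by omega
    have hc' : c = 2 * x := by omega
    intro i j hij hj
    unfold UKr
    have c1 : ∀ u v, H u v ↔ H v u := fun u v => ⟨h.symm _ _, h.symm _ _⟩
    by_cases i0 : i = 0
    · rcases lt_trichotomy j b with h1 | h1 | h1
      · have := (a1 j (by omega) h1).2
        rw [i0]; simp only [this, false_iff]; omega
      · have : H i j := by rw [i0, h1]; exact h0b
        simp only [this, true_iff]; omega
      rcases lt_trichotomy j c with h2 | h2 | h2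
      · have := r2 j (by omega) h2
        rw [i0]; simp only [this, false_iff]; omega
      · have : H i j := by rw [i0, h2]; exact h0c
        simp only [this, true_iff]; omega
      · have := (a3 j h2 hj).1
        rw [p0'] at this
        rw [i0, this]; omega
    by_cases ib : i = b
    · rcases lt_trichotomy j c with h2 | h2 | h2
      · have := (a2 j (by omega) h2).2
        rw [ib]; simp only [this, false_iff]; omega
      · have : H i j := by rw [ib, h2]; exact hHbc
        simp only [this, true_iff]; omega
      · have := r3 j h2 hj
        rw [ib]; simp only [this, false_iff]; omega
    by_cases ic : i = c
    · have := (a3 j (by omega) hj).2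
      rw [ic]; simp only [this, false_iff]; omega
    by_cases jb : j = b
    · have := (a1 i (by omega) (by omega)).1
      rw [jb, c1, this]; omega
    by_cases jc : j = c
    · rcases Nat.lt_or_ge i b with h4 | h4
      · have := r1 i (by omega) h4
        rw [c1] at this
        rw [jc]; simp only [this, false_iff]; omega
      · have := (a2 i (by omega) (by omega)).1
        rw [jc, c1, this]; omega
    have := hss i j (by omega) i0 ib ic hj (by omega) jb jc
    simp only [this, false_iff]; omega

def ugC {n : ℕ} (G : SimpleGraph (ZMod n)) : SimpleGraph (ZMod n) where
  Adj u v := G.Adj u v ∧ v ≠ u + 1 ∧ u ≠ v + 1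
  symm := ⟨fun _ _ h => ⟨h.1.symm, h.2.2, h.2.1⟩⟩
  loopless := ⟨fun u h => G.loopless.irrefl u h.1⟩

theorem ug_val_sub {n : ℕ} [NeZero n] (A : ZMod n) (i j : ℕ) (h : i ≤ j) (h' : j < i + n) :
    ((A + (j : ZMod n)) - (A + (i : ZMod n))).val = j - i := by
  rw [add_sub_add_left_eq_sub, ← Nat.cast_sub h, ZMod.val_natCast_of_lt (by omega)]

theorem ug_cyc {n : ℕ} {G : SimpleGraph (ZMod n)} (hG : IsOuterplane n G) (u : ZMod n) :
    G.Adj u (u + 1) := by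
  obtain ⟨S, hS, hE⟩ := hG
  rw [← SimpleGraph.mem_edgeSet, hE]
  exact Or.inl ⟨u, rfl⟩

theorem ug_cfg {n : ℕ} [NeZero n] {G : SimpleGraph (ZMod n)} (hG : IsOuterplane n G)
    (A : ZMod n) : UCfg n (fun i j => (ugC G).Adj (A + (i : ZMod n)) (A + (j : ZMod n))) where
  symm := fun i j h => h.symm
  per := fun i j => by simp
  nocyc := fun i h => by
    apply h.2.1
    push_cast
    ring
  nc := by
    intro a c b d hac hcb hbd hda h1 h2
    obtain ⟨S, hS, hE⟩ := hG
    have hm : ∀ u v, (ugC G).Adj u v → s(u, v) ∈ S := by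
      intro u v huv
      have : s(u, v) ∈ G.edgeSet := huv.1
      rw [hE] at this
      rcases this with ⟨i, hi⟩ | h
      · rw [Sym2.eq_iff] at hi
        rcases hi with ⟨rfl, rfl⟩ | ⟨rfl, rfl⟩
        · exact absurd rfl huv.2.1
        · exact absurd rfl huv.2.2
      · exact h
    have m1 := hm _ _ h1
    have m2 := hm _ _ h2
    have hv := ug_val_sub A
    have pa : (A + ((a + n : ℕ) : ZMod n)) = A + (a : ZMod n) := by simp
    have pc : (A + ((c + n : ℕ) : ZMod n)) = A + (c : ZMod n) := by simp
    have vab := hv a b (by omega) (by omega)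
    have vac := hv a c (by omega) (by omega)
    have vad := hv a d (by omega) (by omega)
    have vba := hv b (a+n) (by omega) (by omega)
    have vbc := hv b (c+n) (by omega) (by omega)
    have vbd := hv b d (by omega) (by omega)
    rw [pa] at vba
    rw [pc] at vbc
    have vaa : ((A + (a : ZMod n)) - (A + (a : ZMod n))).val = 0 := by simp
    have X1 : Between n (A + a) (A + b) (A + c) := by
      unfold Between; rw [vab, vac]; omega
    have X2 : ¬ Between n (A + a) (A + b) (A + d) := by
      unfold Between; rw [vab, vad]; omega
    have X3 : ¬ Between n (A + b) (A + a) (A + c) := by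
      unfold Between; rw [vba, vbc]; omega
    have X4 : Between n (A + b) (A + a) (A + d) := by
      unfold Between; rw [vba, vbd]; omega
    refine hS.2 _ m1 _ m2 ?_ ?_
    · intro he
      rw [Sym2.eq_iff] at he
      rcases he with ⟨he, _⟩ | ⟨he, _⟩
      · rw [← he] at vac; rw [vaa] at vac; omega
      · rw [← he] at vad; rw [vaa] at vad; omega
    · intro a' b' c' d' e1 e2
      rw [Sym2.eq_iff] at e1 e2
      rcases e1 with ⟨rfl, rfl⟩ | ⟨rfl, rfl⟩ <;> rcases e2 with ⟨rfl, rfl⟩ | ⟨rfl, rfl⟩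
      · exact Or.inl ⟨X1, X2⟩
      · exact Or.inr ⟨X1, X2⟩
      · exact Or.inr ⟨X4, X3⟩
      · exact Or.inl ⟨X4, X3⟩

open Classical in
theorem ug_degG {n : ℕ} [NeZero n] (hn : 3 ≤ n) {G : SimpleGraph (ZMod n)}
    (hG : ∀ u, G.Adj u (u + 1)) (v : ZMod n) : G.degree v = (ugC G).degree v + 2 := by
  have hne : v + 1 ≠ v - 1 := by
    intro h
    have h2 : ((2 : ℕ) : ZMod n) = 0 := by
      push_cast
      linear_combination h
    rw [ZMod.natCast_eq_zero_iff] at h2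
    have := Nat.le_of_dvd (by omega) h2
    omega
  have : G.neighborFinset v = (ugC G).neighborFinset v ∪ {v + 1, v - 1} := by
    ext w
    simp only [SimpleGraph.mem_neighborFinset, Finset.mem_union, Finset.mem_insert,
      Finset.mem_singleton]
    constructor
    · intro h
      by_cases h1 : w = v + 1
      · simp [h1]
      by_cases h2 : v = w + 1
      · right; right; rw [h2]; ring
      exact Or.inl ⟨h, h1, h2⟩
    · rintro (h | rfl | rfl)
      · exact h.1
      · exact hG v
      · have := hG (v - 1)
        rw [sub_add_cancel] at this
        exact this.symm
  rw [← SimpleGraph.card_neighborFinset_eq_degree, ← SimpleGraph.card_neighborFinset_eq_degree,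
    this, Finset.card_union_of_disjoint, Finset.card_pair hne]
  rw [Finset.disjoint_left]
  intro w hw
  rw [SimpleGraph.mem_neighborFinset] at hw
  simp only [Finset.mem_insert, Finset.mem_singleton]
  rintro (h | h)
  · exact hw.2.1 h
  · apply hw.2.2; rw [h]; ring

open Classical in
theorem ug_degIco {n : ℕ} [NeZero n] (C : SimpleGraph (ZMod n)) (A : ZMod n) (p : ℕ) :
    ((Finset.Ico p (p+n)).filter (fun j : ℕ => C.Adj (A + (p : ZMod n)) (A + (j : ZMod n)))).card
      = C.degree (A + (p : ZMod n)) := by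
  rw [← SimpleGraph.card_neighborFinset_eq_degree]
  refine Finset.card_bij (fun j _ => A + (j : ZMod n)) ?_ ?_ ?_
  · intro j hj
    rw [Finset.mem_filter] at hj
    rw [SimpleGraph.mem_neighborFinset]
    exact hj.2
  · intro i hi j hj hij
    rw [Finset.mem_filter, Finset.mem_Ico] at hi hj
    have h1 := ug_val_sub A p i hi.1.1 hi.1.2
    have h2 := ug_val_sub A p j hj.1.1 hj.1.2
    rw [hij] at h1
    omega
  · intro w hw
    rw [SimpleGraph.mem_neighborFinset] at hw
    have hlt := ZMod.val_lt (w - (A + (p : ZMod n)))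
    have e : A + ((p + (w - (A + (p : ZMod n))).val : ℕ) : ZMod n) = w := by
      push_cast
      rw [ZMod.natCast_zmod_val]
      ring
    refine ⟨p + (w - (A + (p : ZMod n))).val, ?_, e⟩
    rw [Finset.mem_filter, Finset.mem_Ico, e]
    exact ⟨⟨by omega, by omega⟩, hw⟩

def ugCan (x y n : ℕ) : SimpleGraph (ZMod n) where
  Adj u v := u ≠ v ∧ ((v = u + 1 ∨ u = v + 1) ∨ UK x y u.val v.val ∨ UK x y v.val u.val)
  symm := ⟨fun u v h => ⟨h.1.symm, by have := h.2; tauto⟩⟩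
  loopless := ⟨fun u h => h.1 rfl⟩

theorem ug_iso {n x y : ℕ} [NeZero n] (hn : n = 2 * x + y) (hx : 3 ≤ x) (hy : 3 ≤ y)
    {G : SimpleGraph (ZMod n)} (hG : ∀ u, G.Adj u (u + 1))
    (φ : ZMod n ≃ ZMod n)
    (hφ : ∀ u v, (φ v = φ u + 1 ∨ φ u = φ v + 1) ↔ (v = u + 1 ∨ u = v + 1))
    (hK : ∀ i j : ℕ, i < j → j < n →
      ((ugC G).Adj (φ (i : ZMod n)) (φ (j : ZMod n)) ↔ UK x y i j)) :
    Nonempty (ugCan x y n ≃g G) := by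
  refine ⟨⟨φ, ?_⟩⟩
  intro u v
  by_cases huv : u = v
  · subst huv; simp
  have h1 : (ugC G).Adj (φ u) (φ v) ↔ (UK x y u.val v.val ∨ UK x y v.val u.val) := by
    have hu := ZMod.val_lt u
    have hv := ZMod.val_lt v
    have hne : u.val ≠ v.val := fun h => huv (ZMod.val_injective n h)
    rcases lt_or_gt_of_ne hne with h | h
    · have := hK _ _ h hv
      rw [ZMod.natCast_zmod_val, ZMod.natCast_zmod_val] at this
      rw [this]
      unfold UK; omega
    · have := hK _ _ h hu
      rw [ZMod.natCast_zmod_val, ZMod.natCast_zmod_val] at this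
      rw [SimpleGraph.adj_comm, this]
      unfold UK; omega
  have h2 : G.Adj (φ u) (φ v) ↔ ((φ v = φ u + 1 ∨ φ u = φ v + 1) ∨ (ugC G).Adj (φ u) (φ v)) := by
    constructor
    · intro h
      by_cases h3 : φ v = φ u + 1
      · exact .inl (.inl h3)
      by_cases h4 : φ u = φ v + 1
      · exact .inl (.inr h4)
      exact .inr ⟨h, h3, h4⟩
    · rintro ((h | h) | h)
      · rw [h]; exact hG _
      · rw [h]; exact (hG _).symm
      · exact h.1
  change G.Adj (φ u) (φ v) ↔ (u ≠ v ∧ _)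
  rw [h2, hφ, h1]
  simp only [ne_eq, huv, not_false_eq_true, true_and]

theorem ug_finish {n x y : ℕ} [NeZero n] (hn : n = 2 * x + y) (hx : 3 ≤ x) (hy : 3 ≤ y)
    {G : SimpleGraph (ZMod n)} (hG : ∀ u, G.Adj u (u + 1)) (A : ZMod n)
    (hH : (∀ i j : ℕ, i < j → j < n →
        ((ugC G).Adj (A + (i : ZMod n)) (A + (j : ZMod n)) ↔ UK x y i j)) ∨
      (∀ i j : ℕ, i < j → j < n →
        ((ugC G).Adj (A + (i : ZMod n)) (A + (j : ZMod n)) ↔ UKr x y i j))) :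
    Nonempty (ugCan x y n ≃g G) := by
  rcases hH with h | h
  · refine ug_iso hn hx hy hG (Equiv.addLeft A) ?_ ?_
    · intro u v
      simp only [Equiv.coe_addLeft, add_assoc, add_right_inj]
    · intro i j hi hj
      exact h i j hi hj
  · refine ug_iso hn hx hy hG (Equiv.subLeft A) ?_ ?_
    · intro u v
      simp only [Equiv.subLeft_apply]
      constructor
      · rintro (h | h)
        · right; linear_combination h
        · left; linear_combination h
      · rintro (h | h)
        · right; linear_combination h
        · left; linear_combination h
    · intro i j hi hj
      simp only [Equiv.subLeft_apply]
      have e : ∀ k : ℕ, k < n → A - (k : ZMod n) = A + ((n - k : ℕ) : ZMod n) := by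
        intro k hk
        rw [Nat.cast_sub hk.le]; simp [sub_eq_add_neg]
      rw [e j hj, SimpleGraph.adj_comm]
      by_cases i0 : i = 0
      · subst i0
        have := h 0 (n - j) (by omega) (by omega)
        rw [SimpleGraph.adj_comm]
        simp only [Nat.cast_zero, add_zero, sub_zero] at this ⊢
        rw [this]
        unfold UK UKr; omega
      · rw [e i (by omega), h _ _ (by omega) (by omega)]
        unfold UK UKr; omega

open Classical in
theorem ug_degMul {n : ℕ} [NeZero n] (G : SimpleGraph (ZMod n)) :
    degreeMultiset n G = Finset.univ.val.map (fun v => G.degree v) := by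
  unfold degreeMultiset
  rw [dif_neg (NeZero.ne n)]
  unfold degMultiset
  congr

open Classical in
theorem ug_unique0 {n x y : ℕ} [NeZero n] (hn : n = 2 * x + y) (hx : 3 ≤ x) (hy : 3 ≤ y)
    {G : SimpleGraph (ZMod n)} (hG : IsOuterplane n G) (A B D : ZMod n) (hAB : A ≠ B)
    (hAD : A ≠ D) (hBD : (B - A).val < (D - A).val)
    (dA : (ugC G).degree A = y) (dB : (ugC G).degree B = x) (dD : (ugC G).degree D = x)
    (hsum : ∑ v ∈ ({A, B, D} : Finset (ZMod n))ᶜ, (ugC G).degree v = n - 6)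
    (hcard : ((({A, B, D} : Finset (ZMod n))ᶜ).filter (fun v => (ugC G).degree v = 0)).card = 3) :
    Nonempty (ugCan x y n ≃g G) := by
  have hBD' : B ≠ D := by rintro rfl; omega
  obtain ⟨aAB, aAD, aBD, hss⟩ := ug_count (ugC G) A B D hAB hAD hBD' (n - 6)
    (by rw [dA, dB, dD]; omega) hsum
  set b := (B - A).val with hb
  set c := (D - A).val with hc
  have eB : A + (b : ZMod n) = B := by rw [hb, ZMod.natCast_zmod_val]; ring
  have eD : A + (c : ZMod n) = D := by rw [hc, ZMod.natCast_zmod_val]; ring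
  have e0 : A + ((0 : ℕ) : ZMod n) = A := by simp
  have hcn : c < n := ZMod.val_lt _
  have hb0 : 0 < b := by
    rcases Nat.eq_zero_or_pos b with h | h
    · rw [h, e0] at eB; exact absurd eB hAB
    · exact h
  have inj : ∀ i j : ℕ, i < n → j < n → A + (i : ZMod n) = A + (j : ZMod n) → i = j := by
    intro i j hi hj h
    have h := add_left_cancel h
    have := congrArg ZMod.val h
    rwa [ZMod.val_natCast_of_lt hi, ZMod.val_natCast_of_lt hj] at this
  have hsm : ∀ v : ℕ, v < n → v ≠ 0 → v ≠ b → v ≠ c →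
      A + (v : ZMod n) ∈ ({A, B, D} : Finset (ZMod n))ᶜ := by
    intro v hv h0 h1 h2
    simp only [Finset.mem_compl, Finset.mem_insert, Finset.mem_singleton, not_or]
    refine ⟨fun h => h0 (inj v 0 hv (by omega) (by rw [h, e0])),
      fun h => h1 (inj v b hv (by omega) (by rw [h, eB])),
      fun h => h2 (inj v c hv (by omega) (by rw [h, eD]))⟩
  have hfr : ∀ v : ℕ, (∀ w : ℕ, ¬ (ugC G).Adj (A + (v : ZMod n)) (A + (w : ZMod n))) →
      A + (v : ZMod n) ∈ (({A, B, D} : Finset (ZMod n))ᶜ).filter (fun v => (ugC G).degree v = 0) := by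
    intro v hv
    have hd : (ugC G).degree (A + (v : ZMod n)) = 0 := by
      rw [← SimpleGraph.card_neighborFinset_eq_degree, Finset.card_eq_zero,
        Finset.eq_empty_iff_forall_notMem]
      intro w hw
      rw [SimpleGraph.mem_neighborFinset] at hw
      apply hv (w - A).val
      rw [ZMod.natCast_zmod_val, add_sub_cancel]
      exact hw
    rw [Finset.mem_filter]
    refine ⟨?_, hd⟩
    simp only [Finset.mem_compl, Finset.mem_insert, Finset.mem_singleton, not_or]
    refine ⟨fun h => ?_, fun h => ?_, fun h => ?_⟩ <;> rw [h] at hd <;> omega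
  apply ug_finish hn hx hy (ug_cyc hG) A
  refine ug_core (ug_cfg hG A) hn hx hy b c hb0 hBD hcn ?_ ?_ ?_ ?_ ?_ ?_ ?_ ?_ ?_ ?_
  · rw [e0, eB]; exact aAB
  · rw [e0, eD]; exact aAD
  · rw [eB, eD]; exact aBD
  · intro i; exact (ugC G).irrefl
  · intro v hv h0 h1 h2
    by_cases hf : ∀ w : ℕ, ¬ (ugC G).Adj (A + (v : ZMod n)) (A + (w : ZMod n))
    · exact .inl hf
    · right
      push Not at hf
      obtain ⟨w, hw⟩ := hf
      have : A + (w : ZMod n) ∈ ({A, B, D} : Finset (ZMod n)) := by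
        by_contra h
        exact hss _ (hsm v hv h0 h1 h2) _ (Finset.mem_compl.2 h) hw
      simp only [Finset.mem_insert, Finset.mem_singleton] at this
      rw [e0, eB, eD]
      rcases this with h | h | h <;> rw [h] at hw <;> simp [hw]
  · intro v w hv h0 h1 h2 hw h3 h4 h5
    exact hss _ (hsm v hv h0 h1 h2) _ (hsm w hw h3 h4 h5)
  · intro f1 f2 f3 v h12 h23 h3n hv n1 n2 n3 F1 F2 F3 Fv
    have hsub : ({A + (f1 : ZMod n), A + (f2 : ZMod n), A + (f3 : ZMod n), A + (v : ZMod n)} :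
        Finset (ZMod n)) ⊆
        (({A, B, D} : Finset (ZMod n))ᶜ).filter (fun v => (ugC G).degree v = 0) := by
      intro w hw
      simp only [Finset.mem_insert, Finset.mem_singleton] at hw
      rcases hw with rfl | rfl | rfl | rfl
      · exact hfr _ F1
      · exact hfr _ F2
      · exact hfr _ F3
      · exact hfr _ Fv
    have := Finset.card_le_card hsub
    rw [hcard] at this
    have ne : ∀ i j : ℕ, i < n → j < n → i ≠ j → A + (i : ZMod n) ≠ A + (j : ZMod n) :=
      fun i j hi hj hij h => hij (inj i j hi hj h)
    rw [Finset.card_insert_of_notMem, Finset.card_insert_of_notMem, Finset.card_pair] at this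
    · omega
    · exact ne _ _ (by omega) (by omega) (by omega)
    · simp only [Finset.mem_insert, Finset.mem_singleton, not_or]
      exact ⟨ne _ _ (by omega) (by omega) (by omega), ne _ _ (by omega) (by omega) (by omega)⟩
    · simp only [Finset.mem_insert, Finset.mem_singleton, not_or]
      exact ⟨ne _ _ (by omega) (by omega) (by omega), ne _ _ (by omega) (by omega) (by omega),
        ne _ _ (by omega) (by omega) (by omega)⟩
  · have := ug_degIco (ugC G) A 0
    rw [e0, dA] at this
    rw [e0]; exact this
  · have := ug_degIco (ugC G) A b
    rw [eB, dB] at this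
    rw [eB]; exact this
  · have := ug_degIco (ugC G) A c
    rw [eD, dD] at this
    rw [eD]; exact this

open Classical in
theorem ug_unique {n x y : ℕ} [NeZero n] (hn : n = 2 * x + y) (hx : 3 ≤ x) (hy : 3 ≤ y)
    {G : SimpleGraph (ZMod n)} (hG : IsOuterplane n G)
    (hM : degreeMultiset n G = (y + 2) ::ₘ (x + 2) ::ₘ (x + 2) ::ₘ
      (Multiset.replicate (n - 6) 3 + Multiset.replicate 3 2)) :
    Nonempty (ugCan x y n ≃g G) := by
  rw [ug_degMul] at hM
  have hd := ug_degG (by omega : 3 ≤ n) (ug_cyc hG)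
  rw [← Multiset.map_eq_cons] at hM
  obtain ⟨A, -, dA, hM⟩ := hM
  rw [← Multiset.map_eq_cons] at hM
  obtain ⟨B, mB, dB, hM⟩ := hM
  rw [← Multiset.map_eq_cons] at hM
  obtain ⟨D, mD, dD, hM⟩ := hM
  rw [← Finset.erase_val] at mB mD hM
  rw [← Finset.erase_val] at mD hM
  rw [← Finset.erase_val] at hM
  rw [Finset.mem_val, Finset.mem_erase] at mB mD
  rw [Finset.mem_erase] at mD
  have hT : ((Finset.univ.erase A).erase B).erase D = ({A, B, D} : Finset (ZMod n))ᶜ := by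
    ext v
    simp only [Finset.mem_erase, Finset.mem_compl, Finset.mem_insert, Finset.mem_singleton,
      Finset.mem_univ]
    tauto
  rw [hT] at hM
  have hcardT : (({A, B, D} : Finset (ZMod n))ᶜ).card = n - 3 := by
    have := congrArg Multiset.card hM
    simp only [Multiset.card_map, Finset.card_val, Multiset.card_add,
      Multiset.card_replicate] at this
    omega
  have hsum : ∑ v ∈ ({A, B, D} : Finset (ZMod n))ᶜ, (ugC G).degree v = n - 6 := by
    have h1 : ∑ v ∈ ({A, B, D} : Finset (ZMod n))ᶜ, G.degree v = (n - 6) * 3 + 3 * 2 := by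
      have := congrArg Multiset.sum hM
      simp only [Multiset.sum_add, Multiset.sum_replicate, smul_eq_mul] at this
      exact this
    rw [Finset.sum_congr rfl (fun v _ => hd v), Finset.sum_add_distrib, Finset.sum_const,
      hcardT, smul_eq_mul] at h1
    omega
  have hcard : ((({A, B, D} : Finset (ZMod n))ᶜ).filter
      (fun v => (ugC G).degree v = 0)).card = 3 := by
    have h1 := congrArg (Multiset.count 2) hM
    rw [Multiset.count_map, Multiset.count_add, Multiset.count_replicate,
      Multiset.count_replicate] at h1
    rw [if_neg (by omega), if_pos rfl, zero_add, ← Finset.filter_val, Finset.card_val] at h1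
    have h2 : (({A, B, D} : Finset (ZMod n))ᶜ).filter (fun v => (ugC G).degree v = 0) =
        (({A, B, D} : Finset (ZMod n))ᶜ).filter (fun v => 2 = G.degree v) := by
      apply Finset.filter_congr
      intro v _
      rw [hd v]; omega
    rw [h2]
    simpa using h1
  have hAB : A ≠ B := fun h => mB.1 h.symm
  have hAD : A ≠ D := fun h => mD.2.1 h.symm
  have hne : (B - A).val ≠ (D - A).val := by
    intro h
    have := ZMod.val_injective n h
    exact mD.1 (sub_left_injective this).symm
  have d1 := hd A
  have d2 := hd B
  have d3 := hd D
  rcases lt_or_gt_of_ne hne with h | h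
  · exact ug_unique0 hn hx hy hG A B D hAB hAD h (by omega) (by omega) (by omega) hsum hcard
  · rw [Finset.pair_comm B D] at hsum hcard
    exact ug_unique0 hn hx hy hG A D B hAD hAB h (by omega) (by omega) (by omega) hsum hcard

theorem ug_vsub {n : ℕ} [NeZero n] (a c : ZMod n) :
    (c - a).val = if a.val ≤ c.val then c.val - a.val else n + c.val - a.val := by
  have ha := ZMod.val_lt a
  have hc := ZMod.val_lt c
  split_ifs with h
  · exact ZMod.val_sub h
  · have : c - a = ((n + c.val - a.val : ℕ) : ZMod n) := by
      rw [Nat.cast_sub (by omega)]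
      push_cast
      simp
    rw [this, ZMod.val_natCast_of_lt (by omega)]

theorem ug_chord {n x y : ℕ} [NeZero n] (hn : n = 2 * x + y) (hx : 3 ≤ x) (hy : 3 ≤ y)
    (u v : ZMod n) (h : UK x y u.val v.val) : u ≠ v ∧ v ≠ u + 1 ∧ u ≠ v + 1 := by
  have hu := ZMod.val_lt u
  have hv := ZMod.val_lt v
  have h1 := ug_vsub u v
  have h2 := ug_vsub v u
  have one : (1 : ZMod n).val = 1 := by
    haveI : Fact (1 < n) := ⟨by omega⟩
    exact ZMod.val_one n
  refine ⟨?_, ?_, ?_⟩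
  · rintro rfl
    unfold UK at h; omega
  · intro hh
    have : v - u = 1 := by rw [hh]; ring
    rw [this, one] at h1
    unfold UK at h
    split_ifs at h1 <;> omega
  · intro hh
    have : u - v = 1 := by rw [hh]; ring
    rw [this, one] at h2
    unfold UK at h
    split_ifs at h2 <;> omega

theorem ug_can_op {n x y : ℕ} [NeZero n] (hn : n = 2 * x + y) (hx : 3 ≤ x) (hy : 3 ≤ y) :
    IsOuterplane n (ugCan x y n) := by
  refine ⟨{e | ∃ u v : ZMod n, e = s(u, v) ∧ UK x y u.val v.val}, ⟨?_, ?_⟩, ?_⟩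
  · rintro e ⟨u, v, rfl, h⟩
    obtain ⟨h1, h2, h3⟩ := ug_chord hn hx hy u v h
    refine ⟨by simpa using h1, ?_⟩
    rintro ⟨i, hi⟩
    rw [Sym2.eq_iff] at hi
    rcases hi with ⟨rfl, rfl⟩ | ⟨rfl, rfl⟩
    · exact h2 rfl
    · exact h3 rfl
  · rintro e ⟨a, b, rfl, h⟩ f ⟨c, d, rfl, h'⟩ - hcr
    have X1 := hcr a b c d rfl rfl
    have X2 := hcr b a c d Sym2.eq_swap rfl
    have ha := ZMod.val_lt a
    have hb := ZMod.val_lt b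
    have hc := ZMod.val_lt c
    have hd := ZMod.val_lt d
    have hab : a.val < b.val := by unfold UK at h; omega
    have B1 : ∀ w : ZMod n, Between n a b w ↔ (a.val < w.val ∧ w.val < b.val) := by
      intro w
      have hw := ZMod.val_lt w
      unfold Between
      rw [ug_vsub a w, ug_vsub a b]
      split_ifs <;> omega
    have B2 : ∀ w : ZMod n, Between n b a w ↔ (w.val < a.val ∨ b.val < w.val) := by
      intro w
      have hw := ZMod.val_lt w
      unfold Between
      rw [ug_vsub b w, ug_vsub b a]
      split_ifs <;> omega
    rw [B1, B1] at X1
    rw [B2, B2] at X2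
    generalize a.val = a at *
    generalize b.val = b at *
    generalize c.val = c at *
    generalize d.val = d at *
    have Y1 : (a < c ∧ c < b ∧ ¬ (a < d ∧ d < b)) ∨ (a < d ∧ d < b ∧ ¬ (a < c ∧ c < b)) := by
      rcases X1 with h | h <;> omega
    have Y2 : ((c < a ∨ b < c) ∧ ¬ (d < a ∨ b < d)) ∨ ((d < a ∨ b < d) ∧ ¬ (c < a ∨ b < c)) := by
      rcases X2 with h | h <;> omega
    clear X1 X2 B1 B2 hcr
    unfold UK at h h'
    rcases h with h | h | h | h <;> rcases h' with h' | h' | h' | h' <;> omega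
  · ext e
    induction e with
    | h u v =>
      rw [SimpleGraph.mem_edgeSet]
      simp only [Set.mem_union, Set.mem_setOf_eq]
      have one : (1 : ZMod n) ≠ 0 := by
        haveI : Fact (1 < n) := ⟨by omega⟩
        exact one_ne_zero
      constructor
      · rintro ⟨_, (rfl | rfl) | h | h⟩
        · exact .inl ⟨u, rfl⟩
        · exact .inl ⟨v, Sym2.eq_swap⟩
        · exact .inr ⟨u, v, rfl, h⟩
        · exact .inr ⟨v, u, Sym2.eq_swap, h⟩
      · rintro (⟨i, h⟩ | ⟨a, b, h, h'⟩)
        · rw [Sym2.eq_iff] at h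
          rcases h with ⟨rfl, rfl⟩ | ⟨rfl, rfl⟩
          · exact ⟨by simpa using one, .inl (.inl rfl)⟩
          · exact ⟨by simpa using one, .inl (.inr rfl)⟩
        · have hne := (ug_chord hn hx hy a b h').1
          rw [Sym2.eq_iff] at h
          rcases h with ⟨rfl, rfl⟩ | ⟨rfl, rfl⟩
          · exact ⟨hne, .inr (.inl h')⟩
          · exact ⟨hne.symm, .inr (.inr h')⟩

def ugD (x y i : ℕ) : ℕ :=
  if i = 0 then y + 2 else if i = y ∨ i = x + y then x + 2
  else if i = 1 ∨ i = y + 1 ∨ i = x + y + 1 then 2 else 3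

open Classical in
theorem ug_can_filter {n x y : ℕ} (hn : n = 2 * x + y) (hx : 3 ≤ x) (hy : 3 ≤ y) (i : ℕ)
    (hi : i < n) :
    ((Finset.range n).filter (fun j => UK x y i j ∨ UK x y j i)).card + 2 = ugD x y i := by
  have key : ∀ T : Finset ℕ, (∀ j, j < n ∧ (UK x y i j ∨ UK x y j i) ↔ j ∈ T) →
      ((Finset.range n).filter (fun j => UK x y i j ∨ UK x y j i)).card = T.card := by
    intro T hT
    congr 1
    ext j
    rw [Finset.mem_filter, Finset.mem_range, hT]
  unfold ugD
  by_cases i0 : i = 0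
  · rw [key (insert (x + y) (Finset.Icc 2 y)), Finset.card_insert_of_notMem]
    · rw [Nat.card_Icc, if_pos i0]; omega
    · simp; omega
    · intro j
      simp only [UK, Finset.mem_insert, Finset.mem_Icc]; omega
  by_cases i1 : i = y
  · rw [key (insert 0 (Finset.Icc (y+2) (x + y))), Finset.card_insert_of_notMem]
    · rw [Nat.card_Icc, if_neg i0, if_pos (.inl i1)]; omega
    · simp
    · intro j
      simp only [UK, Finset.mem_insert, Finset.mem_Icc]; omega
  by_cases i2 : i = x + y
  · rw [key (insert 0 (insert y (Finset.Ico (x+y+2) (2*x + y)))), Finset.card_insert_of_notMem,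
      Finset.card_insert_of_notMem]
    · rw [Nat.card_Ico, if_neg i0, if_pos (.inr i2)]; omega
    · simp; omega
    · simp; omega
    · intro j
      simp only [UK, Finset.mem_insert, Finset.mem_Ico]; omega
  by_cases i3 : i = 1 ∨ i = y + 1 ∨ i = x + y + 1
  · rw [key ∅]
    · simp [i0, i1, i2, i3]
    · intro j
      simp only [UK, Finset.notMem_empty, iff_false]; omega
  rw [key {if i < y then 0 else if i < x + y then y else x + y}]
  · simp [i0, i1, i2, i3]
  · intro j
    simp only [UK, Finset.mem_singleton]
    split_ifs <;> omega

open Classical in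
theorem ug_can_deg {n x y : ℕ} [NeZero n] (hn : n = 2 * x + y) (hx : 3 ≤ x) (hy : 3 ≤ y)
    (v : ZMod n) : (ugCan x y n).degree v = ugD x y v.val := by
  rw [ug_degG (by omega) (ug_cyc (ug_can_op hn hx hy)),
    ← ug_can_filter hn hx hy v.val (ZMod.val_lt v),
    ← SimpleGraph.card_neighborFinset_eq_degree]
  congr 1
  refine Finset.card_bij (fun w _ => w.val) ?_ ?_ ?_
  · intro w hw
    rw [SimpleGraph.mem_neighborFinset] at hw
    rw [Finset.mem_filter, Finset.mem_range]
    refine ⟨ZMod.val_lt w, ?_⟩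
    rcases hw.1.2 with (h | h) | h
    · exact absurd h hw.2.1
    · exact absurd h hw.2.2
    · exact h
  · intro a _ b _ h
    exact ZMod.val_injective n h
  · intro j hj
    rw [Finset.mem_filter, Finset.mem_range] at hj
    refine ⟨(j : ZMod n), ?_, ZMod.val_natCast_of_lt hj.1⟩
    rw [SimpleGraph.mem_neighborFinset]
    have hv := ZMod.val_natCast_of_lt hj.1
    rcases hj.2 with h | h
    · rw [← hv] at h
      obtain ⟨h1, h2, h3⟩ := ug_chord hn hx hy _ _ h
      exact ⟨⟨h1, .inr (.inl h)⟩, h2, h3⟩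
    · nth_rw 1 [← hv] at h
      obtain ⟨h1, h2, h3⟩ := ug_chord hn hx hy _ _ h
      exact ⟨⟨h1.symm, .inr (.inr h)⟩, h3, h2⟩

theorem ug_can_mul {n x y : ℕ} [NeZero n] (hn : n = 2 * x + y) (hx : 3 ≤ x) (hy : 3 ≤ y) :
    degreeMultiset n (ugCan x y n) = (y + 2) ::ₘ (x + 2) ::ₘ (x + 2) ::ₘ
      (Multiset.replicate (n - 6) 3 + Multiset.replicate 3 2) := by
  classical
  have h1 : (Finset.univ : Finset (ZMod n)).val.map ZMod.val = (Finset.range n).val := by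
    rw [← Finset.image_val_of_injOn ((ZMod.val_injective n).injOn)]
    congr 1
    ext j
    simp only [Finset.mem_image, Finset.mem_univ, true_and, Finset.mem_range]
    constructor
    · rintro ⟨a, rfl⟩; exact ZMod.val_lt a
    · intro hj; exact ⟨j, ZMod.val_natCast_of_lt hj⟩
  have h2 : degreeMultiset n (ugCan x y n) = (Finset.range n).val.map (ugD x y) := by
    rw [ug_degMul, ← h1, Multiset.map_map]
    apply Multiset.map_congr rfl
    intro v _
    exact ug_can_deg hn hx hy v
  let P : Finset ℕ := {0, y, x + y, 1, y + 1, x + y + 1}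
  have hP : P.card = 6 := by
    simp only [P]
    repeat rw [Finset.card_insert_of_notMem (by simp; try omega)]
    simp
  have hPv : P.val = 0 ::ₘ y ::ₘ (x + y) ::ₘ 1 ::ₘ (y + 1) ::ₘ {x + y + 1} := by
    simp only [P]
    repeat rw [Finset.insert_val_of_notMem (by simp; try omega)]
    simp
  have hsub : P ⊆ Finset.range n := by
    intro j hj
    simp only [P, Finset.mem_insert, Finset.mem_singleton] at hj
    rw [Finset.mem_range]; omega
  have h3 : (Finset.range n).val = P.val + (Finset.range n \ P).val := by
    rw [Finset.sdiff_val, add_tsub_cancel_of_le (Finset.val_le_iff.2 hsub)]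
  have h4 : (Finset.range n \ P).val.map (ugD x y) = Multiset.replicate (n - 6) 3 := by
    rw [Multiset.eq_replicate]
    constructor
    · rw [Multiset.card_map, Finset.card_val, Finset.card_sdiff_of_subset hsub, hP,
        Finset.card_range]
    · intro b hb
      rw [Multiset.mem_map] at hb
      obtain ⟨j, hj, rfl⟩ := hb
      rw [Finset.mem_val, Finset.mem_sdiff] at hj
      have := hj.2
      simp only [P, Finset.mem_insert, Finset.mem_singleton, not_or] at this
      unfold ugD
      split_ifs <;> omega
  rw [h2, h3, Multiset.map_add, h4, hPv]
  simp only [Multiset.map_cons, Multiset.map_singleton]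
  have g0 : ugD x y 0 = y + 2 := by unfold ugD; split_ifs <;> omega
  have g1 : ugD x y y = x + 2 := by unfold ugD; split_ifs <;> omega
  have g2 : ugD x y (x + y) = x + 2 := by unfold ugD; split_ifs <;> omega
  have g3 : ugD x y 1 = 2 := by
    unfold ugD; rw [if_neg (by omega), if_neg (by omega), if_pos (by simp)]
  have g4 : ugD x y (y + 1) = 2 := by
    unfold ugD; rw [if_neg (by omega), if_neg (by omega), if_pos (by simp)]
  have g5 : ugD x y (x + y + 1) = 2 := by
    unfold ugD; rw [if_neg (by omega), if_neg (by omega), if_pos (by simp)]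
  rw [g0, g1, g2, g3, g4, g5]
  simp only [Multiset.cons_add]
  congr 3
  rw [add_comm (Multiset.replicate (n - 6) 3)]
  rfl

theorem unigraphic_B1 (n x : ℕ) (hn : 9 ≤ n) (hx1 : 3 ≤ x) (hx2 : x ≤ (n - 3) / 2) :
    OuterplaneUnigraphic n
      (Multiset.replicate 2 (x + 2) +
        ((n + 2 - 2 * x) ::ₘ
          (Multiset.replicate (n - 6) 3 + Multiset.replicate 3 2))) := by
  haveI : NeZero n := ⟨by omega⟩
  obtain ⟨y, hy⟩ : ∃ y, n = 2 * x + y := ⟨n - 2 * x, by omega⟩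
  have hy3 : 3 ≤ y := by omega
  have hM : (Multiset.replicate 2 (x + 2) +
        ((n + 2 - 2 * x) ::ₘ
          (Multiset.replicate (n - 6) 3 + Multiset.replicate 3 2))) =
      (y + 2) ::ₘ (x + 2) ::ₘ (x + 2) ::ₘ
      (Multiset.replicate (n - 6) 3 + Multiset.replicate 3 2) := by
    have : n + 2 - 2 * x = y + 2 := by omega
    rw [this, Multiset.add_cons]
    rfl
  rw [hM]
  refine ⟨⟨ugCan x y n, ug_can_op hy hx1 hy3, ug_can_mul hy hx1 hy3⟩, ?_⟩
  intro G G' hG hG' h h'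
  obtain ⟨e⟩ := ug_unique hy hx1 hy3 hG h
  obtain ⟨e'⟩ := ug_unique hy hx1 hy3 hG' h'
  exact ⟨e.symm.trans e'⟩
end

section
/- For every integer n ≥ 7, the multiset {5, 4^(n−5), 3, 2^3} is outerplane-unigraphic: there exists an outerplane graph on n vertices with this degree multiset, and any two outerplane graphs on n vertices with this degree multiset are isomorphic. (Type C1 of the paper's Theorem 2, corresponding to the polytope degree sequence p−1, 6, 5^(p−6), 4, 3^3 with p = n+1 ≥ 8.) -/
namespace C1

lemma add_inj {n : ℕ} (x : ZMod n) {i j : ℕ} (hi : i < n) (hj : j < n)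
    (h : x + (i : ZMod n) = x + (j : ZMod n)) : i = j := by
  have h := add_left_cancel h
  have := congrArg ZMod.val h
  rwa [ZMod.val_natCast_of_lt hi, ZMod.val_natCast_of_lt hj] at this

lemma exists_pos {n : ℕ} [NeZero n] (x w : ZMod n) : ∃ j : ℕ, j < n ∧ w = x + (j : ZMod n) :=
  ⟨(w - x).val, ZMod.val_lt _, by simp⟩

lemma bound (m : ℕ) (P : Finset (ℕ × ℕ)) (h1 : ∀ p ∈ P, p.1 + 2 ≤ p.2 ∧ p.2 ≤ m)
    (h2 : ∀ p ∈ P, ∀ q ∈ P, p.1 < q.1 → q.1 < p.2 → p.2 < q.2 → False) :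
    P.card ≤ m - 1 := by
  have hex : ∀ p : ℕ × ℕ, ∃ k, p ∈ P → (p.1 < k ∧ k < p.2 ∧ (k = p.1 + 1 ∨ (p.1, k) ∈ P) ∧
      ∀ k', k < k' → k' < p.2 → (p.1, k') ∉ P) := by
    intro p
    by_cases hp : p ∈ P
    · obtain ⟨k, hk, hmax⟩ := Finset.exists_max_image
        ((Finset.range p.2).filter (fun k => p.1 < k ∧ (k = p.1 + 1 ∨ (p.1, k) ∈ P))) id
        ⟨p.1 + 1, by have := h1 p hp; simp; omega⟩
      simp only [Finset.mem_filter, Finset.mem_range, id] at hk hmax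
      refine ⟨k, fun _ => ⟨hk.2.1, hk.1, hk.2.2, fun k' h3 h4 h5 => ?_⟩⟩
      have := hmax k' ⟨h4, by omega, Or.inr h5⟩
      omega
    · exact ⟨0, fun h => absurd h hp⟩
  choose f hf using hex
  have : P.card ≤ (Finset.Ioo 0 m).card := by
    apply Finset.card_le_card_of_injOn f
    · intro p hp
      have := hf p hp
      have := h1 p hp
      simp only [Finset.coe_Ioo, Set.mem_Ioo]
      omega
    · intro p hp q hq hpq
      obtain ⟨a1, a2, a3, a4⟩ := hf p hp
      obtain ⟨b1, b2, b3, b4⟩ := hf q hq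
      rw [← hpq] at b1 b2 b3 b4
      rcases lt_trichotomy p.1 q.1 with h | h | h
      · rcases a3 with a3 | a3
        · omega
        · exact (h2 _ a3 _ hq h b1 b2).elim
      · rcases lt_trichotomy p.2 q.2 with h' | h' | h'
        · exact (b4 _ a2 h' (by rw [← h]; exact hp)).elim
        · exact Prod.ext h h'
        · exact (a4 _ b2 h' (by rw [h]; exact hq)).elim
      · rcases b3 with b3 | b3
        · omega
        · exact (h2 _ b3 _ hp h a1 a2).elim
  simpa using this

/-- degree -/
noncomputable def dg {n : ℕ} (G : SimpleGraph (ZMod n)) (v : ZMod n) : ℕ := (G.neighborSet v).ncard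

lemma degreeMultiset_eq (n : ℕ) [NeZero n] (G : SimpleGraph (ZMod n)) :
    degreeMultiset n G = (Finset.univ : Finset (ZMod n)).val.map (dg G) := by
  have h0 : n ≠ 0 := NeZero.ne n
  unfold degreeMultiset
  rw [dif_neg h0]
  unfold degMultiset
  apply Multiset.map_congr
  · congr!
  · intro v _
    unfold dg
    classical
    rw [Set.ncard_eq_toFinset_card', SimpleGraph.degree, SimpleGraph.neighborFinset]

lemma sum_shift {n : ℕ} [NeZero n] (x : ZMod n) (f : ZMod n → ℕ) :
    ∑ v, f v = ∑ i ∈ Finset.range n, f (x + (i : ZMod n)) := by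
  symm
  refine Finset.sum_bij (fun i _ => x + (i : ZMod n)) (by simp) ?_ ?_ (by simp)
  · intro a ha b hb h
    exact add_inj x (by simpa using ha) (by simpa using hb) h
  · intro w _
    obtain ⟨j, hj, rfl⟩ := exists_pos x w
    exact ⟨j, by simpa using hj, rfl⟩

open Classical in
lemma dg_shift {n : ℕ} [NeZero n] (G : SimpleGraph (ZMod n)) (x v : ZMod n) :
    dg G v = ((Finset.range n).filter (fun j : ℕ => G.Adj v (x + (j : ZMod n)))).card := by
  unfold dg
  rw [← Set.ncard_coe_finset]
  symm
  apply Set.ncard_congr (fun (j : ℕ) _ => x + (j : ZMod n))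
  · intro a ha
    simpa using (Finset.mem_filter.1 ha).2
  · intro a b ha hb h
    exact add_inj x (by simpa using (Finset.mem_filter.1 ha).1)
      (by simpa using (Finset.mem_filter.1 hb).1) h
  · intro w hw
    obtain ⟨j, hj, rfl⟩ := exists_pos x w
    exact ⟨j, by simpa using ⟨hj, hw⟩, rfl⟩

def Cyc {n : ℕ} (G : SimpleGraph (ZMod n)) : Prop := ∀ v, G.Adj v (v + 1)

def Apx {n : ℕ} (G : SimpleGraph (ZMod n)) : Prop :=
  ∀ (x : ZMod n) (i j : ℕ), i + 2 ≤ j → j < n → G.Adj (x + i) (x + j) →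
    ∃ k, i < k ∧ k < j ∧ G.Adj (x + i) (x + k) ∧ G.Adj (x + k) (x + j)

def NC {n : ℕ} (G : SimpleGraph (ZMod n)) : Prop :=
  ∀ (x : ZMod n) (i k j l : ℕ), i < k → k < j → j < l → l < n → G.Adj (x + i) (x + j) →
    G.Adj (x + k) (x + l) → False

lemma Cyc.lin {n : ℕ} {G : SimpleGraph (ZMod n)} (h : Cyc G) (x : ZMod n) (i j : ℕ)
    (hij : j = i + 1) : G.Adj (x + i) (x + j) := by
  have := h (x + i)
  subst hij
  push_cast
  rwa [← add_assoc]

open Classical in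
lemma apx_of {n : ℕ} [NeZero n] (hn : 3 ≤ n) {G : SimpleGraph (ZMod n)} (hc : Cyc G) (hnc : NC G)
    (hs : ∑ v, dg G v = 4 * n - 6) : Apx G := by
  intro x i j hij hj hA
  set Q := (Finset.range n ×ˢ Finset.range n).filter
    (fun p : ℕ × ℕ => G.Adj (x + p.1) (x + p.2)) with hQ
  have hQc : Q.card = 4 * n - 6 := by
    rw [← hs, sum_shift x, hQ, Finset.card_filter, Finset.sum_product]
    apply Finset.sum_congr rfl
    intro a _
    rw [dg_shift G x, Finset.card_filter]
  have hQ1 : (Q.filter (fun p => p.1 < p.2)).card = (Q.filter (fun p => ¬ p.1 < p.2)).card := by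
    apply Finset.card_bij (fun p _ => (p.2, p.1))
    · intro p hp
      simp only [hQ, Finset.mem_filter, Finset.mem_product, Finset.mem_range] at hp ⊢
      exact ⟨⟨⟨hp.1.1.2, hp.1.1.1⟩, hp.1.2.symm⟩, by omega⟩
    · intro p _ q _ h
      simp only [Prod.mk.injEq] at h
      exact Prod.ext h.2 h.1
    · intro p hp
      refine ⟨(p.2, p.1), ?_, rfl⟩
      simp only [hQ, Finset.mem_filter, Finset.mem_product, Finset.mem_range] at hp ⊢
      refine ⟨⟨⟨hp.1.1.2, hp.1.1.1⟩, hp.1.2.symm⟩, ?_⟩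
      rcases Nat.lt_or_ge p.2 p.1 with h | h
      · exact h
      · have : p.1 = p.2 := by omega
        have h3 := hp.1.2
        rw [this] at h3
        exact (G.irrefl h3).elim
  have hQ2 := Finset.card_filter_add_card_filter_not (s := Q) (fun p => p.1 < p.2)
  set P := Q.filter (fun p => p.1 + 2 ≤ p.2) with hP
  have hPc : n - 2 ≤ P.card := by
    have hsub : Q.filter (fun p => p.1 < p.2) ⊆
        P ∪ (Finset.range (n - 1)).image (fun i => (i, i + 1)) := by
      intro p hp
      simp only [hP, hQ, Finset.mem_filter, Finset.mem_product, Finset.mem_range,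
        Finset.mem_union, Finset.mem_image] at hp ⊢
      by_cases h : p.1 + 2 ≤ p.2
      · exact Or.inl ⟨hp.1, h⟩
      · exact Or.inr ⟨p.1, by omega, Prod.ext rfl (by simp; omega)⟩
    have h1 := (Finset.card_le_card hsub).trans (Finset.card_union_le _ _)
    have h2 : ((Finset.range (n - 1)).image (fun i => (i, i + 1))).card ≤ n - 1 := by
      simpa using Finset.card_image_le (s := Finset.range (n - 1)) (f := fun i => (i, i + 1))
    omega
  obtain ⟨k, hk, hmax⟩ := Finset.exists_max_image
        ((Finset.range j).filter (fun k : ℕ => i < k ∧ G.Adj (x + i) (x + k))) id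
        ⟨i + 1, by
          simp only [Finset.mem_filter, Finset.mem_range]
          exact ⟨by omega, by omega, hc.lin x i _ rfl⟩⟩
  simp only [Finset.mem_filter, Finset.mem_range, id] at hk hmax
  refine ⟨k, hk.2.1, hk.1, hk.2.2, ?_⟩
  by_contra hkj
  have hk2 : k + 2 ≤ j := by
    by_contra h
    exact hkj (hc.lin x k j (by omega))
  have hmem : ∀ p ∈ P, p.2 < n ∧ p.1 + 2 ≤ p.2 ∧ G.Adj (x + p.1) (x + p.2) := by
    intro p hp
    simp only [hP, hQ, Finset.mem_filter, Finset.mem_product, Finset.mem_range] at hp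
    exact ⟨hp.1.1.2, hp.2, hp.1.2⟩
  have hnot : (k, j) ∉ P := fun h => hkj (hmem _ h).2.2
  have hb := bound (n - 1) (insert (k, j) P) ?_ ?_
  · rw [Finset.card_insert_of_notMem hnot] at hb
    omega
  · intro p hp
    rcases Finset.mem_insert.1 hp with rfl | hp
    · exact ⟨hk2, by show j ≤ n - 1; omega⟩
    · have := hmem p hp
      omega
  · intro p hp q hq h1 h2 h3
    rcases Finset.mem_insert.1 hp with rfl | hp <;> rcases Finset.mem_insert.1 hq with rfl | hq
    · omega
    · have hq := hmem q hq
      simp only at h1 h2 h3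
      exact hnc x i q.1 j q.2 (by omega) h2 h3 hq.1 hA hq.2.2
    · have hp := hmem p hp
      simp only at h1 h2 h3
      rcases lt_trichotomy p.1 i with h | h | h
      · exact hnc x p.1 i p.2 j h (by omega) h3 hj hp.2.2 hA
      · have := hmax p.2 ⟨h3, by omega, by rw [← h]; exact hp.2.2⟩
        omega
      · exact hnc x i p.1 k p.2 h h1 h2 hp.1 hk.2.2 hp.2.2
    · exact hnc x _ _ _ _ h1 h2 h3 (hmem q hq).1 (hmem p hp).2.2 (hmem q hq).2.2

lemma dg_ge {n : ℕ} [NeZero n] {G : SimpleGraph (ZMod n)} (x v : ZMod n) (t : Finset ℕ)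
    (h : ∀ j ∈ t, j < n ∧ G.Adj v (x + (j : ZMod n))) : t.card ≤ dg G v := by
  classical
  rw [dg_shift G x]
  apply Finset.card_le_card
  intro j hj
  simpa using h j hj

lemma dg_eq {n : ℕ} [NeZero n] {G : SimpleGraph (ZMod n)} (x v : ZMod n) (t : Finset ℕ)
    (h : ∀ j ∈ t, j < n ∧ G.Adj v (x + (j : ZMod n)))
    (h' : ∀ j, j < n → G.Adj v (x + (j : ZMod n)) → j ∈ t) : dg G v = t.card := by
  classical
  rw [dg_shift G x]
  congr 1
  ext j
  simp only [Finset.mem_filter, Finset.mem_range]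
  exact ⟨fun hj => h' j hj.1 hj.2, fun hj => h j hj⟩

lemma dg_sat {n : ℕ} [NeZero n] {G : SimpleGraph (ZMod n)} (x v : ZMod n) (t : Finset ℕ)
    (h : ∀ j ∈ t, j < n ∧ G.Adj v (x + (j : ZMod n))) (hd : dg G v ≤ t.card)
    (j : ℕ) (hj : j < n) (hA : G.Adj v (x + (j : ZMod n))) : j ∈ t := by
  by_contra hjt
  have := dg_ge (G := G) x v (insert j t) (by
    intro k hk
    rcases Finset.mem_insert.1 hk with rfl | hk
    · exact ⟨hj, hA⟩
    · exact h k hk)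
  rw [Finset.card_insert_of_notMem hjt] at this
  omega

lemma Cyc.wrap {n : ℕ} [NeZero n] {G : SimpleGraph (ZMod n)} (h : Cyc G) (x : ZMod n) :
    G.Adj (x + (0 : ℕ)) (x + ((n - 1 : ℕ) : ZMod n)) := by
  have h1 := h (x - 1)
  have h0 : 1 ≤ n := NeZero.one_le
  push_cast [Nat.cast_sub h0]
  simp only [CharP.cast_eq_zero, zero_sub, add_zero, ← sub_eq_add_neg]
  simpa using h1.symm

section
variable {n : ℕ} [NeZero n] {G : SimpleGraph (ZMod n)} (hc : Cyc G) (ha : Apx G) (hnc : NC G)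
include hc ha hnc

omit ha in
lemma ear_dg (x : ZMod n) (i : ℕ) (hj : i + 2 < n) (hA : G.Adj (x + i) (x + (i + 2 : ℕ))) :
    dg G (x + (i + 1 : ℕ)) = 2 := by
  rw [dg_eq x _ {i, i + 2}]
  · simp
  · intro j hjt
    simp only [Finset.mem_insert, Finset.mem_singleton] at hjt
    rcases hjt with rfl | rfl
    · exact ⟨by omega, (hc.lin x _ _ rfl).symm⟩
    · exact ⟨by omega, hc.lin x _ _ rfl⟩
  · intro j hjn hAj
    simp only [Finset.mem_insert, Finset.mem_singleton]
    by_contra hne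
    have h1 : j ≠ i + 1 := by rintro rfl; exact G.irrefl hAj
    rcases lt_or_ge j i with h | h
    · exact hnc x j i (i + 1) (i + 2) h (by omega) (by omega) hj hAj.symm hA
    · exact hnc x i (i + 1) (i + 2) j (by omega) (by omega) (by omega) hjn hA hAj

omit ha in
lemma three_dg1 (x : ZMod n) (i : ℕ) (hj : i + 3 < n) (hA : G.Adj (x + i) (x + (i + 3 : ℕ)))
    (hB : G.Adj (x + (i + 1 : ℕ)) (x + (i + 3 : ℕ))) :
    dg G (x + (i + 1 : ℕ)) = 3 := by
  rw [dg_eq x _ {i, i + 2, i + 3}]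
  · simp
  · intro j hjt
    simp only [Finset.mem_insert, Finset.mem_singleton] at hjt
    rcases hjt with rfl | rfl | rfl
    · exact ⟨by omega, (hc.lin x _ _ rfl).symm⟩
    · exact ⟨by omega, hc.lin x _ _ rfl⟩
    · exact ⟨by omega, hB⟩
  · intro j hjn hAj
    simp only [Finset.mem_insert, Finset.mem_singleton]
    by_contra hne
    have h1 : j ≠ i + 1 := by rintro rfl; exact G.irrefl hAj
    rcases lt_or_ge j i with h | h
    · exact hnc x j i (i + 1) (i + 3) h (by omega) (by omega) hj hAj.symm hA
    · exact hnc x i (i + 1) (i + 3) j (by omega) (by omega) (by omega) hjn hA hAj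

omit ha in
lemma three_dg2 (x : ZMod n) (i : ℕ) (hj : i + 3 < n) (hA : G.Adj (x + i) (x + (i + 3 : ℕ)))
    (hB : G.Adj (x + i) (x + (i + 2 : ℕ))) :
    dg G (x + (i + 2 : ℕ)) = 3 := by
  rw [dg_eq x _ {i, i + 1, i + 3}]
  · simp
  · intro j hjt
    simp only [Finset.mem_insert, Finset.mem_singleton] at hjt
    rcases hjt with rfl | rfl | rfl
    · exact ⟨by omega, hB.symm⟩
    · exact ⟨by omega, (hc.lin x _ _ rfl).symm⟩
    · exact ⟨by omega, hc.lin x _ _ rfl⟩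
  · intro j hjn hAj
    simp only [Finset.mem_insert, Finset.mem_singleton]
    by_contra hne
    have h1 : j ≠ i + 2 := by rintro rfl; exact G.irrefl hAj
    rcases lt_or_ge j i with h | h
    · exact hnc x j i (i + 2) (i + 3) h (by omega) (by omega) hj hAj.symm hA
    · exact hnc x i (i + 2) (i + 3) j (by omega) (by omega) (by omega) hjn hA hAj

lemma ear_exists (L : ℕ) : ∀ (x : ZMod n) (i j : ℕ), j - i ≤ L → i + 2 ≤ j → j < n →
    G.Adj (x + i) (x + j) → ∃ k, i < k ∧ k < j ∧ dg G (x + (k : ℕ)) = 2 := by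
  induction L with
  | zero => intros; omega
  | succ L ih =>
    intro x i j hL hij hj hA
    by_cases h : j = i + 2
    · subst h
      exact ⟨i + 1, by omega, by omega, ear_dg hc hnc x i hj hA⟩
    · obtain ⟨k, h1, h2, h3, h4⟩ := ha x i j hij hj hA
      by_cases h5 : i + 2 ≤ k
      · obtain ⟨l, h6, h7, h8⟩ := ih x i k (by omega) h5 (by omega) h3
        exact ⟨l, h6, by omega, h8⟩
      · obtain ⟨l, h6, h7, h8⟩ := ih x k j (by omega) (by omega) (by omega) h4
        exact ⟨l, by omega, by omega, h8⟩

lemma three_exists (L : ℕ) : ∀ (x : ZMod n) (i j : ℕ), j - i ≤ L → i + 3 ≤ j → j < n →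
    G.Adj (x + i) (x + j) → (∃ k, i < k ∧ k < j ∧ dg G (x + (k : ℕ)) = 3) ∨
     (∃ k l, i < k ∧ k < l ∧ l < j ∧ dg G (x + (k : ℕ)) = 2 ∧ dg G (x + (l : ℕ)) = 2) := by
  induction L with
  | zero => intros; omega
  | succ L ih =>
    intro x i j hL hij hj hA
    obtain ⟨k, h1, h2, h3, h4⟩ := ha x i j (by omega) hj hA
    by_cases h : j = i + 3
    · subst h
      have : k = i + 1 ∨ k = i + 2 := by omega
      rcases this with rfl | rfl
      · exact Or.inl ⟨i + 1, by omega, by omega, three_dg1 hc hnc x i hj hA h4⟩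
      · exact Or.inl ⟨i + 2, by omega, by omega, three_dg2 hc hnc x i hj hA h3⟩
    · by_cases h5 : i + 2 ≤ k
      · by_cases h6 : k + 2 ≤ j
        · obtain ⟨p, a1, a2, a3⟩ := ear_exists hc ha hnc _ x i k le_rfl h5 (by omega) h3
          obtain ⟨q, b1, b2, b3⟩ := ear_exists hc ha hnc _ x k j le_rfl h6 (by omega) h4
          exact Or.inr ⟨p, q, by omega, by omega, by omega, a3, b3⟩
        · rcases ih x i k (by omega) (by omega) (by omega) h3 with ⟨p, a1, a2, a3⟩ | ⟨p, q, a1, a2, a3, a4⟩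
          · exact Or.inl ⟨p, by omega, by omega, a3⟩
          · exact Or.inr ⟨p, q, by omega, by omega, by omega, a4⟩
      · rcases ih x k j (by omega) (by omega) (by omega) h4 with ⟨p, a1, a2, a3⟩ | ⟨p, q, a1, a2, a3, a4⟩
        · exact Or.inl ⟨p, by omega, by omega, a3⟩
        · exact Or.inr ⟨p, q, by omega, by omega, by omega, a4⟩

omit hnc in
lemma branch_exists (L : ℕ) : ∀ (x : ZMod n) (i j p q : ℕ), j - i ≤ L → i < p → p < q → q < j →
    j < n → dg G (x + (p : ℕ)) = 2 → dg G (x + (q : ℕ)) = 2 →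
    G.Adj (x + i) (x + j) → ∃ a b c : ℕ, i ≤ a ∧ a + 2 ≤ b ∧ b + 2 ≤ c ∧ c ≤ j ∧
      G.Adj (x + a) (x + b) ∧ G.Adj (x + b) (x + c) ∧ G.Adj (x + a) (x + c) := by
  induction L with
  | zero => intros; omega
  | succ L ih =>
    intro x i j p q hL hip hpq hqj hj hp hq hA
    obtain ⟨k, h1, h2, h3, h4⟩ := ha x i j (by omega) hj hA
    by_cases h5 : i + 2 ≤ k
    · by_cases h6 : k + 2 ≤ j
      · exact ⟨i, k, j, le_rfl, h5, h6, le_rfl, h3, h4, hA⟩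
      · have hk : j = k + 1 := by omega
        have : q ≠ k := by
          rintro rfl
          have := dg_ge (G := G) x (x + q) {i, q - 1, q + 1} (by
            intro l hl
            simp only [Finset.mem_insert, Finset.mem_singleton] at hl
            rcases hl with rfl | rfl | rfl
            · exact ⟨by omega, h3.symm⟩
            · exact ⟨by omega, (hc.lin x _ _ (by omega)).symm⟩
            · exact ⟨by omega, hc.lin x _ _ (by omega)⟩)
          rw [Finset.card_insert_of_notMem, Finset.card_insert_of_notMem] at this
          · simp at this; omega
          · simp
          · simp; omega
        obtain ⟨a, b, c, h⟩ := ih x i k p q (by omega) (by omega) (by omega) (by omega) (by omega) hp hq h3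
        exact ⟨a, b, c, by omega, by omega, by omega, by omega, h.2.2.2.2⟩
    · have hk : k = i + 1 := by omega
      have : p ≠ k := by
          rintro rfl
          have := dg_ge (G := G) x (x + p) {p - 1, p + 1, j} (by
            intro l hl
            simp only [Finset.mem_insert, Finset.mem_singleton] at hl
            rcases hl with rfl | rfl | rfl
            · exact ⟨by omega, (hc.lin x _ _ (by omega)).symm⟩
            · exact ⟨by omega, hc.lin x _ _ (by omega)⟩
            · exact ⟨by omega, h4⟩)
          rw [Finset.card_insert_of_notMem, Finset.card_insert_of_notMem] at this
          · simp at this; omega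
          · simp; omega
          · simp; omega
      obtain ⟨a, b, c, h⟩ := ih x k j p q (by omega) (by omega) (by omega) (by omega) (by omega) hp hq h4
      exact ⟨a, b, c, by omega, by omega, by omega, by omega, h.2.2.2.2⟩
end

def D2 {n : ℕ} (G : SimpleGraph (ZMod n)) : Prop :=
  ∀ (x : ZMod n) (a b c d : ℕ), a < b → b < c → c < d → d < n → dg G (x + a) = 2 →
    dg G (x + b) = 2 → dg G (x + c) = 2 → dg G (x + d) = 2 → False

def D3 {n : ℕ} (G : SimpleGraph (ZMod n)) : Prop :=
  ∀ (x : ZMod n) (a b : ℕ), a < b → b < n → dg G (x + a) = 3 → dg G (x + b) = 3 → False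

def D5 {n : ℕ} (G : SimpleGraph (ZMod n)) : Prop :=
  ∀ (x : ZMod n) (a b : ℕ), a < b → b < n → dg G (x + a) = 5 → dg G (x + b) = 5 → False

lemma shift_adj {n : ℕ} {G : SimpleGraph (ZMod n)} (x : ZMod n) (m i j i' j' : ℕ)
    (h : G.Adj (x + i) (x + j)) (hi : i = m + i' ∨ i + n = m + i') (hj : j = m + j' ∨ j + n = m + j') :
    G.Adj ((x + (m : ℕ)) + (i' : ℕ)) ((x + (m : ℕ)) + (j' : ℕ)) := by
  have key : ∀ i i' : ℕ, (i = m + i' ∨ i + n = m + i') → (x + (m : ℕ)) + (i' : ℕ) = x + (i : ZMod n) := by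
    intro i i' hi
    rw [add_assoc, ← Nat.cast_add]
    rcases hi with h | h
    · rw [h]
    · rw [← h]; simp
  rwa [key i i' hi, key j j' hj]

/-- no two long arms -/
lemma no_two {n : ℕ} [NeZero n] {G : SimpleGraph (ZMod n)} (hc : Cyc G) (ha : Apx G) (hnc : NC G)
    (d2 : D2 G) (d3 : D3 G) (x : ZMod n) (p q r : ℕ) (hp : 3 ≤ p) (hq : 3 ≤ q) (hr : 2 ≤ r)
    (hn : p + q + r = n) (h1 : G.Adj (x + (0 : ℕ)) (x + p)) (h2 : G.Adj (x + p) (x + (p + q : ℕ)))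
    (h3 : G.Adj (x + (0 : ℕ)) (x + (p + q : ℕ))) : False := by
  obtain ⟨k, k1, k2, k3⟩ := ear_exists hc ha hnc _ (x + (p + q : ℕ)) 0 r le_rfl (by omega) (by omega)
    (shift_adj x (p + q) (p + q) 0 0 r h3.symm (by omega) (by omega))
  rw [add_assoc, ← Nat.cast_add] at k3
  obtain ⟨s, s1, s2, s3⟩ := ear_exists hc ha hnc _ x 0 p le_rfl (by omega) (by omega) h1
  obtain ⟨t, t1, t2, t3⟩ := ear_exists hc ha hnc _ x p (p + q) le_rfl (by omega) (by omega) h2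
  rcases three_exists hc ha hnc _ x 0 p le_rfl (by omega) (by omega) h1 with
    ⟨u, u1, u2, u3⟩ | ⟨u, v, u1, u2, u3, u4, u5⟩
  · rcases three_exists hc ha hnc _ x p (p + q) le_rfl (by omega) (by omega) h2 with
      ⟨w, w1, w2, w3⟩ | ⟨w, v, w1, w2, w3, w4, w5⟩
    · exact d3 x u w (by omega) (by omega) u3 w3
    · exact d2 x s w v _ (by omega) (by omega) (by omega) (by omega) s3 w4 w5 k3
  · exact d2 x u v t _ (by omega) (by omega) (by omega) (by omega) u4 u5 t3 k3

lemma center_exists {n : ℕ} [NeZero n] (hn : 7 ≤ n) {G : SimpleGraph (ZMod n)} (hc : Cyc G) (ha : Apx G)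
    (hnc : NC G) (d2 : D2 G) (d3 : D3 G)
    (h2 : ∃ (e : ZMod n) (p q : ℕ), 0 < p ∧ p < q ∧ q < n ∧ dg G (e + (0 : ℕ)) = 2 ∧
      dg G (e + p) = 2 ∧ dg G (e + q) = 2) :
    ∃ x : ZMod n, G.Adj (x + (0 : ℕ)) (x + (2 : ℕ)) ∧ G.Adj (x + (2 : ℕ)) (x + (4 : ℕ)) ∧
      G.Adj (x + (0 : ℕ)) (x + (4 : ℕ)) := by
  obtain ⟨e, p, q, hp, hpq, hq, e0, ep, eq⟩ := h2
  have h1n : G.Adj (e + (1 : ℕ)) (e + (n - 1 : ℕ)) := by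
    obtain ⟨k, k1, k2, k3, k4⟩ := ha e 0 (n - 1) (by omega) (by omega) (hc.wrap e)
    have := dg_sat e (e + (0 : ℕ)) {1, n - 1} (by
      intro l hl
      simp only [Finset.mem_insert, Finset.mem_singleton] at hl
      rcases hl with rfl | rfl
      · exact ⟨by omega, hc.lin e _ _ (by omega)⟩
      · exact ⟨by omega, hc.wrap e⟩) (by rw [Finset.card_pair (by omega)]; omega) k (by omega) k3
    simp only [Finset.mem_insert, Finset.mem_singleton] at this
    have : k = 1 := by omega
    subst this
    exact k4
  have p1 : p ≠ 1 := by
    rintro rfl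
    have := dg_ge (G := G) e (e + (1 : ℕ)) {0, 2, n - 1} (by
      intro l hl
      simp only [Finset.mem_insert, Finset.mem_singleton] at hl
      rcases hl with rfl | rfl | rfl
      · exact ⟨by omega, (hc.lin e _ _ (by omega)).symm⟩
      · exact ⟨by omega, hc.lin e _ _ (by omega)⟩
      · exact ⟨by omega, h1n⟩)
    rw [Finset.card_insert_of_notMem, Finset.card_insert_of_notMem] at this
    · simp at this ep; omega
    · simp; omega
    · simp; omega
  have qn : q ≠ n - 1 := by
    intro hqn
    rw [hqn] at eq
    have := dg_ge (G := G) e (e + (n - 1 : ℕ)) {0, 1, n - 2} (by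
      intro l hl
      simp only [Finset.mem_insert, Finset.mem_singleton] at hl
      rcases hl with rfl | rfl | rfl
      · exact ⟨by omega, (hc.wrap e).symm⟩
      · exact ⟨by omega, h1n.symm⟩
      · exact ⟨by omega, (hc.lin e _ _ (by omega)).symm⟩)
    rw [Finset.card_insert_of_notMem, Finset.card_insert_of_notMem] at this
    · simp only [Finset.card_singleton] at this; omega
    · simp; omega
    · simp; omega
  obtain ⟨a, b, c, h3, h4, h5, h6, A1, A2, A3⟩ :=
    branch_exists hc ha _ e 1 (n - 1) p q le_rfl (by omega) hpq (by omega) (by omega) ep eq h1n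
  have W1 : ¬ (3 ≤ b - a ∧ 3 ≤ c - b) := fun hh =>
    no_two hc ha hnc d2 d3 (e + (a : ℕ)) (b - a) (c - b) (n - c + a) hh.1 hh.2 (by omega) (by omega)
      (shift_adj e a a b _ _ A1 (by omega) (by omega))
      (shift_adj e a b c _ _ A2 (by omega) (by omega))
      (shift_adj e a a c _ _ A3 (by omega) (by omega))
  have W2 : ¬ (3 ≤ c - b ∧ 3 ≤ n - c + a) := fun hh =>
    no_two hc ha hnc d2 d3 (e + (b : ℕ)) (c - b) (n - c + a) (b - a) hh.1 hh.2 (by omega) (by omega)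
      (shift_adj e b b c _ _ A2 (by omega) (by omega))
      (shift_adj e b c a _ _ A3.symm (by omega) (by omega))
      (shift_adj e b b a _ _ A1.symm (by omega) (by omega))
  have W3 : ¬ (3 ≤ n - c + a ∧ 3 ≤ b - a) := fun hh =>
    no_two hc ha hnc d2 d3 (e + (c : ℕ)) (n - c + a) (b - a) (c - b) hh.1 hh.2 (by omega) (by omega)
      (shift_adj e c c a _ _ A3.symm (by omega) (by omega))
      (shift_adj e c a b _ _ A1 (by omega) (by omega))
      (shift_adj e c c b _ _ A2.symm (by omega) (by omega))
  have : (b = a + 2 ∧ c = b + 2) ∨ (c = b + 2 ∧ n - c + a = 2) ∨ (n - c + a = 2 ∧ b = a + 2) := by omega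
  rcases this with h | h | h
  · exact ⟨e + (a : ℕ), shift_adj e a a b _ _ A1 (by omega) (by omega),
      shift_adj e a b c _ _ A2 (by omega) (by omega), shift_adj e a a c _ _ A3 (by omega) (by omega)⟩
  · exact ⟨e + (b : ℕ), shift_adj e b b c _ _ A2 (by omega) (by omega),
      shift_adj e b c a _ _ A3.symm (by omega) (by omega), shift_adj e b b a _ _ A1.symm (by omega) (by omega)⟩
  · exact ⟨e + (c : ℕ), shift_adj e c c a _ _ A3.symm (by omega) (by omega),
      shift_adj e c a b _ _ A1 (by omega) (by omega), shift_adj e c c b _ _ A2.symm (by omega) (by omega)⟩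

def R (n i j : ℕ) : Prop :=
  j = i + 1 ∨ i = j + 1 ∨ (i = 0 ∧ j + 1 = n) ∨ (j = 0 ∧ i + 1 = n) ∨
  (i ≠ j ∧ 2 ≤ i ∧ 2 ≤ j ∧ i + 2 ≤ n ∧ j + 2 ≤ n ∧ (i + j = n ∨ i + j + 1 = n)) ∨
  (i = 0 ∧ j = 2) ∨ (i = 2 ∧ j = 0) ∨ (i = 0 ∧ j + 2 = n) ∨ (j = 0 ∧ i + 2 = n)

lemma R_symm {n i j : ℕ} (h : R n i j) : R n j i := by
  unfold R at *
  rcases h with h | h | h | h | h | h | h | h | h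
  · exact Or.inr (Or.inl h)
  · exact Or.inl h
  · omega
  · omega
  · obtain ⟨h1, h2, h3, h4, h5, h6⟩ := h
    exact Or.inr (Or.inr (Or.inr (Or.inr (Or.inl ⟨h1.symm, h3, h2, h5, h4, by omega⟩))))
  · omega
  · omega
  · omega
  · omega

/-- The model graph. -/
def H (n : ℕ) (hn : 7 ≤ n) : SimpleGraph (ZMod n) where
  Adj u v := R n u.val v.val
  symm := ⟨by intro u v h; exact R_symm h⟩
  loopless := ⟨by intro u h; unfold R at h; omega⟩

lemma zigzag {n : ℕ} [NeZero n] (hn : 7 ≤ n) {G : SimpleGraph (ZMod n)} (hc : Cyc G) (ha : Apx G)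
    (x : ZMod n) (h02 : G.Adj (x + (0 : ℕ)) (x + (2 : ℕ)))
    (h0n : G.Adj (x + (0 : ℕ)) (x + (n - 2 : ℕ))) (h2n : G.Adj (x + (2 : ℕ)) (x + (n - 2 : ℕ)))
    (hd5 : dg G (x + (2 : ℕ)) ≤ 5) (hd4 : ∀ k : ℕ, k < n → k ≠ 2 → dg G (x + k) ≤ 4) (k : ℕ) :
    2 ≤ k → (2 * k < n → G.Adj (x + k) (x + (n - k : ℕ))) ∧
      (2 * k + 1 < n → G.Adj (x + k) (x + (n - k - 1 : ℕ))) := by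
  have stepb : ∀ k y : ℕ, 2 ≤ k → 2 * k + 1 < n → y < k → G.Adj (x + k) (x + (n - k : ℕ)) →
      G.Adj (x + y) (x + (n - k : ℕ)) → G.Adj (x + k) (x + (n - k - 1 : ℕ)) := by
    intro k y hk hkn hy hA hB
    obtain ⟨z, z1, z2, z3, z4⟩ := ha x k (n - k) (by omega) (by omega) hA
    have := dg_sat x (x + (n - k : ℕ)) {y, k, n - k - 1, n - k + 1} (by
      intro l hl
      simp only [Finset.mem_insert, Finset.mem_singleton] at hl
      rcases hl with rfl | rfl | rfl | rfl
      · exact ⟨by omega, hB.symm⟩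
      · exact ⟨by omega, hA.symm⟩
      · exact ⟨by omega, (hc.lin x _ _ (by omega)).symm⟩
      · exact ⟨by omega, hc.lin x _ _ (by omega)⟩) (by
      have := hd4 (n - k) (by omega) (by omega)
      rw [Finset.card_insert_of_notMem, Finset.card_insert_of_notMem, Finset.card_insert_of_notMem]
      · simpa using this
      · simp <;> omega
      · simp <;> omega
      · simp <;> omega) z (by omega) z4.symm
    simp only [Finset.mem_insert, Finset.mem_singleton] at this
    have : z = n - k - 1 := by omega
    subst this
    exact z3
  induction k with
  | zero => omega
  | succ k ih =>
    intro hk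
    by_cases hk2 : k = 1
    · subst hk2
      exact ⟨fun _ => h2n, fun _ => stepb 2 0 le_rfl (by omega) (by omega) h2n h0n⟩
    obtain ⟨iha, ihb⟩ := ih (by omega)
    have hA : 2 * (k + 1) < n → G.Adj (x + (k + 1 : ℕ)) (x + (n - (k + 1) : ℕ)) := by
      intro hkn
      have hA := iha (by omega)
      have hB := ihb (by omega)
      obtain ⟨z, z1, z2, z3, z4⟩ := ha x k (n - k - 1) (by omega) (by omega) hB
      have hz : z = k + 1 := by
        by_cases hk3 : k = 2
        · subst hk3
          have := dg_sat x (x + (2 : ℕ)) {0, 1, 3, n - 2, n - 2 - 1} (by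
            intro l hl
            simp only [Finset.mem_insert, Finset.mem_singleton] at hl
            rcases hl with rfl | rfl | rfl | rfl | rfl
            · exact ⟨by omega, h02.symm⟩
            · exact ⟨by omega, (hc.lin x _ _ (by omega)).symm⟩
            · exact ⟨by omega, hc.lin x _ _ (by omega)⟩
            · exact ⟨by omega, hA⟩
            · exact ⟨by omega, hB⟩) (by
            rw [Finset.card_insert_of_notMem, Finset.card_insert_of_notMem,
              Finset.card_insert_of_notMem, Finset.card_insert_of_notMem]
            · simpa using hd5
            · simp <;> omega
            · simp <;> omega
            · simp <;> omega
            · simp <;> omega) z (by omega) z3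
          simp only [Finset.mem_insert, Finset.mem_singleton] at this
          omega
        · have := dg_sat x (x + (k : ℕ)) {k - 1, k + 1, n - k, n - k - 1} (by
            intro l hl
            simp only [Finset.mem_insert, Finset.mem_singleton] at hl
            rcases hl with rfl | rfl | rfl | rfl
            · exact ⟨by omega, (hc.lin x _ _ (by omega)).symm⟩
            · exact ⟨by omega, hc.lin x _ _ (by omega)⟩
            · exact ⟨by omega, hA⟩
            · exact ⟨by omega, hB⟩) (by
            have := hd4 k (by omega) (by omega)
            rw [Finset.card_insert_of_notMem, Finset.card_insert_of_notMem,
              Finset.card_insert_of_notMem]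
            · simpa using this
            · simp <;> omega
            · simp <;> omega
            · simp <;> omega) z (by omega) z3
          simp only [Finset.mem_insert, Finset.mem_singleton] at this
          omega
      subst hz
      have : n - (k + 1) = n - k - 1 := by omega
      rw [this]
      exact z4
    refine ⟨hA, fun h => ?_⟩
    have hB := ihb (by omega)
    have e : n - k - 1 = n - (k + 1) := by omega
    rw [e] at hB
    exact stepb (k + 1) k (by omega) h (by omega) (hA (by omega)) hB

lemma R_sub {n : ℕ} [NeZero n] (hn : 7 ≤ n) {G : SimpleGraph (ZMod n)} (hc : Cyc G) (ha : Apx G)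
    (x : ZMod n) (h02 : G.Adj (x + (0 : ℕ)) (x + (2 : ℕ)))
    (h0n : G.Adj (x + (0 : ℕ)) (x + (n - 2 : ℕ))) (h2n : G.Adj (x + (2 : ℕ)) (x + (n - 2 : ℕ)))
    (hd5 : dg G (x + (2 : ℕ)) ≤ 5) (hd4 : ∀ k : ℕ, k < n → k ≠ 2 → dg G (x + k) ≤ 4) (i j : ℕ)
    (hi : i < n) (hj : j < n) (hR : R n i j) : G.Adj (x + i) (x + j) := by
  have Z := zigzag hn hc ha x h02 h0n h2n hd5 hd4
  wlog hij : i < j generalizing i j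
  · exact (this j i hj hi (R_symm hR) (by unfold R at hR; omega)).symm
  unfold R at hR
  rcases hR with h | h | h | h | h | h | h | h | h
  · exact hc.lin x i j h
  · omega
  · obtain ⟨rfl, h⟩ := h
    have : j = n - 1 := by omega
    rw [this]
    exact hc.wrap x
  · omega
  · rcases h with ⟨h1, h2, h3, h4, h5, h6 | h6⟩
    · have := (Z i h2).1 (by omega)
      have e : n - i = j := by omega
      rwa [e] at this
    · have := (Z i h2).2 (by omega)
      have e : n - i - 1 = j := by omega
      rwa [e] at this
  · obtain ⟨rfl, rfl⟩ := h; exact h02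
  · omega
  · obtain ⟨rfl, h⟩ := h
    have : j = n - 2 := by omega
    rw [this]
    exact h0n
  · omega

lemma iso_of {n : ℕ} [NeZero n] (hn : 7 ≤ n) {G : SimpleGraph (ZMod n)} (hc : Cyc G) (ha : Apx G)
    (hs : ∑ v, dg (H n hn) v = ∑ v, dg G v)
    (x : ZMod n) (h02 : G.Adj (x + (0 : ℕ)) (x + (2 : ℕ)))
    (h0n : G.Adj (x + (0 : ℕ)) (x + (n - 2 : ℕ))) (h2n : G.Adj (x + (2 : ℕ)) (x + (n - 2 : ℕ)))
    (hd5 : dg G (x + (2 : ℕ)) ≤ 5) (hd4 : ∀ k : ℕ, k < n → k ≠ 2 → dg G (x + k) ≤ 4) :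
    Nonempty (H n hn ≃g G) := by
  have key : ∀ u v : ZMod n, (H n hn).Adj u v → G.Adj (x + u) (x + v) := by
    intro u v h
    have := R_sub hn hc ha x h02 h0n h2n hd5 hd4 u.val v.val (ZMod.val_lt _) (ZMod.val_lt _) h
    simpa using this
  have hs2 : ∑ v, dg G v = ∑ v, dg G (x + v) := (Equiv.sum_comp (Equiv.addLeft x) (dg G)).symm
  have hsub : ∀ v, (fun w => x + w) '' ((H n hn).neighborSet v) ⊆ G.neighborSet (x + v) := by
    rintro v _ ⟨w, hw, rfl⟩
    exact key v w hw
  have hcard : ∀ v, ((fun w => x + w) '' ((H n hn).neighborSet v)).ncard = dg (H n hn) v :=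
    fun v => Set.ncard_image_of_injective _ (add_right_injective x)
  have hle : ∀ v ∈ Finset.univ, dg (H n hn) v ≤ dg G (x + v) := by
    intro v _
    rw [← hcard v]
    exact Set.ncard_le_ncard (hsub v) (Set.toFinite _)
  have heq := (Finset.sum_eq_sum_iff_of_le hle).1 (hs.trans hs2)
  refine ⟨⟨Equiv.addLeft x, ?_⟩⟩
  intro u v
  refine ⟨fun h => ?_, key u v⟩
  have := Set.eq_of_subset_of_ncard_le (hsub u) (by rw [hcard, heq u (Finset.mem_univ _)]; rfl)
    (Set.toFinite _)
  have h' : x + v ∈ G.neighborSet (x + u) := h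
  rw [← this] at h'
  obtain ⟨w, hw, hwv⟩ := h'
  have : w = v := add_left_cancel hwv
  subst this
  exact hw

lemma neg_pos {n : ℕ} (i : ZMod n) (k : ℕ) (hk : k ≤ n) : -(-i + (k : ZMod n)) = i + ((n - k : ℕ) : ZMod n) := by
  push_cast [Nat.cast_sub hk]
  simp [add_comm]

lemma iso_of_center {n : ℕ} [NeZero n] (hn : 7 ≤ n) {G : SimpleGraph (ZMod n)} (hc : Cyc G) (ha : Apx G)
    (hs : ∑ v, dg (H n hn) v = ∑ v, dg G v) (d5 : D5 G) (hle : ∀ v, dg G v ≤ 5)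
    (x : ZMod n) (h02 : G.Adj (x + (0 : ℕ)) (x + (2 : ℕ)))
    (h0n : G.Adj (x + (0 : ℕ)) (x + (n - 2 : ℕ))) (h2n : G.Adj (x + (2 : ℕ)) (x + (n - 2 : ℕ))) :
    Nonempty (H n hn ≃g G) := by
  obtain ⟨z, z1, z2, z3, z4⟩ := ha x 2 (n - 2) (by omega) (by omega) h2n
  have h4 : ∀ m : ℕ, m < n → 5 ≤ dg G (x + m) → ∀ k : ℕ, k < n → k ≠ m → dg G (x + k) ≤ 4 := by
    intro m hm h5 k hk hkm
    have := hle (x + k)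
    have := hle (x + m)
    by_contra hcon
    rcases lt_or_gt_of_ne hkm with h | h
    · exact d5 x k m h hm (by omega) (by omega)
    · exact d5 x m k h hk (by omega) (by omega)
  by_cases hz : z = 3
  · subst hz
    have h5 := dg_ge (G := G) x (x + (n - 2 : ℕ)) {0, 2, 3, n - 1, n - 3} (by
      intro l hl
      simp only [Finset.mem_insert, Finset.mem_singleton] at hl
      rcases hl with rfl | rfl | rfl | rfl | rfl
      · exact ⟨by omega, h0n.symm⟩
      · exact ⟨by omega, h2n.symm⟩
      · exact ⟨by omega, z4.symm⟩
      · exact ⟨by omega, hc.lin x _ _ (by omega)⟩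
      · exact ⟨by omega, (hc.lin x _ _ (by omega)).symm⟩)
    rw [Finset.card_insert_of_notMem (by simp <;> omega), Finset.card_insert_of_notMem (by simp <;> omega),
      Finset.card_insert_of_notMem (by simp <;> omega), Finset.card_insert_of_notMem (by simp <;> omega)] at h5
    simp only [Finset.card_singleton] at h5
    have h4' := h4 _ (by omega) h5
    let G' : SimpleGraph (ZMod n) := G.comap (Equiv.neg (ZMod n))
    have hadj : ∀ u v, G'.Adj u v ↔ G.Adj (-u) (-v) := fun u v => Iff.rfl
    let φ : G' ≃g G := SimpleGraph.Iso.comap (Equiv.neg (ZMod n)) G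
    have hdg : ∀ v, dg G' v = dg G (-v) := by
      intro v
      unfold dg
      rw [← Set.ncard_image_of_injective (G'.neighborSet v) neg_injective]
      congr 1
      ext w
      constructor
      · rintro ⟨u, hu, rfl⟩
        exact hu
      · intro hw
        exact ⟨-w, by rw [SimpleGraph.mem_neighborSet, hadj]; simpa using hw, by simp⟩
    have hc' : Cyc G' := by
      intro v
      rw [hadj]
      have := (hc (-(v + 1))).symm
      have e : -(v + 1) + 1 = -v := by ring
      rwa [e] at this
    have ha' : Apx G' := by
      intro y i j hij hj hA
      have hA : G.Adj (-(y + (i : ZMod n))) (-(y + (j : ZMod n))) := hA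
      obtain ⟨w, hw⟩ : ∃ w, w = -(y + (j : ZMod n)) := ⟨_, rfl⟩
      have pos2 : ∀ k : ℕ, k ≤ j → -(y + (k : ZMod n)) = w + ((j - k : ℕ) : ZMod n) := by
        intro k hk
        rw [hw]
        push_cast [Nat.cast_sub hk]
        ring
      rw [pos2 i (by omega), pos2 j le_rfl] at hA
      obtain ⟨k, k1, k2, k3, k4⟩ := ha _ _ _ (by omega) (by omega) hA.symm
      have e : k = j - (j - k) := by omega
      refine ⟨j - k, by omega, by omega, ?_, ?_⟩
      · rw [hadj, pos2 i (by omega), pos2 (j - k) (by omega), ← e]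
        exact k4.symm
      · rw [hadj, pos2 (j - k) (by omega), pos2 j le_rfl, ← e]
        exact k3.symm
    have hs' : ∑ v, dg (H n hn) v = ∑ v, dg G' v := by
      rw [hs]
      simp only [hdg]
      exact (Equiv.sum_comp (Equiv.neg (ZMod n)) (dg G)).symm
    have e0 : x + ((n - 0 : ℕ) : ZMod n) = x + (0 : ℕ) := by simp
    have e2 : n - (n - 2) = 2 := by omega
    obtain ⟨ψ⟩ := iso_of hn hc' ha' hs' (-x)
      (by rw [hadj, neg_pos _ _ (by omega), neg_pos _ _ (by omega), e0]; exact h0n)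
      (by rw [hadj, neg_pos _ _ (by omega), neg_pos _ _ (by omega), e0, e2]; exact h02)
      (by rw [hadj, neg_pos _ _ (by omega), neg_pos _ _ (by omega), e2]; exact h2n.symm)
      (by rw [hdg]; exact hle _)
      (by
        intro k hk hk2
        rw [hdg, neg_pos _ _ (by omega)]
        by_cases hk0 : k = 0
        · subst hk0
          rw [e0]
          exact h4' 0 (by omega) (by omega)
        · exact h4' _ (by omega) (by omega))
    exact ⟨ψ.trans φ⟩
  · have h5 := dg_ge (G := G) x (x + (2 : ℕ)) {0, 1, 3, z, n - 2} (by
      intro l hl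
      simp only [Finset.mem_insert, Finset.mem_singleton] at hl
      rcases hl with rfl | rfl | rfl | rfl | rfl
      · exact ⟨by omega, h02.symm⟩
      · exact ⟨by omega, (hc.lin x _ _ (by omega)).symm⟩
      · exact ⟨by omega, hc.lin x _ _ (by omega)⟩
      · exact ⟨by omega, z3⟩
      · exact ⟨by omega, h2n⟩)
    rw [Finset.card_insert_of_notMem (by simp <;> omega), Finset.card_insert_of_notMem (by simp <;> omega),
      Finset.card_insert_of_notMem (by simp <;> omega), Finset.card_insert_of_notMem (by simp <;> omega)] at h5
    simp only [Finset.card_singleton] at h5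
    exact iso_of hn hc ha hs x h02 h0n h2n (hle _) (h4 2 (by omega) h5)

lemma R_chord {n i j : ℕ} (hij : i < j) (h : R n i j) (h1 : j ≠ i + 1) (h2 : ¬ (i = 0 ∧ j + 1 = n)) :
    (2 ≤ i ∧ j + 2 ≤ n ∧ n ≤ i + j + 1 ∧ i + j ≤ n) ∨ (i = 0 ∧ (j = 2 ∨ j + 2 = n)) := by
  unfold R at h
  omega

lemma val_sub' {n : ℕ} [NeZero n] (v a : ZMod n) :
    (v - a).val = if a.val ≤ v.val then v.val - a.val else v.val + n - a.val := by
  split_ifs with h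
  · exact ZMod.val_sub h
  · have hv := ZMod.val_lt v
    have ha := ZMod.val_lt a
    have : v - a = ((v.val + n - a.val : ℕ) : ZMod n) := by
      rw [Nat.cast_sub (by omega)]
      simp
    rw [this, ZMod.val_natCast_of_lt (by omega)]

lemma adj_cyc {n : ℕ} [NeZero n] (hn : 7 ≤ n) (v : ZMod n) :
    (v + 1).val = if v.val + 1 = n then 0 else v.val + 1 := by
  have : v + 1 = ((v.val + 1 : ℕ) : ZMod n) := by simp
  have hv := ZMod.val_lt v
  split_ifs with h
  · rw [this, h]; simp
  · rw [this, ZMod.val_natCast_of_lt (by omega)]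

lemma H_cyc {n : ℕ} [NeZero n] (hn : 7 ≤ n) : Cyc (H n hn) := by
  intro v
  show R n v.val (v + 1).val
  rw [adj_cyc hn]
  unfold R
  split_ifs <;> omega

lemma H_outer {n : ℕ} [NeZero n] (hn : 7 ≤ n) : IsOuterplane n (H n hn) := by
  refine ⟨{e | e ∈ (H n hn).edgeSet ∧ ¬ IsCycleEdge n e}, ⟨?_, ?_⟩, ?_⟩
  · intro e he
    exact ⟨(H n hn).not_isDiag_of_mem_edgeSet he.1, he.2⟩
  · have ord : ∀ e : Sym2 (ZMod n), e ∈ (H n hn).edgeSet → ¬ IsCycleEdge n e →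
        ∃ a b, e = s(a, b) ∧ a.val < b.val ∧
        ((2 ≤ a.val ∧ b.val + 2 ≤ n ∧ n ≤ a.val + b.val + 1 ∧ a.val + b.val ≤ n) ∨
          (a.val = 0 ∧ (b.val = 2 ∨ b.val + 2 = n))) := by
      have aux : ∀ a b : ZMod n, a.val < b.val → (H n hn).Adj a b → ¬ IsCycleEdge n s(a, b) →
        ((2 ≤ a.val ∧ b.val + 2 ≤ n ∧ n ≤ a.val + b.val + 1 ∧ a.val + b.val ≤ n) ∨
          (a.val = 0 ∧ (b.val = 2 ∨ b.val + 2 = n))) := by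
        intro a b hab hadj hce
        have hb := ZMod.val_lt b
        apply R_chord hab hadj
        · intro h
          apply hce
          refine ⟨a, ?_⟩
          have : b = a + 1 := by
            apply ZMod.val_injective n
            rw [adj_cyc hn, h, if_neg (by omega)]
          rw [this]
        · intro h
          apply hce
          refine ⟨b, ?_⟩
          have : a = b + 1 := by
            apply ZMod.val_injective n
            rw [adj_cyc hn, h.1, if_pos h.2]
          rw [this, Sym2.eq_swap]
      intro e
      induction e using Sym2.ind with
      | _ a b =>
        intro he hce
        have hadj : (H n hn).Adj a b := he
        have hne : a.val ≠ b.val := fun h => hadj.ne (ZMod.val_injective n h)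
        rcases lt_or_gt_of_ne hne with h | h
        · exact ⟨a, b, rfl, h, aux a b h hadj hce⟩
        · exact ⟨b, a, Sym2.eq_swap, h, aux b a h hadj.symm (by rwa [Sym2.eq_swap])⟩
    intro e he f hf hef hcr
    obtain ⟨a, b, rfl, hab, h1⟩ := ord e he.1 he.2
    obtain ⟨c, d, rfl, hcd, h2⟩ := ord f hf.1 hf.2
    have x1 := hcr a b c d rfl rfl
    have x2 := hcr b a c d Sym2.eq_swap rfl
    have hb := ZMod.val_lt b
    have hd := ZMod.val_lt d
    have B1 : ∀ v : ZMod n, Between n a b v ↔ (a.val < v.val ∧ v.val < b.val) := by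
      intro v
      have hv := ZMod.val_lt v
      unfold Between
      rw [val_sub', val_sub']
      split_ifs <;> omega
    have B2 : ∀ v : ZMod n, Between n b a v ↔ (b.val < v.val ∨ v.val < a.val) := by
      intro v
      have hv := ZMod.val_lt v
      unfold Between
      rw [val_sub', val_sub']
      split_ifs <;> omega
    rw [B1, B1] at x1
    rw [B2, B2] at x2
    have key : (a.val < c.val ∧ c.val < b.val ∧ b.val < d.val) ∨
        (c.val < a.val ∧ a.val < d.val ∧ d.val < b.val) := by
      rcases x1 with x1 | x1 <;> rcases x2 with x2 | x2 <;> omega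
    omega
  · ext e
    simp only [Set.mem_union, Set.mem_setOf_eq]
    constructor
    · intro h
      by_cases h' : IsCycleEdge n e
      · exact Or.inl h'
      · exact Or.inr ⟨h, h'⟩
    · rintro (⟨i, rfl⟩ | h)
      · exact H_cyc hn i
      · exact h.1

/-- degree function of the model -/
def dgf (n k : ℕ) : ℕ :=
  if k = 2 then 5 else if k = 1 ∨ k + 1 = n ∨ 2 * k = n ∨ 2 * k + 1 = n then 2
  else if 2 * k + 2 = n ∨ 2 * k = n + 1 then 3 else 4

set_option maxHeartbeats 4000000 in
lemma H_dg {n : ℕ} [NeZero n] (hn : 7 ≤ n) (k : ℕ) (hk : k < n) :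
    dg (H n hn) (0 + (k : ZMod n)) = dgf n k := by
  have key : ∀ t : Finset ℕ, (∀ j, j < n → R n k j → j ∈ t) → (∀ j ∈ t, j < n ∧ R n k j) →
      dg (H n hn) (0 + (k : ZMod n)) = t.card := by
    intro t ht ht'
    have e : ∀ j, j < n → ((0 : ZMod n) + (j : ZMod n)).val = j := by
      intro j hj
      rw [zero_add, ZMod.val_natCast_of_lt hj]
    apply dg_eq 0
    · intro j hj
      have hj := ht' j hj
      refine ⟨hj.1, ?_⟩
      show R n _ _
      rw [e k hk, e j hj.1]
      exact hj.2
    · intro j hj hA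
      have hA : R n _ _ := hA
      rw [e k hk, e j hj] at hA
      exact ht j hj hA
  unfold dgf
  split_ifs with h1 h2 h3
  · subst h1
    rw [key {0, 1, 3, n - 3, n - 2} (by
        intro j hj hR
        simp only [Finset.mem_insert, Finset.mem_singleton]
        rcases hR with h | h | h | h | h | h | h | h | h <;> omega) (by
        intro j hj
        simp only [Finset.mem_insert, Finset.mem_singleton] at hj
        refine ⟨by omega, ?_⟩
        unfold R
        first | grind | omega)]
    rw [Finset.card_insert_of_notMem (by simp <;> omega), Finset.card_insert_of_notMem (by simp <;> omega),
      Finset.card_insert_of_notMem (by simp <;> omega), Finset.card_insert_of_notMem (by simp <;> omega)]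
    simp
  · have : k = 1 ∨ k ≠ 1 ∧ k = n - 1 ∨ 3 ≤ k ∧ k + 3 ≤ n ∧ (2 * k = n ∨ 2 * k + 1 = n) := by omega
    rcases this with rfl | h | h
    · rw [key {0, 2} (by
        intro j hj hR
        simp only [Finset.mem_insert, Finset.mem_singleton]
        rcases hR with h | h | h | h | h | h | h | h | h <;> omega) (by
        intro j hj
        simp only [Finset.mem_insert, Finset.mem_singleton] at hj
        refine ⟨by omega, ?_⟩
        unfold R
        first | grind | omega)]
      simp
    · rw [key {0, n - 2} (by
        intro j hj hR
        simp only [Finset.mem_insert, Finset.mem_singleton]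
        rcases hR with h | h | h | h | h | h | h | h | h <;> omega) (by
        intro j hj
        simp only [Finset.mem_insert, Finset.mem_singleton] at hj
        refine ⟨by omega, ?_⟩
        unfold R
        first | grind | omega)]
      rw [Finset.card_insert_of_notMem (by simp <;> omega)]
      simp
    · clear h2
      rw [key {k - 1, k + 1} (by
        intro j hj hR
        simp only [Finset.mem_insert, Finset.mem_singleton]
        rcases hR with h | h | h | h | h | h | h | h | h <;> omega) (by
        intro j hj
        simp only [Finset.mem_insert, Finset.mem_singleton] at hj
        refine ⟨by omega, ?_⟩
        unfold R
        first | grind | omega)]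
      rw [Finset.card_insert_of_notMem (by simp <;> omega)]
      simp
  · rcases h3 with h3 | h3
    · rw [key {k - 1, k + 1, k + 2} (by
        intro j hj hR
        simp only [Finset.mem_insert, Finset.mem_singleton]
        rcases hR with h | h | h | h | h | h | h | h | h <;> omega) (by
        intro j hj
        simp only [Finset.mem_insert, Finset.mem_singleton] at hj
        refine ⟨by omega, ?_⟩
        unfold R
        first | grind | omega)]
      rw [Finset.card_insert_of_notMem (by simp <;> omega), Finset.card_insert_of_notMem (by simp <;> omega)]
      simp
    · rw [key {k - 1, k + 1, k - 2} (by
        intro j hj hR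
        simp only [Finset.mem_insert, Finset.mem_singleton]
        rcases hR with h | h | h | h | h | h | h | h | h <;> omega) (by
        intro j hj
        simp only [Finset.mem_insert, Finset.mem_singleton] at hj
        refine ⟨by omega, ?_⟩
        unfold R
        first | grind | omega)]
      rw [Finset.card_insert_of_notMem (by simp <;> omega), Finset.card_insert_of_notMem (by simp <;> omega)]
      simp
  · have : k = 0 ∨ k = n - 2 ∨ 3 ≤ k ∧ k + 3 ≤ n := by omega
    rcases this with rfl | h | h
    · rw [key {1, 2, n - 2, n - 1} (by
        intro j hj hR
        simp only [Finset.mem_insert, Finset.mem_singleton]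
        rcases hR with h | h | h | h | h | h | h | h | h <;> omega) (by
        intro j hj
        simp only [Finset.mem_insert, Finset.mem_singleton] at hj
        refine ⟨by omega, ?_⟩
        unfold R
        first | grind | omega)]
      rw [Finset.card_insert_of_notMem (by simp <;> omega), Finset.card_insert_of_notMem (by simp <;> omega),
        Finset.card_insert_of_notMem (by simp <;> omega)]
      simp
    · rw [key {0, 2, n - 3, n - 1} (by
        intro j hj hR
        simp only [Finset.mem_insert, Finset.mem_singleton]
        rcases hR with h | h | h | h | h | h | h | h | h <;> omega) (by
        intro j hj
        simp only [Finset.mem_insert, Finset.mem_singleton] at hj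
        refine ⟨by omega, ?_⟩
        unfold R
        first | grind | omega)]
      rw [Finset.card_insert_of_notMem (by simp <;> omega), Finset.card_insert_of_notMem (by simp <;> omega),
        Finset.card_insert_of_notMem (by simp <;> omega)]
      simp
    · rw [key {k - 1, k + 1, n - k, n - 1 - k} (by
        intro j hj hR
        simp only [Finset.mem_insert, Finset.mem_singleton]
        rcases hR with h | h | h | h | h | h | h | h | h <;> omega) (by
        intro j hj
        simp only [Finset.mem_insert, Finset.mem_singleton] at hj
        refine ⟨by omega, ?_⟩
        unfold R
        first | grind | omega)]
      rw [Finset.card_insert_of_notMem (by simp <;> omega), Finset.card_insert_of_notMem (by simp <;> omega),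
        Finset.card_insert_of_notMem (by simp <;> omega)]
      simp

lemma val_erase (S : Finset ℕ) (a : ℕ) (h : a ∈ S) : S.val = a ::ₘ (S.erase a).val := by
  rw [Finset.erase_val, Multiset.cons_erase (by simpa using h)]

def M (n : ℕ) : Multiset ℕ := 5 ::ₘ (Multiset.replicate (n - 5) 4 + (3 ::ₘ Multiset.replicate 3 2))

lemma dgf_map (n : ℕ) (hn : 7 ≤ n) : (Finset.range n).val.map (dgf n) = M n := by
  obtain ⟨m, t, hm, ht, hlt⟩ : ∃ m t, (2 * m = n ∨ 2 * m + 1 = n) ∧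
      (2 * t + 2 = n ∨ 2 * t = n + 1) ∧ t < n := by
    rcases Nat.even_or_odd' n with ⟨c, hc | hc⟩
    · exact ⟨c, c - 1, by omega, by omega, by omega⟩
    · exact ⟨c, c + 1, by omega, by omega, by omega⟩
  rw [val_erase _ 2 (by simp; omega), val_erase _ t (by simp; omega),
    val_erase _ 1 (by simp; omega), val_erase _ (n - 1) (by simp; omega),
    val_erase _ m (by simp; omega)]
  simp only [Multiset.map_cons]
  have hrest : (((((((Finset.range n).erase 2).erase t).erase 1).erase (n - 1)).erase m).val.map (dgf n))
      = Multiset.replicate (n - 5) 4 := by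
    rw [Multiset.eq_replicate]
    constructor
    · rw [Multiset.card_map, Finset.card_val, Finset.card_erase_of_mem (by simp; omega),
        Finset.card_erase_of_mem (by simp; omega), Finset.card_erase_of_mem (by simp; omega),
        Finset.card_erase_of_mem (by simp; omega), Finset.card_erase_of_mem (by simp; omega),
        Finset.card_range]
      omega
    · intro b hb
      obtain ⟨k, hk, rfl⟩ := Multiset.mem_map.1 hb
      simp only [Finset.mem_val, Finset.mem_erase, Finset.mem_range] at hk
      unfold dgf
      split_ifs <;> omega
  rw [hrest]
  have e1 : dgf n 2 = 5 := by simp [dgf]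
  have e2 : dgf n t = 3 := by unfold dgf; split_ifs <;> omega
  have e3 : dgf n 1 = 2 := by simp [dgf]
  have e4 : dgf n (n - 1) = 2 := by unfold dgf; split_ifs <;> omega
  have e5 : dgf n m = 2 := by unfold dgf; split_ifs <;> omega
  rw [e1, e2, e3, e4, e5]
  unfold M
  congr 1
  simp only [Multiset.replicate_succ, Multiset.replicate_zero, Multiset.add_cons, add_zero]

lemma H_deg {n : ℕ} [NeZero n] (hn : 7 ≤ n) : degreeMultiset n (H n hn) = M n := by
  rw [degreeMultiset_eq, ← dgf_map n hn]
  symm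
  have hu : (Finset.univ : Finset (ZMod n)).val =
      (Finset.range n).val.map (fun k : ℕ => (0 : ZMod n) + (k : ZMod n)) := by
    have : (Finset.univ : Finset (ZMod n)) = (Finset.range n).image (fun k : ℕ => (0 : ZMod n) + (k : ZMod n)) := by
      ext w
      obtain ⟨j, hj, rfl⟩ := exists_pos 0 w
      simp only [Finset.mem_univ, Finset.mem_image, Finset.mem_range, true_iff]
      exact ⟨j, hj, rfl⟩
    rw [this]
    apply Finset.image_val_of_injOn
    intro a ha b hb h
    exact add_inj 0 (by simpa using ha) (by simpa using hb) h
  rw [hu, Multiset.map_map]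
  apply Multiset.map_congr rfl
  intro k hk
  exact (H_dg hn k (by simpa using hk)).symm

section facts
variable {n : ℕ} [NeZero n] (hn : 7 ≤ n) {G : SimpleGraph (ZMod n)} (hG : degreeMultiset n G = M n)
include hn hG

lemma f_sum : ∑ v, dg G v = 4 * n - 6 := by
  rw [degreeMultiset_eq] at hG
  have : ∑ v, dg G v = (M n).sum := by rw [← hG]; rfl
  rw [this]
  simp [M]
  omega

lemma f_le (v : ZMod n) : dg G v ≤ 5 := by
  rw [degreeMultiset_eq] at hG
  have : dg G v ∈ M n := by
    rw [← hG]
    exact Multiset.mem_map_of_mem _ (Finset.mem_univ _)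
  simp only [M, Multiset.mem_cons, Multiset.mem_add, Multiset.mem_replicate] at this
  omega

lemma f_count (a : ℕ) : (Finset.univ.filter (fun v => dg G v = a)).card = (M n).count a := by
  rw [degreeMultiset_eq] at hG
  rw [← hG, Multiset.count_map]
  simp only [eq_comm (a := a)]
  rfl

lemma f_d2 : D2 G := by
  intro x a b c d hab hbc hcd hd ha hb hc' hd'
  have h := f_count hn hG 2
  have hM : (M n).count 2 = 3 := by simp [M, Multiset.count_replicate]
  have hsub : ({a, b, c, d} : Finset ℕ).image (fun k : ℕ => x + (k : ZMod n)) ⊆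
      Finset.univ.filter (fun v => dg G v = 2) := by
    intro w hw
    simp only [Finset.mem_image, Finset.mem_insert, Finset.mem_singleton] at hw
    obtain ⟨k, hk, rfl⟩ := hw
    rcases hk with rfl | rfl | rfl | rfl <;> simpa
  have h2 := Finset.card_le_card hsub
  rw [Finset.card_image_of_injOn] at h2
  · rw [Finset.card_insert_of_notMem (by simp <;> omega), Finset.card_insert_of_notMem (by simp <;> omega),
      Finset.card_insert_of_notMem (by simp <;> omega), Finset.card_singleton] at h2
    omega
  · intro k hk l hl h
    simp only [Finset.coe_insert, Finset.coe_singleton, Set.mem_insert_iff, Set.mem_singleton_iff] at hk hl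
    exact add_inj x (by omega) (by omega) h

lemma f_one (m : ℕ) (hM : (M n).count m = 1) (x : ZMod n) (a b : ℕ) (hab : a < b) (hb : b < n)
    (h1 : dg G (x + a) = m) (h2 : dg G (x + b) = m) : False := by
  have h := f_count hn hG m
  rw [hM, Finset.card_eq_one] at h
  obtain ⟨w, hw⟩ := h
  have e1 : x + (a : ZMod n) ∈ ({w} : Finset (ZMod n)) := by rw [← hw]; simpa
  have e2 : x + (b : ZMod n) ∈ ({w} : Finset (ZMod n)) := by rw [← hw]; simpa
  rw [Finset.mem_singleton] at e1 e2
  have := add_inj x (by omega) hb (e1.trans e2.symm)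
  omega

lemma f_ears : ∃ (e : ZMod n) (p q : ℕ), 0 < p ∧ p < q ∧ q < n ∧ dg G (e + (0 : ℕ)) = 2 ∧
      dg G (e + p) = 2 ∧ dg G (e + q) = 2 := by
  have h := f_count hn hG 2
  have hM : (M n).count 2 = 3 := by simp [M, Multiset.count_replicate]
  rw [hM, Finset.card_eq_three] at h
  obtain ⟨u, v, w, huv, huw, hvw, hS⟩ := h
  have mem : ∀ y ∈ ({u, v, w} : Finset (ZMod n)), dg G y = 2 := by
    intro y hy
    rw [← hS] at hy
    simpa using hy
  have mu := mem u (by simp)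
  have mv := mem v (by simp)
  have mw := mem w (by simp)
  obtain ⟨p, hp, rfl⟩ := exists_pos u v
  obtain ⟨q, hq, rfl⟩ := exists_pos u w
  have p0 : p ≠ 0 := by rintro rfl; simp at huv
  have q0 : q ≠ 0 := by rintro rfl; simp at huw
  have pq : p ≠ q := by rintro rfl; simp at hvw
  rcases lt_or_gt_of_ne pq with h | h
  · exact ⟨u, p, q, by omega, h, hq, by simpa using mu, mv, mw⟩
  · exact ⟨u, q, p, by omega, h, hp, by simpa using mu, mw, mv⟩
end facts

lemma outer_cyc {n : ℕ} {G : SimpleGraph (ZMod n)} (h : IsOuterplane n G) : Cyc G := by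
  obtain ⟨S, _, hS⟩ := h
  intro v
  have : s(v, v + 1) ∈ G.edgeSet := by
    rw [hS]
    exact Or.inl ⟨v, rfl⟩
  exact this

lemma not_cyc {n : ℕ} [NeZero n] (x : ZMod n) {i j : ℕ} (hij : i + 2 ≤ j) (hj : j < n)
    (h0 : 0 < i ∨ j + 1 < n) : ¬ IsCycleEdge n s(x + (i : ZMod n), x + (j : ZMod n)) := by
  rintro ⟨v, hv⟩
  rw [Sym2.eq_iff] at hv
  rcases hv with ⟨rfl, h⟩ | ⟨h, rfl⟩
  · have : x + (j : ZMod n) = x + ((i + 1 : ℕ) : ZMod n) := by rw [h]; push_cast; ring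
    have := add_inj x hj (by omega) this
    omega
  · rcases Nat.lt_or_ge (j + 1) n with hlt | hge
    · have : x + (i : ZMod n) = x + ((j + 1 : ℕ) : ZMod n) := by rw [h]; push_cast; ring
      have := add_inj x (by omega) hlt this
      omega
    · have hjn : j + 1 = n := by omega
      have : x + (i : ZMod n) = x + ((0 : ℕ) : ZMod n) := by
        have e : ((j : ZMod n) + 1) = 0 := by
          have : ((j + 1 : ℕ) : ZMod n) = 0 := by rw [hjn]; simp
          simpa using this
        rw [h, add_assoc, e]; simp
      have := add_inj x (by omega) (by omega) this
      omega

lemma outer_nc {n : ℕ} [NeZero n] {G : SimpleGraph (ZMod n)} (h : IsOuterplane n G) : NC G := by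
  obtain ⟨S, hN, hS⟩ := h
  intro x i k j l hik hkj hjl hl h1 h2
  have m1 : s(x + (i : ZMod n), x + (j : ZMod n)) ∈ S := by
    have : s(x + (i : ZMod n), x + (j : ZMod n)) ∈ G.edgeSet := h1
    rw [hS] at this
    exact this.resolve_left (not_cyc x (by omega) (by omega) (by omega))
  have m2 : s(x + (k : ZMod n), x + (l : ZMod n)) ∈ S := by
    have : s(x + (k : ZMod n), x + (l : ZMod n)) ∈ G.edgeSet := h2
    rw [hS] at this
    exact this.resolve_left (not_cyc x (by omega) (by omega) (by omega))
  have hv : ∀ a b : ℕ, a < n → b < n → ((x + (b : ZMod n)) - (x + (a : ZMod n))).val =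
      if a ≤ b then b - a else b + n - a := by
    intro a b ha hb
    rw [add_sub_add_left_eq_sub, val_sub', ZMod.val_natCast_of_lt ha, ZMod.val_natCast_of_lt hb]
  refine hN.2 _ m1 _ m2 ?_ ?_
  · intro h
    rw [Sym2.eq_iff] at h
    rcases h with ⟨h, _⟩ | ⟨h, _⟩
    · have := add_inj x (by omega) (by omega) h
      omega
    · have := add_inj x (by omega) (by omega) h
      omega
  · have b1 : Between n (x + i) (x + j) (x + k) := by
      unfold Between
      rw [hv i k (by omega) (by omega), hv i j (by omega) (by omega)]
      split_ifs <;> omega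
    have b2 : ¬ Between n (x + i) (x + j) (x + l) := by
      unfold Between
      rw [hv i l (by omega) (by omega), hv i j (by omega) (by omega)]
      split_ifs <;> omega
    have b3 : ¬ Between n (x + j) (x + i) (x + k) := by
      unfold Between
      rw [hv j k (by omega) (by omega), hv j i (by omega) (by omega)]
      split_ifs <;> omega
    have b4 : Between n (x + j) (x + i) (x + l) := by
      unfold Between
      rw [hv j l (by omega) (by omega), hv j i (by omega) (by omega)]
      split_ifs <;> omega
    intro a b c d hab hcd
    rw [Sym2.eq_iff] at hab hcd
    rcases hab with ⟨rfl, rfl⟩ | ⟨rfl, rfl⟩ <;> rcases hcd with ⟨rfl, rfl⟩ | ⟨rfl, rfl⟩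
    · exact Or.inl ⟨b1, b2⟩
    · exact Or.inr ⟨b1, b2⟩
    · exact Or.inr ⟨b4, b3⟩
    · exact Or.inl ⟨b4, b3⟩

lemma iso_H {n : ℕ} [NeZero n] (hn : 7 ≤ n) {G : SimpleGraph (ZMod n)} (ho : IsOuterplane n G)
    (hG : degreeMultiset n G = M n) : Nonempty (H n hn ≃g G) := by
  have hc := outer_cyc ho
  have hnc := outer_nc ho
  have hs := f_sum hn hG
  have ha := apx_of (by omega) hc hnc hs
  obtain ⟨x, h1, h2, h3⟩ := center_exists hn hc ha hnc (f_d2 hn hG)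
    (f_one hn hG 3 (by simp [M, Multiset.count_replicate])) (f_ears hn hG)
  refine iso_of_center hn hc ha ((f_sum hn (H_deg hn)).trans hs.symm)
    (f_one hn hG 5 (by simp [M, Multiset.count_replicate])) (f_le hn hG) (x + (2 : ℕ)) ?_ ?_ ?_
  · exact shift_adj x 2 2 4 0 2 h2 (by omega) (by omega)
  · exact shift_adj x 2 2 0 0 (n - 2) h1.symm (by omega) (by omega)
  · exact shift_adj x 2 4 0 2 (n - 2) h3.symm (by omega) (by omega)

end C1

/-- Type C1 of the paper's Theorem 2: for `n ≥ 7`, the multiset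
`{5, 4^(n-5), 3, 2^3}` is outerplane-unigraphic. -/
theorem unigraphic_C1 (n : ℕ) (hn : 7 ≤ n) :
    OuterplaneUnigraphic n
      (5 ::ₘ (Multiset.replicate (n - 5) 4 + (3 ::ₘ Multiset.replicate 3 2))) := by
  haveI : NeZero n := ⟨by omega⟩
  refine ⟨⟨C1.H n hn, C1.H_outer hn, C1.H_deg hn⟩, ?_⟩
  intro G G' hG hG' hM hM'
  obtain ⟨φ⟩ := C1.iso_H hn hG hM
  obtain ⟨ψ⟩ := C1.iso_H hn hG' hM'
  exact ⟨φ.symm.trans ψ⟩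
end

section
/- Let p ≥ 12 be an integer divisible by 4 and set n = p−1. Then the multiset {(p/4 + 2)^4, 3^(p−8), 2^3} is outerplane-unigraphic: there exists an outerplane graph on n vertices with this degree multiset, and any two outerplane graphs on n vertices with this degree multiset are isomorphic. (Type D1 of the paper's Theorem 2, corresponding to the polytope degree sequence p−1, (p/4+3)^4, 4^(p−8), 3^3.) -/
open Classical in
/-- degree in a linear relation -/
noncomputable def dL (n : ℕ) (L : ℕ → ℕ → Prop) (i : ℕ) : ℕ :=
  ((Finset.range n).filter (fun j => L i j)).card

structure LSys (n m : ℕ) (L : ℕ → ℕ → Prop) : Prop where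
  symm : ∀ a b, L a b → L b a
  lt : ∀ a b, L a b → a < n
  gap : ∀ a b, L a b → a < b → a + 2 ≤ b
  gapo : ¬ L 0 (n - 1)
  irr : ∀ a, ¬ L a a
  nc : ∀ a b c d, L a b → L c d → a < c → c < b → b < d → False
  deg : ∀ i < n, dL n L i = m ∨ dL n L i = 1 ∨ dL n L i = 0
  cm : ((Finset.range n).filter (fun i => dL n L i = m)).card = 4
  c1 : ((Finset.range n).filter (fun i => dL n L i = 1)).card = 4 * m - 8
  c0 : ((Finset.range n).filter (fun i => dL n L i = 0)).card = 3

namespace LSys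
variable {n m : ℕ} {L : ℕ → ℕ → Prop}

theorem lt2 (h : LSys n m L) {a b : ℕ} (hab : L a b) : b < n := h.lt _ _ (h.symm _ _ hab)

theorem inner (h : LSys n m L) : ∀ k a b : ℕ, b - a ≤ k → a < b → L a b →
    ∃ v, a < v ∧ v < b ∧ ∀ w, ¬ L v w := by
  intro k
  induction k with
  | zero => intro a b h1 h2; omega
  | succ k ih =>
    intro a b h1 h2 hab
    have g := h.gap a b hab h2
    by_cases hz : ∀ w, ¬ L (a+1) w
    · exact ⟨a+1, by omega, by omega, hz⟩
    · push Not at hz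
      obtain ⟨w, hw⟩ := hz
      have hw' := h.symm _ _ hw
      have w1 : a ≤ w := by
        by_contra hc
        exact h.nc w (a+1) a b hw' hab (by omega) (by omega) (by omega)
      have w2 : w ≤ b := by
        by_contra hc
        exact h.nc a b (a+1) w hab hw (by omega) (by omega) (by omega)
      have w3 : w ≠ a := by
        rintro rfl
        have := h.gap _ _ hw' (by omega)
        omega
      have w4 : w ≠ a + 1 := by
        rintro rfl
        exact h.irr _ hw
      obtain ⟨v, v1, v2, v3⟩ := ih (a+1) w (by omega) (by omega) hw
      exact ⟨v, by omega, by omega, v3⟩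

theorem inn (h : LSys n m L) {a b : ℕ} (hlt : a < b) (hab : L a b) :
    ∃ v, a < v ∧ v < b ∧ ∀ w, ¬ L v w := h.inner _ a b le_rfl hlt hab

theorem outer (h : LSys n m L) : ∀ k a b : ℕ, a + (n - b) ≤ k → a < b → L a b →
    ∃ v, v < n ∧ (v < a ∨ b < v) ∧ ∀ w, ¬ L v w := by
  intro k
  induction k with
  | zero => 
    intro a b h1 h2 hab
    have := h.lt2 hab
    omega
  | succ k ih =>
    intro a b h1 h2 hab
    have hb := h.lt2 hab
    by_cases hbn : b + 1 < n
    · by_cases hz : ∀ w, ¬ L (b+1) w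
      · exact ⟨b+1, by omega, by omega, hz⟩
      · push Not at hz
        obtain ⟨w, hw⟩ := hz
        have hw' := h.symm _ _ hw
        have w1 : ¬ (a < w ∧ w < b) := by
          rintro ⟨q1, q2⟩
          exact h.nc a b w (b+1) hab hw' (by omega) (by omega) (by omega)
        have w3 : w ≠ b := by
          rintro rfl
          have := h.gap _ _ hw' (by omega)
          omega
        have w4 : w ≠ b + 1 := by
          rintro rfl
          exact h.irr _ hw
        by_cases hc : w ≤ a
        · obtain ⟨v, v1, v2, v3⟩ := ih w (b+1) (by omega) (by omega) hw'
          exact ⟨v, v1, by omega, v3⟩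
        · obtain ⟨v, v1, v2, v3⟩ := h.inn (a := b+1) (b := w) (by omega) hw
          exact ⟨v, by have := h.lt2 hw; omega, by omega, v3⟩
    · have hbe : b = n - 1 := by omega
      have ha : a ≠ 0 := by
        rintro rfl
        exact h.gapo (hbe ▸ hab)
      by_cases hz : ∀ w, ¬ L 0 w
      · exact ⟨0, by omega, by omega, hz⟩
      · push Not at hz
        obtain ⟨w, hw⟩ := hz
        have hwn := h.lt2 hw
        have w1 : w ≠ n - 1 := by
          rintro rfl
          exact h.gapo hw
        have w2 : w ≤ a := by
          by_contra hc
          exact h.nc 0 w a b hw hab (by omega) (by omega) (by omega)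
        have w4 : w ≠ 0 := by
          rintro rfl
          exact h.irr _ hw
        obtain ⟨v, v1, v2, v3⟩ := h.inn (a := 0) (b := w) (by omega) hw
        exact ⟨v, by omega, by omega, v3⟩

theorem out (h : LSys n m L) {a b : ℕ} (hlt : a < b) (hab : L a b) :
    ∃ v, v < n ∧ (v < a ∨ b < v) ∧ ∀ w, ¬ L v w := h.outer _ a b le_rfl hlt hab

theorem dL_zero (h : LSys n m L) (i : ℕ) : dL n L i = 0 ↔ ∀ w, ¬ L i w := by
  classical
  unfold dL
  rw [Finset.card_eq_zero, Finset.filter_eq_empty_iff]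
  constructor
  · intro h1 w hw
    exact h1 (Finset.mem_range.2 (h.lt2 hw)) hw
  · intro h1 w _
    exact h1 w

theorem no4 (h : LSys n m L) {a b c d : ℕ} (ha : a < n) (hb : b < n) (hc : c < n) (hd : d < n)
    (hab : a < b) (hbc : b < c) (hcd : c < d)
    (za : ∀ w, ¬ L a w) (zb : ∀ w, ¬ L b w) (zc : ∀ w, ¬ L c w) (zd : ∀ w, ¬ L d w) : False := by
  have : ({a, b, c, d} : Finset ℕ) ⊆ (Finset.range n).filter (fun i => dL n L i = 0) := by
    intro x hx
    simp only [Finset.mem_insert, Finset.mem_singleton] at hx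
    rw [Finset.mem_filter, Finset.mem_range, h.dL_zero]
    rcases hx with rfl | rfl | rfl | rfl <;> exact ⟨by assumption, by assumption⟩
  have h2 := Finset.card_le_card this
  rw [h.c0] at h2
  have : ({a, b, c, d} : Finset ℕ).card = 4 := by
    rw [Finset.card_insert_of_notMem, Finset.card_insert_of_notMem, Finset.card_insert_of_notMem,
      Finset.card_singleton] <;> simp <;> omega
  omega

theorem no4sides (h : LSys n m L) {a b c d : ℕ}
    (hab : a < b) (hbc : b < c) (hcd : c < d)
    (h1 : L a b) (h2 : L b c) (h3 : L c d) (h4 : L a d) : False := by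
  obtain ⟨v1, p1, q1, z1⟩ := h.inn hab h1
  obtain ⟨v2, p2, q2, z2⟩ := h.inn hbc h2
  obtain ⟨v3, p3, q3, z3⟩ := h.inn hcd h3
  obtain ⟨v4, p4, q4, z4⟩ := h.out (by omega) h4
  have := h.lt2 h4
  rcases q4 with q4 | q4
  · exact h.no4 (a := v4) (b := v1) (c := v2) (d := v3) (by omega) (by omega) (by omega) (by omega)
      (by omega) (by omega) (by omega) z4 z1 z2 z3
  · exact h.no4 (a := v1) (b := v2) (c := v3) (d := v4) (by omega) (by omega) (by omega) (by omega)
      (by omega) (by omega) (by omega) z1 z2 z3 z4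

open Classical in
theorem count (h : LSys n m L) (hm : 3 ≤ m) (B : Finset ℕ)
    (hB : B = (Finset.range n).filter (fun i => dL n L i = m)) :
    ∑ b ∈ B, (B.filter (fun j => L b j)).card +
      ∑ v ∈ Finset.range n \ B, (B.filter (fun j => L v j)).card = 4 * m ∧
    ∑ v ∈ Finset.range n \ B, dL n L v = 4 * m - 8 ∧
    ∀ v, (B.filter (fun j => L v j)).card ≤ dL n L v := by
  have hsub : B ⊆ Finset.range n := by rw [hB]; exact Finset.filter_subset _ _
  refine ⟨?_, ?_, ?_⟩
  · have e1 : ∑ b ∈ B, dL n L b = 4 * m := by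
      rw [Finset.sum_congr rfl (g := fun _ => m)]
      · rw [Finset.sum_const, hB, h.cm, smul_eq_mul]
      · intro x hx
        rw [hB, Finset.mem_filter] at hx
        exact hx.2
    have e2 : ∑ v ∈ Finset.range n \ B, (B.filter (fun j => L v j)).card =
        ∑ b ∈ B, ((Finset.range n \ B).filter (fun j => L b j)).card := by
      simp only [Finset.card_filter]
      rw [Finset.sum_comm]
      refine Finset.sum_congr rfl fun b _ => Finset.sum_congr rfl fun v _ => ?_
      have : L v b ↔ L b v := ⟨h.symm _ _, h.symm _ _⟩
      simp [this]
    rw [e2, ← Finset.sum_add_distrib, ← e1]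
    refine Finset.sum_congr rfl fun b _ => ?_
    unfold dL
    rw [← Finset.card_union_of_disjoint, ← Finset.filter_union, Finset.union_sdiff_of_subset hsub]
    exact Finset.disjoint_filter_filter Finset.disjoint_sdiff
  · rw [← h.c1, Finset.card_filter]
    rw [← Finset.sum_sdiff hsub]
    have : ∑ x ∈ B, (if dL n L x = 1 then 1 else 0) = 0 := by
      refine Finset.sum_eq_zero fun x hx => ?_
      rw [hB, Finset.mem_filter] at hx
      rw [if_neg]; omega
    rw [this, add_zero]
    refine Finset.sum_congr rfl fun x hx => ?_
    rw [hB, Finset.mem_sdiff, Finset.mem_filter, Finset.mem_range] at hx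
    have := h.deg x hx.1
    split_ifs with q
    · exact q
    · tauto
  · intro v
    exact Finset.card_le_card (Finset.filter_subset_filter _ hsub)

open Classical in
theorem four (B : Finset ℕ) (hB : B.card = 4) : ∃ a b c d : ℕ, a < b ∧ b < c ∧ c < d ∧
    B = {a, b, c, d} := by
  let f := B.orderEmbOfFin hB
  refine ⟨f 0, f 1, f 2, f 3, f.strictMono (by decide), f.strictMono (by decide),
    f.strictMono (by decide), ?_⟩
  have : (B : Set ℕ) = Set.range f := (Finset.range_orderEmbOfFin B hB).symm
  ext x
  rw [← Finset.mem_coe, this]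
  simp only [Set.mem_range, Fin.exists_fin_succ, Finset.mem_insert, Finset.mem_singleton]
  simp [eq_comm]

open Classical in
theorem sumB (h : LSys n m L) {a b c d : ℕ} (hab : a < b) (hbc : b < c) (hcd : c < d) :
    ∑ x ∈ ({a, b, c, d} : Finset ℕ), ((({a, b, c, d} : Finset ℕ)).filter (fun j => L x j)).card
    = 2 * ((if L a b then 1 else 0) + (if L a c then 1 else 0) + (if L a d then 1 else 0)
      + (if L b c then 1 else 0) + (if L b d then 1 else 0) + (if L c d then 1 else 0)) := by
  have s : ∀ x y, L x y ↔ L y x := fun x y => ⟨h.symm _ _, h.symm _ _⟩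
  have n1 : a ≠ b := by omega
  have n2 : a ≠ c := by omega
  have n3 : a ≠ d := by omega
  have n4 : b ≠ c := by omega
  have n5 : b ≠ d := by omega
  have n6 : c ≠ d := by omega
  have key : ∀ f : ℕ → ℕ, ∑ x ∈ ({a, b, c, d} : Finset ℕ), f x = f a + f b + f c + f d := by
    intro f
    rw [Finset.sum_insert (by simp [n1, n2, n3]), Finset.sum_insert (by simp [n4, n5]),
      Finset.sum_insert (by simp [n6]), Finset.sum_singleton]
    ring
  simp only [Finset.card_filter, key]
  simp only [h.irr, s b a, s c a, s d a, s c b, s d b, s d c, if_false]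
  ring

theorem exConfig (h : LSys n m L) (hm : 3 ≤ m) : ∃ a b c d : ℕ, a < b ∧ b < c ∧ c < d ∧ d < n ∧
    (∀ v, v < n → dL n L v = m → v = a ∨ v = b ∨ v = c ∨ v = d) ∧
    ((L a c ∧ ¬ L b d) ∨ (L b d ∧ ¬ L a c)) ∧ 
    ((L a b ∧ L b c ∧ L c d) ∨ (L b c ∧ L c d ∧ L a d) ∨ (L c d ∧ L a d ∧ L a b) ∨
      (L a d ∧ L a b ∧ L b c)) := by
  classical
  obtain ⟨a, b, c, d, hab, hbc, hcd, hB⟩ := four _ h.cm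
  have hd : d < n := by
    have : d ∈ (Finset.range n).filter (fun i => dL n L i = m) := by rw [hB]; simp
    simp at this
    exact this.1
  refine ⟨a, b, c, d, hab, hbc, hcd, hd, ?_, ?_⟩
  · intro v hv1 hv2
    have : v ∈ (Finset.range n).filter (fun i => dL n L i = m) := by simp [hv1, hv2]
    rw [hB] at this
    simpa using this
  · obtain ⟨c1, c2, c3⟩ := h.count hm _ hB.symm
    rw [h.sumB hab hbc hcd] at c1
    have c4 := Finset.sum_le_sum (s := Finset.range n \ {a, b, c, d}) (fun v _ => c3 v)
    have k1 := h.no4sides hab hbc hcd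
    have k2 := fun p q => h.nc a c b d p q hab hbc hcd
    have k3 : 4 ≤ ((if L a b then 1 else 0) + (if L a c then 1 else 0) + (if L a d then 1 else 0)
      + (if L b c then 1 else 0) + (if L b d then 1 else 0) + (if L c d then 1 else 0)) := by omega
    clear c1 c2 c3 c4
    by_cases h1 : L a b <;> by_cases h2 : L a c <;> by_cases h3 : L a d <;> by_cases h4 : L b c <;>
     by_cases h5 : L b d <;> by_cases h6 : L c d <;> simp_all

theorem toBig (h : LSys n m L) (hm : 3 ≤ m) {x y z : ℕ} (hx : 0 < x) (hxy : x < y) (hyz : y < z)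
    (hbig : ∀ v, v < n → dL n L v = m → v = 0 ∨ v = x ∨ v = y ∨ v = z)
    (h1 : L 0 x) (h2 : L x y) (h3 : L y z) (h4 : L x z) :
    dL n L 0 = m ∧ dL n L x = m ∧ dL n L y = m ∧ dL n L z = m ∧
    (∀ v, v < n → ¬ (v = 0 ∨ v = x ∨ v = y ∨ v = z) → 
      (∀ w, ¬ L v w) ∨ ∃ u, (u = 0 ∨ u = x ∨ u = y ∨ u = z) ∧ ∀ w, L v w ↔ w = u) := by
  classical
  have hB : (Finset.range n).filter (fun i => dL n L i = m) = {0, x, y, z} := by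
    apply Finset.eq_of_subset_of_card_le
    · intro v hv
      simp at hv
      simpa using hbig v hv.1 hv.2
    · rw [h.cm]
      exact Finset.card_le_four
  have hmem : ∀ v, (v = 0 ∨ v = x ∨ v = y ∨ v = z) → dL n L v = m := by
    intro v hv
    have : v ∈ (Finset.range n).filter (fun i => dL n L i = m) := by rw [hB]; simpa using hv
    simp at this
    exact this.2
  refine ⟨hmem _ (by simp), hmem _ (by simp), hmem _ (by simp), hmem _ (by simp), ?_⟩
  obtain ⟨c1, c2, c3⟩ := h.count hm _ hB.symm
  rw [h.sumB hx hxy hyz] at c1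
  have k1 : ¬ L 0 z := fun h5 => h.no4sides hx hxy hyz h1 h2 h3 h5
  have k2 : ¬ L 0 y := fun h5 => h.nc 0 y x z h5 h4 hx hxy hyz
  simp only [h1, h2, h3, h4, k1, k2, if_true, if_false] at c1
  have c4 : ∑ v ∈ Finset.range n \ {0, x, y, z}, (({0, x, y, z} : Finset ℕ).filter (fun j => L v j)).card
     = ∑ v ∈ Finset.range n \ {0, x, y, z}, dL n L v := by rw [c2]; omega
  rw [Finset.sum_eq_sum_iff_of_le (fun v _ => c3 v)] at c4
  intro v hv hnb
  have c5 := c4 v (by simp; tauto)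
  rcases h.deg v hv with q | q | q
  · exact absurd (hbig v hv q) hnb
  · right
    have c6 := q
    rw [q] at c5
    unfold dL at q
    obtain ⟨u, hu⟩ := Finset.card_eq_one.1 c5
    obtain ⟨u', hu'⟩ := Finset.card_eq_one.1 q
    have t1 : u ∈ (({0, x, y, z} : Finset ℕ).filter (fun j => L v j)) := by rw [hu]; simp
    simp only [Finset.mem_filter, Finset.mem_insert, Finset.mem_singleton] at t1
    have t2 : u ∈ ((Finset.range n).filter (fun j => L v j)) := by
      simp [h.lt2 t1.2, t1.2]
    rw [hu'] at t2
    simp at t2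
    subst t2
    refine ⟨u, t1.1, fun w => ⟨fun hw => ?_, fun hw => hw ▸ t1.2⟩⟩
    have : w ∈ ((Finset.range n).filter (fun j => L v j)) := by
      simp [h.lt2 hw, hw]
    rw [hu'] at this
    simpa using this
  · left
    exact (h.dL_zero v).1 q

theorem arc (h : LSys n m L) {p q t : ℕ} (h1 : p < t) (h2 : t < q)
    (hu : ∀ v, p < v → v < q → (∀ w, ¬ L v w) → v = t)
    (hn : ∀ v, p < v → v < q → v ≠ t → L v p ∨ L v q) :
    (t = p + 1 ∧ ∀ v, p + 1 < v → v < q → L v p) ∨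
    (t + 1 = q ∧ ∀ v, p < v → v + 1 < q → L v q) := by
  have a1 : ∀ v, p < v → v < t → L v q := by
    intro v v1 v2
    rcases hn v v1 (by omega) (by omega) with r | r
    · obtain ⟨s, s1, s2, s3⟩ := h.inn v1 (h.symm _ _ r)
      have := hu s (by omega) (by omega) s3
      omega
    · exact r
  have a2 : ∀ v, t < v → v < q → L v p := by
    intro v v1 v2
    rcases hn v (by omega) (by omega) (by omega) with r | r
    · exact r
    · obtain ⟨s, s1, s2, s3⟩ := h.inn v2 r
      have := hu s (by omega) (by omega) s3
      omega
  by_cases ht : t = p + 1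
  · left
    refine ⟨ht, fun v v1 v2 => a2 v (by omega) v2⟩
  · right
    have : t + 1 = q := by
      by_contra hc
      exact h.nc p (t+1) (p+1) q (h.symm _ _ (a2 (t+1) (by omega) (by omega)))
        (a1 (p+1) (by omega) (by omega)) (by omega) (by omega) (by omega)
    exact ⟨this, fun v v1 v2 => a1 v (by omega) (by omega)⟩

theorem dle {i : ℕ} (T : Finset ℕ) (hT : ∀ w, L i w → w ∈ T) : dL n L i ≤ T.card := by
  classical
  unfold dL
  refine Finset.card_le_card fun w hw => ?_
  rw [Finset.mem_filter] at hw
  exact hT w hw.2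

theorem deq (h : LSys n m L) {i : ℕ} (T : Finset ℕ) (hT : ∀ w, L i w ↔ w ∈ T) :
    dL n L i = T.card := by
  classical
  unfold dL
  congr 1
  ext w
  rw [Finset.mem_filter, ← hT, Finset.mem_range]
  exact ⟨fun q => q.2, fun q => ⟨h.lt2 q, q⟩⟩

end LSys

def EH (m i j : ℕ) : Prop :=
  (i = 0 ∧ 2 ≤ j ∧ j ≤ m + 1) ∨
  (i = m + 1 ∧ (j = 2 * m + 1 ∨ (3 * m + 1 ≤ j ∧ j + 2 ≤ 4 * m))) ∨
  (i = 2 * m + 1 ∧ ((m + 2 ≤ j ∧ j + 1 ≤ 2 * m) ∨ j = 3 * m + 1)) ∨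
  (i = 3 * m + 1 ∧ 2 * m + 2 ≤ j ∧ j + 1 ≤ 3 * m)

def EE (m i j : ℕ) : Prop := EH m i j ∨ EH m j i

theorem EE0 {m j : ℕ} (hm : 3 ≤ m) : EE m 0 j ↔ 2 ≤ j ∧ j ≤ m + 1 := by
  unfold EE EH; omega

theorem EEx {m j : ℕ} (hm : 3 ≤ m) (hj : j + 2 ≤ 4 * m) :
    EE m (m + 1) j ↔ j = 0 ∨ j = 2 * m + 1 ∨ 3 * m + 1 ≤ j := by
  unfold EE EH; omega

theorem EEy {m j : ℕ} (hm : 3 ≤ m) :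
    EE m (2 * m + 1) j ↔ j = 3 * m + 1 ∨ (m + 1 ≤ j ∧ j ≤ 2 * m + 1 - 2) := by
  unfold EE EH; omega

theorem EEz {m j : ℕ} (hm : 3 ≤ m) :
    EE m (3 * m + 1) j ↔ j = m + 1 ∨ (2 * m + 1 ≤ j ∧ j ≤ 3 * m + 1 - 2) := by
  unfold EE EH; omega

theorem EEno {m i j : ℕ} (h1 : ¬ (i = 0 ∨ i = m + 1 ∨ i = 2 * m + 1 ∨ i = 3 * m + 1))
    (h2 : ¬ (j = 0 ∨ j = m + 1 ∨ j = 2 * m + 1 ∨ j = 3 * m + 1)) : ¬ EE m i j := by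
  unfold EE EH; omega

set_option maxHeartbeats 1000000 in
theorem LSys.final {n m : ℕ} {L : ℕ → ℕ → Prop}
    (h : LSys n m L) (hm : 3 ≤ m) (hnm : n + 1 = 4 * m)
    {x y z : ℕ} (hx : 0 < x) (hxy : x < y) (hyz : y < z)
    (hz : z < n) (hbig : ∀ v, v < n → dL n L v = m → v = 0 ∨ v = x ∨ v = y ∨ v = z)
    (h1 : L 0 x) (h2 : L x y) (h3 : L y z) (h4 : L x z) :
    ∀ i j, i < n → j < n → (L i j ↔ EE m i j) := by
  obtain ⟨d0, dx, dy, dz, hv⟩ := h.toBig hm hx hxy hyz hbig h1 h2 h3 h4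
  have k1 : ¬ L 0 z := fun h5 => h.no4sides hx hxy hyz h1 h2 h3 h5
  have k2 : ¬ L 0 y := fun h5 => h.nc 0 y x z h5 h4 hx hxy hyz
  obtain ⟨t1, p1, q1, z1⟩ := h.inn hx h1
  obtain ⟨t2, p2, q2, z2⟩ := h.inn hxy h2
  obtain ⟨t3, p3, q3, z3⟩ := h.inn hyz h3
  have zu : ∀ v, v < n → (∀ w, ¬ L v w) → v = t1 ∨ v = t2 ∨ v = t3 := by
    intro v v1 v2
    by_contra hc
    push Not at hc
    by_cases c1 : v < t1
    · exact h.no4 (a := v) (b := t1) (c := t2) (d := t3) (by omega) (by omega) (by omega)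
        (by omega) (by omega) (by omega) (by omega) v2 z1 z2 z3
    · by_cases c2 : v < t2
      · exact h.no4 (a := t1) (b := v) (c := t2) (d := t3) (by omega) (by omega) (by omega)
          (by omega) (by omega) (by omega) (by omega) z1 v2 z2 z3
      · by_cases c3 : v < t3
        · exact h.no4 (a := t1) (b := t2) (c := v) (d := t3) (by omega) (by omega) (by omega)
            (by omega) (by omega) (by omega) (by omega) z1 z2 v2 z3
        · exact h.no4 (a := t1) (b := t2) (c := t3) (d := v) (by omega) (by omega) (by omega)
            (by omega) (by omega) (by omega) (by omega) z1 z2 z3 v2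
  have uniq : ∀ v u w, v < n → v ≠ 0 → v ≠ x → v ≠ y → v ≠ z → L v u → L v w → w = u := by
    intro v u w v1 n1 n2 n3 n4 l1 l2
    rcases hv v v1 (by tauto) with r | ⟨u', _, hu⟩
    · exact absurd l1 (r u)
    · rw [(hu u).1 l1, (hu w).1 l2]
  have ex : ∀ v, v < n → v ≠ 0 → v ≠ x → v ≠ y → v ≠ z → v ≠ t1 → v ≠ t2 → v ≠ t3 →
      L v 0 ∨ L v x ∨ L v y ∨ L v z := by
    intro v v1 n1 n2 n3 n4 m1 m2 m3
    rcases hv v v1 (by tauto) with r | ⟨u', hu', hu⟩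
    · have := zu v v1 r
      tauto
    · have := (hu u').2 rfl
      rcases hu' with rfl | rfl | rfl | rfl <;> tauto
  -- last arc
  have A4 : ∀ v, z < v → v < n → L v x := by
    intro v v1 v2
    rcases ex v v2 (by omega) (by omega) (by omega) (by omega) (by omega) (by omega) (by omega)
      with r | r | r | r
    · obtain ⟨s, s1, s2, s3⟩ := h.out (a := 0) (b := v) (by omega) (h.symm _ _ r)
      have := zu s s1 s3
      omega
    · exact r
    · exact (h.nc x z y v h4 (h.symm _ _ r) (by omega) (by omega) (by omega)).elim
    · obtain ⟨s, s1, s2, s3⟩ := h.inn (a := z) (b := v) (by omega) (h.symm _ _ r)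
      have := zu s (by omega) s3
      omega
  have A1 := h.arc p1 q1 (fun v v1 v2 v3 => by have := zu v (by omega) v3; omega)
    (fun v v1 v2 v3 => by
      rcases ex v (by omega) (by omega) (by omega) (by omega) (by omega) (by omega) (by omega)
        (by omega) with r | r | r | r
      · exact Or.inl r
      · exact Or.inr r
      · exact (h.nc 0 x v y h1 r (by omega) (by omega) (by omega)).elim
      · exact (h.nc 0 x v z h1 r (by omega) (by omega) (by omega)).elim)
  have A2 := h.arc p2 q2 (fun v v1 v2 v3 => by have := zu v (by omega) v3; omega)
    (fun v v1 v2 v3 => by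
      rcases ex v (by omega) (by omega) (by omega) (by omega) (by omega) (by omega) (by omega)
        (by omega) with r | r | r | r
      · exact (h.nc 0 v x y (h.symm _ _ r) h2 (by omega) (by omega) (by omega)).elim
      · exact Or.inl r
      · exact Or.inr r
      · exact (h.nc x y v z h2 r (by omega) (by omega) (by omega)).elim)
  have A3 := h.arc p3 q3 (fun v v1 v2 v3 => by have := zu v (by omega) v3; omega)
    (fun v v1 v2 v3 => by
      rcases ex v (by omega) (by omega) (by omega) (by omega) (by omega) (by omega) (by omega)
        (by omega) with r | r | r | r
      · exact (h.nc 0 v y z (h.symm _ _ r) h3 (by omega) (by omega) (by omega)).elim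
      · exact (h.nc x v y z (h.symm _ _ r) h3 (by omega) (by omega) (by omega)).elim
      · exact Or.inl r
      · exact Or.inr r)
  -- coarse neighbourhoods
  have N4 : ∀ v w, z < v → L v w → w = x := fun v w v1 l =>
    uniq v x w (h.lt _ _ l) (by omega) (by omega) (by omega) (by omega) (A4 v v1 (h.lt _ _ l)) l
  have N0 : ∀ w, L 0 w → 0 < w ∧ w ≤ x := by
    intro w hw
    have c0 : w ≠ 0 := by rintro rfl; exact h.irr _ hw
    have c1 : w ≠ y := by rintro rfl; exact k2 hw
    have c2 : w ≠ z := by rintro rfl; exact k1 hw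
    have c3 : ¬ z < w := fun q => by have := N4 w 0 q (h.symm _ _ hw); omega
    refine ⟨by omega, ?_⟩
    by_contra q
    exact h.nc 0 w x z hw h4 (by omega) (by omega) (by omega)
  have Ny : ∀ w, L y w → x ≤ w ∧ w ≤ z ∧ w ≠ y := by
    intro w hw
    have c0 : w ≠ y := by rintro rfl; exact h.irr _ hw
    have c1 : w ≠ 0 := by rintro rfl; exact k2 (h.symm _ _ hw)
    refine ⟨?_, ?_, c0⟩
    · by_contra q
      exact h.nc 0 x w y h1 (h.symm _ _ hw) (by omega) (by omega) (by omega)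
    · by_contra q
      have := N4 w y (by omega) (h.symm _ _ hw)
      omega
  have Nz : ∀ w, L z w → (w = x ∨ y ≤ w) ∧ w < z := by
    intro w hw
    have c0 : w ≠ z := by rintro rfl; exact h.irr _ hw
    have c1 : w ≠ 0 := by rintro rfl; exact k1 (h.symm _ _ hw)
    refine ⟨?_, ?_⟩
    · by_contra q
      by_cases q1 : w < x
      · exact h.nc 0 x w z h1 (h.symm _ _ hw) (by omega) (by omega) (by omega)
      · exact h.nc x y w z h2 (h.symm _ _ hw) (by omega) (by omega) (by omega)
    · by_contra q
      have := N4 w z (by omega) (h.symm _ _ hw)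
      omega
  -- degree bounds
  have B1 : t1 = 1 ∧ ∀ v, 1 < v → v < x → L v 0 := by
    rcases A1 with r | ⟨r1, r2⟩
    · simpa using r
    · exfalso
      have := dle (n := n) (L := L) (i := 0) {x} (by
        intro w hw
        have wn := h.lt2 hw
        have hw' := h.symm _ _ hw
        have := N0 w hw
        rw [Finset.mem_singleton]
        by_contra q
        by_cases e : w = t1
        · exact z1 0 (e ▸ hw')
        · have := uniq w x 0 wn (by omega) (by omega) (by omega) (by omega) 
            (r2 w (by omega) (by omega)) hw'
          omega)
      simp at this
      omega
  clear A1
  obtain ⟨B1, B1'⟩ := B1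
  have B3 : t3 + 1 = z ∧ ∀ v, y < v → v + 1 < z → L v z := by
    rcases A3 with ⟨r1, r2⟩ | r
    · exfalso
      have := dle (n := n) (L := L) (i := z) {x, y} (by
        intro w hw
        have wn := h.lt2 hw
        have hw' := h.symm _ _ hw
        have := Nz w hw
        rw [Finset.mem_insert, Finset.mem_singleton]
        by_contra q
        by_cases e : w = t3
        · exact z3 z (e ▸ hw')
        · have := uniq w y z wn (by omega) (by omega) (by omega) (by omega) 
            (r2 w (by omega) (by omega)) hw'
          omega)
      have := Finset.card_le_two (a := x) (b := y)
      omega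
    · exact r
  clear A3
  obtain ⟨B3, B3'⟩ := B3
  have yz' : ∀ w, y < w → w < z → ¬ L y w := by
    intro w w1 w2 hw
    have hw' := h.symm _ _ hw
    by_cases e : w = t3
    · exact z3 y (e ▸ hw')
    · have := uniq w z y (by omega) (by omega) (by omega) (by omega) (by omega) 
            (B3' w (by omega) (by omega)) hw'
      omega
  have B2 : t2 + 1 = y ∧ ∀ v, x < v → v + 1 < y → L v y := by
    rcases A2 with ⟨r1, r2⟩ | r
    · exfalso
      have := dle (n := n) (L := L) (i := y) {x, z} (by
        intro w hw
        have wn := h.lt2 hw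
        have hw' := h.symm _ _ hw
        have := Ny w hw
        rw [Finset.mem_insert, Finset.mem_singleton]
        by_contra q
        by_cases e' : y < w
        · exact yz' w e' (by omega) hw
        by_cases e : w = t2
        · exact z2 y (e ▸ hw')
        · have := uniq w x y wn (by omega) (by omega) (by omega) (by omega) 
            (r2 w (by omega) (by omega)) hw'
          omega)
      have := Finset.card_le_two (a := x) (b := z)
      omega
    · exact r
  clear A2
  obtain ⟨B2, B2'⟩ := B2
  have D0 : ∀ w, L 0 w ↔ w ∈ Finset.Icc 2 x := by
    intro w
    rw [Finset.mem_Icc]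
    constructor
    · intro hw
      have := N0 w hw
      refine ⟨?_, this.2⟩
      have := h.gap 0 w hw this.1
      omega
    · rintro ⟨w1, w2⟩
      rcases Nat.lt_or_eq_of_le w2 with e | e
      · exact h.symm _ _ (B1' w (by omega) e)
      · exact e ▸ h1
  have Dy : ∀ w, L y w ↔ w ∈ insert z (Finset.Icc x (y - 2)) := by
    intro w
    rw [Finset.mem_insert, Finset.mem_Icc]
    constructor
    · intro hw
      have := Ny w hw
      by_cases e' : y < w
      · by_contra q
        exact yz' w e' (by omega) hw
      · have := h.gap w y (h.symm _ _ hw) (by omega)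
        omega
    · rintro (rfl | ⟨w1, w2⟩)
      · exact h3
      · rcases Nat.lt_or_eq_of_le w1 with e | e
        · exact h.symm _ _ (B2' w (by omega) (by omega))
        · exact e ▸ h.symm _ _ h2
  have Dz : ∀ w, L z w ↔ w ∈ insert x (Finset.Icc y (z - 2)) := by
    intro w
    rw [Finset.mem_insert, Finset.mem_Icc]
    constructor
    · intro hw
      have := Nz w hw
      have := h.gap w z (h.symm _ _ hw) (by omega)
      omega
    · rintro (rfl | ⟨w1, w2⟩)
      · exact h.symm _ _ h4
      · rcases Nat.lt_or_eq_of_le w1 with e | e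
        · exact h.symm _ _ (B3' w (by omega) (by omega))
        · exact e ▸ h.symm _ _ h3
  have E0 := h.deq _ D0
  have Ey := h.deq _ Dy
  have Ez := h.deq _ Dz
  rw [d0, Nat.card_Icc] at E0
  rw [dy, Finset.card_insert_of_notMem (by rw [Finset.mem_Icc]; omega), Nat.card_Icc] at Ey
  rw [dz, Finset.card_insert_of_notMem (by rw [Finset.mem_Icc]; omega), Nat.card_Icc] at Ez
  obtain rfl : x = m + 1 := by omega
  obtain rfl : y = 2 * m + 1 := by omega
  obtain rfl : z = 3 * m + 1 := by omega
  have Dv : ∀ v, v < n → ¬ (v = 0 ∨ v = m + 1 ∨ v = 2 * m + 1 ∨ v = 3 * m + 1) →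
      ∀ w, L v w → (w = 0 ∨ w = m + 1 ∨ w = 2 * m + 1 ∨ w = 3 * m + 1) := by
    intro v v1 v2 w hw
    rcases hv v v1 v2 with r | ⟨u', hu', hu⟩
    · exact absurd hw (r w)
    · rw [(hu w).1 hw]; exact hu'
  have Dx : ∀ w, w < n → (L (m + 1) w ↔
      w = 0 ∨ w = 2 * m + 1 ∨ (3 * m + 1 ≤ w)) := by
    intro w wn
    constructor
    · intro hw
      have hw' := h.symm _ _ hw
      by_contra q
      have c0 : w ≠ m + 1 := by rintro rfl; exact h.irr _ hw
      by_cases e1 : w < m + 1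
      · by_cases e : w = t1
        · exact z1 _ (e ▸ hw')
        · have := uniq w 0 (m+1) (by omega) (by omega) (by omega) (by omega) (by omega) 
            (B1' w (by omega) (by omega)) hw'
          omega
      by_cases e2 : w < 2 * m + 1
      · by_cases e : w = t2
        · exact z2 _ (e ▸ hw')
        · have := uniq w (2*m+1) (m+1) (by omega) (by omega) (by omega) (by omega) (by omega) 
            (B2' w (by omega) (by omega)) hw'
          omega
      · by_cases e : w = t3
        · exact z3 _ (e ▸ hw')
        · have := uniq w (3*m+1) (m+1) (by omega) (by omega) (by omega) (by omega) (by omega) 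
            (B3' w (by omega) (by omega)) hw'
          omega
    · rintro (rfl | rfl | w1)
      · exact h.symm _ _ h1
      · exact h2
      · rcases Nat.lt_or_eq_of_le w1 with e | e
        · exact h.symm _ _ (A4 w (by omega) (by omega))
        · exact e ▸ h4
  simp only [Finset.mem_insert, Finset.mem_Icc] at D0 Dy Dz
  have fwd : ∀ i j, i < n → j < n → (i = 0 ∨ i = m + 1 ∨ i = 2 * m + 1 ∨ i = 3 * m + 1) →
      (L i j ↔ EE m i j) := by
    intro i j hi hj hb
    rcases hb with rfl | rfl | rfl | rfl
    · rw [D0, EE0 hm]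
    · rw [Dx j hj, EEx hm (by omega)]
    · rw [Dy, EEy hm]
    · rw [Dz, EEz hm]
  have sy : ∀ i j, L i j ↔ L j i := fun i j => ⟨h.symm _ _, h.symm _ _⟩
  have sE : ∀ i j, EE m i j ↔ EE m j i := fun i j => by unfold EE; tauto
  intro i j hi hj
  by_cases b1 : i = 0 ∨ i = m + 1 ∨ i = 2 * m + 1 ∨ i = 3 * m + 1
  · exact fwd i j hi hj b1
  by_cases b2 : j = 0 ∨ j = m + 1 ∨ j = 2 * m + 1 ∨ j = 3 * m + 1
  · rw [sy, sE]
    exact fwd j i hj hi b2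
  · constructor
    · intro l
      exact absurd (Dv i hi b1 j l) b2
    · intro l
      exact absurd l (EEno b1 b2)

section zm
variable {n : ℕ} [NeZero n]

theorem vsub {i j : ℕ} (hi : i < n) (hj : j < n) :
    ((j : ZMod n) - (i : ZMod n)).val = if i ≤ j then j - i else n + j - i := by
  split_ifs with h
  · rw [← Nat.cast_sub h, ZMod.val_natCast, Nat.mod_eq_of_lt (by omega)]
  · have : (j : ZMod n) - (i : ZMod n) = ((n + j - i : ℕ) : ZMod n) := by
      rw [Nat.cast_sub (by omega), Nat.cast_add, ZMod.natCast_self, zero_add]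
    rw [this, ZMod.val_natCast, Nat.mod_eq_of_lt (by omega)]

def phi (c e : ZMod n) (i : ℕ) : ZMod n := c + e * (i : ZMod n)

def Lof (S : Set (Sym2 (ZMod n))) (c e : ZMod n) (i j : ℕ) : Prop :=
  i < n ∧ j < n ∧ s(phi c e i, phi c e j) ∈ S

open Classical in
noncomputable def cdeg (S : Set (Sym2 (ZMod n))) (v : ZMod n) : ℕ :=
  (Finset.univ.filter (fun w => s(v, w) ∈ S)).card

theorem sqe {e : ZMod n} (he : e = 1 ∨ e = -1) : e * e = 1 := by
  rcases he with rfl | rfl <;> simp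

theorem phi_inj {c e : ZMod n} (he : e = 1 ∨ e = -1) {i j : ℕ} (hi : i < n) (hj : j < n)
    (h : phi c e i = phi c e j) : i = j := by
  unfold phi at h
  have h1 := add_left_cancel h
  have h2 : (i : ZMod n) = j := by
    have := congrArg (fun t => e * t) h1
    simpa [← mul_assoc, sqe he] using this
  have h3 := congrArg ZMod.val h2
  rwa [ZMod.val_natCast, ZMod.val_natCast, Nat.mod_eq_of_lt hi, Nat.mod_eq_of_lt hj] at h3

theorem phi_surj {c e : ZMod n} (he : e = 1 ∨ e = -1) (v : ZMod n) :
    ∃ i, i < n ∧ phi c e i = v := by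
  refine ⟨(e * (v - c)).val, ZMod.val_lt _, ?_⟩
  unfold phi
  rw [ZMod.natCast_zmod_val, ← mul_assoc, sqe he]
  ring

theorem card_range' {c e : ZMod n} (he : e = 1 ∨ e = -1) (P : ZMod n → Prop) [DecidablePred P] :
    ((Finset.range n).filter (fun i => P (phi c e i))).card = (Finset.univ.filter P).card := by
  refine Finset.card_bij (fun i _ => phi c e i) ?_ ?_ ?_
  · intro i hi
    simp only [Finset.mem_filter, Finset.mem_univ, true_and] at hi ⊢
    exact hi.2
  · intro i hi j hj h
    simp only [Finset.mem_filter, Finset.mem_range] at hi hj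
    exact phi_inj he hi.1 hj.1 h
  · intro v hv
    obtain ⟨i, hi, rfl⟩ := phi_surj (c := c) he v
    simp only [Finset.mem_filter, Finset.mem_univ, true_and] at hv
    exact ⟨i, by simp [hi, hv], rfl⟩

theorem dL_Lof {S : Set (Sym2 (ZMod n))} {c e : ZMod n} (he : e = 1 ∨ e = -1) {i : ℕ} (hi : i < n) :
    dL n (Lof S c e) i = cdeg S (phi c e i) := by
  classical
  unfold dL cdeg
  rw [← card_range' (c := c) he]
  congr 1
  ext j
  rw [Finset.mem_filter, Finset.mem_filter]
  simp only [Finset.mem_range]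
  exact ⟨fun q => ⟨q.1, q.2.2.2⟩, fun q => ⟨q.1, hi, q.1, q.2⟩⟩

theorem phi_sub {c e : ZMod n} (i j : ℕ) :
    phi c e i - phi c e j = e * ((i : ZMod n) - (j : ZMod n)) := by
  unfold phi; ring

theorem cross_phi {c e : ZMod n} (he : e = 1 ∨ e = -1) {a b u v : ℕ} (h1 : a < u) (h2 : u < b)
    (h3 : b < v) (h4 : v < n) :
    Cross n s(phi c e a, phi c e b) s(phi c e u, phi c e v) := by
  have key : Xor' (Between n (phi c e a) (phi c e b) (phi c e u))
      (Between n (phi c e a) (phi c e b) (phi c e v)) ∧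
      Xor' (Between n (phi c e b) (phi c e a) (phi c e u))
      (Between n (phi c e b) (phi c e a) (phi c e v)) := by
    unfold Between
    simp only [phi_sub]
    have ha : a < n := by omega
    have hb : b < n := by omega
    have hu : u < n := by omega
    rcases he with rfl | rfl
    · simp only [one_mul]
      rw [vsub ha hb, vsub ha hu, vsub ha h4, vsub hb ha, vsub hb hu, vsub hb h4]
      unfold Xor' Xor
      constructor <;> split_ifs <;> omega
    · simp only [neg_mul, one_mul, neg_sub]
      rw [vsub hb ha, vsub hu ha, vsub h4 ha, vsub ha hb, vsub hu hb, vsub h4 hb]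
      unfold Xor' Xor
      constructor <;> split_ifs <;> omega
  intro a' b' c' d' e1 e2
  rw [Sym2.eq_iff] at e1 e2
  rcases e1 with ⟨rfl, rfl⟩ | ⟨rfl, rfl⟩ <;> rcases e2 with ⟨rfl, rfl⟩ | ⟨rfl, rfl⟩
  · exact key.1
  · exact Or.symm key.1
  · exact key.2
  · exact Or.symm key.2

theorem cyc_iff (a b : ZMod n) : IsCycleEdge n s(a, b) ↔ b = a + 1 ∨ a = b + 1 := by
  unfold IsCycleEdge
  constructor
  · rintro ⟨i, hi⟩
    rw [Sym2.eq_iff] at hi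
    rcases hi with ⟨rfl, rfl⟩ | ⟨rfl, rfl⟩ <;> simp
  · rintro (rfl | rfl)
    · exact ⟨a, rfl⟩
    · exact ⟨b, Sym2.eq_swap⟩

theorem lsys {m : ℕ} {S : Set (Sym2 (ZMod n))} (hS : NonCrossingChords n S)
    (hdeg : ∀ v, cdeg S v = m ∨ cdeg S v = 1 ∨ cdeg S v = 0)
    (hm : (Finset.univ.filter (fun v => cdeg S v = m)).card = 4)
    (h1 : (Finset.univ.filter (fun v => cdeg S v = 1)).card = 4 * m - 8)
    (h0 : (Finset.univ.filter (fun v => cdeg S v = 0)).card = 3)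
    {c e : ZMod n} (he : e = 1 ∨ e = -1) : LSys n m (Lof S c e) := by
  have cyc1 : ∀ i j : ℕ, ((j : ZMod n) = i + 1) →
      IsCycleEdge n s(phi c e i, phi c e j) := by
    intro i j hij
    rw [cyc_iff]
    unfold phi
    rw [hij]
    rcases he with rfl | rfl
    · left; ring
    · right; ring
  have cnt : ∀ k, ((Finset.range n).filter (fun i => dL n (Lof S c e) i = k)).card =
      (Finset.univ.filter (fun v => cdeg S v = k)).card := by
    intro k
    rw [← card_range' (c := c) he]
    congr 1
    refine Finset.filter_congr fun i hi => ?_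
    rw [dL_Lof he (Finset.mem_range.1 hi)]
  constructor
  · rintro a b ⟨x, y, z⟩
    exact ⟨y, x, by rwa [Sym2.eq_swap]⟩
  · rintro a b ⟨x, y, z⟩
    exact x
  · rintro a b ⟨x, y, z⟩ hab
    by_contra q
    have : b = a + 1 := by omega
    exact (hS.1 _ z).2 (cyc1 a b (by rw [this]; push_cast; rfl))
  · rintro ⟨x, y, z⟩
    rw [Sym2.eq_swap] at z
    refine (hS.1 _ z).2 (cyc1 (n - 1) 0 ?_)
    rw [Nat.cast_sub (by omega)]
    simp
  · rintro a ⟨x, y, z⟩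
    exact (hS.1 _ z).1 (by simp)
  · rintro a b u v ⟨x, y, z⟩ ⟨x', y', z'⟩ q1 q2 q3
    refine hS.2 _ z _ z' ?_ (cross_phi he q1 q2 q3 y')
    intro heq
    rw [Sym2.eq_iff] at heq
    rcases heq with ⟨r, _⟩ | ⟨r, _⟩
    · have := phi_inj he x x' r; omega
    · have := phi_inj he x y' r; omega
  · intro i hi
    rw [dL_Lof he hi]
    exact hdeg _
  · rw [cnt, hm]
  · rw [cnt, h1]
  · rw [cnt, h0]

set_option maxHeartbeats 1000000 in
theorem structureThm {m : ℕ} (h3 : 3 ≤ m) (hnm : n + 1 = 4 * m)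
    {S : Set (Sym2 (ZMod n))} (hS : NonCrossingChords n S)
    (hdeg : ∀ v, cdeg S v = m ∨ cdeg S v = 1 ∨ cdeg S v = 0)
    (hm : (Finset.univ.filter (fun v => cdeg S v = m)).card = 4)
    (h1 : (Finset.univ.filter (fun v => cdeg S v = 1)).card = 4 * m - 8)
    (h0 : (Finset.univ.filter (fun v => cdeg S v = 0)).card = 3) :
    ∃ c e : ZMod n, (e = 1 ∨ e = -1) ∧ ∀ i j, i < n → j < n →
      (s(phi c e i, phi c e j) ∈ S ↔ EE m i j) := by
  have he1 : (1 : ZMod n) = 1 ∨ (1 : ZMod n) = -1 := Or.inl rfl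
  have h := lsys hS hdeg hm h1 h0 (c := 0) he1
  obtain ⟨a, b, c, d, hab, hbc, hcd, hd, hbig, hdiag, hside⟩ := h.exConfig h3
  have p0 : ∀ i : ℕ, phi (0 : ZMod n) 1 i = (i : ZMod n) := by intro i; simp [phi]
  have hbig' : ∀ v, cdeg S v = m → v = (a : ZMod n) ∨ v = (b : ZMod n) ∨ v = (c : ZMod n) ∨
      v = (d : ZMod n) := by
    intro v hv
    obtain ⟨i, hi, rfl⟩ := phi_surj (c := (0 : ZMod n)) he1 v
    rw [← dL_Lof he1 hi] at hv
    simp only [p0]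
    rcases hbig i hi hv with rfl | rfl | rfl | rfl <;> simp
  have adj : ∀ i j, Lof S 0 1 i j → s((i : ZMod n), (j : ZMod n)) ∈ S := by
    rintro i j ⟨_, _, q⟩
    simpa only [p0] using q
  have sw : ∀ i j : ZMod n, s(i, j) ∈ S → s(j, i) ∈ S := by
    intro i j q
    rwa [Sym2.eq_swap]
  -- the key helper
  have fin : ∀ (w e : ZMod n) (x y z : ℕ) (X Y Z : ZMod n), (e = 1 ∨ e = -1) → 0 < x → x < y → y < z →
      z < n → phi w e x = X → phi w e y = Y → phi w e z = Z →
      s(w, X) ∈ S → s(X, Y) ∈ S → s(Y, Z) ∈ S → s(X, Z) ∈ S →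
      (∀ v, cdeg S v = m → v = w ∨ v = X ∨ v = Y ∨ v = Z) →
      ∃ c e : ZMod n, (e = 1 ∨ e = -1) ∧ ∀ i j, i < n → j < n →
      (s(phi c e i, phi c e j) ∈ S ↔ EE m i j) := by
    intro w e x y z X Y Z he hx hxy hyz hz eX eY eZ s1 s2 s3 s4 hb
    have hL := lsys hS hdeg hm h1 h0 (c := w) he
    have e0 : phi w e 0 = w := by simp [phi]
    refine ⟨w, e, he, fun i j hi hj => ?_⟩
    have hf := hL.final h3 hnm hx hxy hyz hz ?_ ?_ ?_ ?_ ?_ i j hi hj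
    · rw [← hf]
      exact ⟨fun q => ⟨hi, hj, q⟩, fun q => q.2.2⟩
    · intro v hv hv2
      rw [dL_Lof he hv] at hv2
      rcases hb _ hv2 with q | q | q | q
      · left; exact phi_inj he hv (by omega) (q.trans e0.symm)
      · rw [← eX] at q; right; left; exact phi_inj he hv (by omega) q
      · rw [← eY] at q; right; right; left; exact phi_inj he hv (by omega) q
      · rw [← eZ] at q; right; right; right; exact phi_inj he hv (by omega) q
    · exact ⟨by omega, by omega, by rwa [e0, eX]⟩
    · exact ⟨by omega, by omega, by rwa [eX, eY]⟩
    · exact ⟨by omega, by omega, by rwa [eY, eZ]⟩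
    · exact ⟨by omega, by omega, by rwa [eX, eZ]⟩
  have pp : ∀ w x u : ℕ, (w + x = u ∨ w + x = u + n) → phi (w : ZMod n) 1 x = (u : ZMod n) := by
    intro w x u q
    unfold phi
    rw [one_mul, ← Nat.cast_add]
    rcases q with q | q <;> rw [q]
    simp
  have pm : ∀ w x u : ℕ, (u + x = w ∨ u + x = w + n) → phi (w : ZMod n) (-1) x = (u : ZMod n) := by
    intro w x u q
    have : (w : ZMod n) = ((u + x : ℕ) : ZMod n) := by
      rcases q with q | q <;> rw [q]
      simp
    unfold phi
    rw [this]
    push_cast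
    ring
  have hem : (-1 : ZMod n) = 1 ∨ (-1 : ZMod n) = -1 := Or.inr rfl
  rcases hside with ⟨s1, s2, s3⟩ | ⟨s1, s2, s3⟩ | ⟨s1, s2, s3⟩ | ⟨s1, s2, s3⟩ <;>
    replace s1 := adj _ _ s1 <;> replace s2 := adj _ _ s2 <;> replace s3 := adj _ _ s3 <;>
    rcases hdiag with ⟨t, -⟩ | ⟨t, -⟩ <;> replace t := adj _ _ t
  · exact fin d (-1) (d - c) (d - b) (d - a) c b a hem (by omega) (by omega) (by omega) (by omega)
      (pm _ _ _ (by omega)) (pm _ _ _ (by omega)) (pm _ _ _ (by omega))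
      (sw _ _ s3) (sw _ _ s2) (sw _ _ s1) (sw _ _ t) (fun v hv => by rcases hbig' v hv with q | q | q | q <;> simp [q])
  · exact fin a 1 (b - a) (c - a) (d - a) b c d he1 (by omega) (by omega) (by omega) (by omega)
      (pp _ _ _ (by omega)) (pp _ _ _ (by omega)) (pp _ _ _ (by omega))
      s1 s2 s3 t (fun v hv => by rcases hbig' v hv with q | q | q | q <;> simp [q])
  · -- b c, c d, d a ; diagonal a c : W = b, X = c, Y = d, Z = a
    exact fin b 1 (c - b) (d - b) (n + a - b) c d a he1 (by omega) (by omega) (by omega) (by omega)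
      (pp _ _ _ (by omega)) (pp _ _ _ (by omega)) (pp _ _ _ (by omega))
      s1 s2 (sw _ _ s3) (sw _ _ t) (fun v hv => by rcases hbig' v hv with q | q | q | q <;> simp [q])
  · -- diagonal b d : W = a, X = d, Y = c, Z = b
    exact fin a (-1) (n + a - d) (n + a - c) (n + a - b) d c b hem (by omega) (by omega) (by omega)
      (by omega) (pm _ _ _ (by omega)) (pm _ _ _ (by omega)) (pm _ _ _ (by omega))
      s3 (sw _ _ s2) (sw _ _ s1) (sw _ _ t) (fun v hv => by rcases hbig' v hv with q | q | q | q <;> simp [q])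
  · -- c d, d a, a b ; diagonal a c : W = b, X = a, Y = d, Z = c
    exact fin b (-1) (b - a) (n + b - d) (n + b - c) a d c hem (by omega) (by omega) (by omega)
      (by omega) (pm _ _ _ (by omega)) (pm _ _ _ (by omega)) (pm _ _ _ (by omega))
      (sw _ _ s3) s2 (sw _ _ s1) t (fun v hv => by rcases hbig' v hv with q | q | q | q <;> simp [q])
  · -- diagonal b d : W = c, X = d, Y = a, Z = b
    exact fin c 1 (d - c) (n + a - c) (n + b - c) d a b he1 (by omega) (by omega) (by omega)
      (by omega) (pp _ _ _ (by omega)) (pp _ _ _ (by omega)) (pp _ _ _ (by omega))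
      s1 (sw _ _ s2) s3 (sw _ _ t) (fun v hv => by rcases hbig' v hv with q | q | q | q <;> simp [q])
  · -- a d, a b, b c ; diagonal a c : W = d, X = a, Y = b, Z = c
    exact fin d 1 (n + a - d) (n + b - d) (n + c - d) a b c he1 (by omega) (by omega) (by omega)
      (by omega) (pp _ _ _ (by omega)) (pp _ _ _ (by omega)) (pp _ _ _ (by omega))
      (sw _ _ s1) s2 s3 t (fun v hv => by rcases hbig' v hv with q | q | q | q <;> simp [q])
  · -- diagonal b d : W = c, X = b, Y = a, Z = d
    exact fin c (-1) (c - b) (c - a) (n + c - d) b a d hem (by omega) (by omega) (by omega)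
      (by omega) (pm _ _ _ (by omega)) (pm _ _ _ (by omega)) (pm _ _ _ (by omega))
      (sw _ _ s3) (sw _ _ s2) s1 t (fun v hv => by rcases hbig' v hv with q | q | q | q <;> simp [q])

theorem degMul (hn : 3 ≤ n) {G : SimpleGraph (ZMod n)} {S : Set (Sym2 (ZMod n))}
    (hS : NonCrossingChords n S) (hG : G.edgeSet = {e | IsCycleEdge n e} ∪ S) :
    degreeMultiset n G = Finset.univ.val.map (fun v => cdeg S v + 2) := by
  classical
  have hn0 : n ≠ 0 := by omega
  unfold degreeMultiset
  rw [dif_neg hn0]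
  unfold degMultiset
  refine Multiset.map_congr rfl fun v _ => ?_
  have hadj : ∀ a b, G.Adj a b ↔ (b = a + 1 ∨ a = b + 1) ∨ s(a, b) ∈ S := by
    intro a b
    rw [← SimpleGraph.mem_edgeSet, hG, Set.mem_union, Set.mem_ofPred_eq, cyc_iff]
  have e1 : G.neighborFinset v = {v + 1, v - 1} ∪ Finset.univ.filter (fun w => s(v, w) ∈ S) := by
    ext w
    rw [SimpleGraph.mem_neighborFinset, hadj]
    simp only [Finset.mem_union, Finset.mem_insert, Finset.mem_singleton, Finset.mem_filter,
      Finset.mem_univ, true_and, eq_sub_iff_add_eq, eq_comm]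
  have hne : v + 1 ≠ v - 1 := by
    intro h
    have h2 : ((2 : ℕ) : ZMod n) = 0 := by
      have : (1 : ZMod n) + 1 = 0 := by linear_combination h
      push_cast
      rw [← this]; norm_num
    rw [ZMod.natCast_eq_zero_iff] at h2
    have := Nat.le_of_dvd (by norm_num) h2
    omega
  have : G.degree v = cdeg S v + 2 := by
    rw [← SimpleGraph.card_neighborFinset_eq_degree, e1, Finset.card_union_of_disjoint,
      Finset.card_pair hne, add_comm]
    · rfl
    · rw [Finset.disjoint_left]
      intro w hw hw2
      simp only [Finset.mem_insert, Finset.mem_singleton, Finset.mem_filter,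
        Finset.mem_univ, true_and] at hw hw2
      refine (hS.1 _ hw2).2 ((cyc_iff _ _).2 ?_)
      rcases hw with rfl | rfl <;> simp
  rw [← this]

def G0 (n m : ℕ) : SimpleGraph (ZMod n) where
  Adj a b := a ≠ b ∧ ((b = a + 1 ∨ a = b + 1) ∨ EE m a.val b.val)
  symm := ⟨by
    rintro a b ⟨h1, h2⟩
    refine ⟨h1.symm, ?_⟩
    unfold EE at *
    tauto⟩
  loopless := ⟨by
    rintro a ⟨h1, _⟩
    exact h1 rfl⟩

theorem isoG0 {m : ℕ} (h3 : 3 ≤ m) (hnm : n + 1 = 4 * m) {G : SimpleGraph (ZMod n)}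
    (hG : IsOuterplane n G) (hM : degreeMultiset n G = Multiset.replicate 4 (m + 2) +
        Multiset.replicate (4 * m - 8) 3 + Multiset.replicate 3 2) : Nonempty (G0 n m ≃g G) := by
  obtain ⟨S, hS, hE⟩ := hG
  rw [degMul (by omega) hS hE] at hM
  have cnt : ∀ k, (Finset.univ.filter (fun v => cdeg S v = k)).card =
      Multiset.count (k + 2) (Multiset.replicate 4 (m + 2) +
        Multiset.replicate (4 * m - 8) 3 + Multiset.replicate 3 2) := by
    intro k
    rw [← hM, Multiset.count_map]
    rw [Finset.card_def, Finset.filter_val]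
    congr 1
    refine Multiset.filter_congr fun v _ => ?_
    omega
  have st : ∃ c e : ZMod n, (e = 1 ∨ e = -1) ∧ ∀ i j, i < n → j < n →
      (s(phi c e i, phi c e j) ∈ S ↔ EE m i j) := by
    refine structureThm (m := m) h3 hnm hS ?_ ?_ ?_ ?_
    · intro v
      have : cdeg S v + 2 ∈ Finset.univ.val.map (fun v => cdeg S v + 2) :=
        Multiset.mem_map_of_mem _ (Finset.mem_univ v)
      rw [hM] at this
      simp only [Multiset.mem_add, Multiset.mem_replicate] at this
      omega
    · rw [cnt]
      simp only [Multiset.count_add, Multiset.count_replicate]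
      split_ifs <;> omega
    · rw [cnt]
      simp only [Multiset.count_add, Multiset.count_replicate]
      split_ifs <;> omega
    · rw [cnt]
      simp only [Multiset.count_add, Multiset.count_replicate]
      split_ifs <;> omega
  obtain ⟨c, e, he, hc⟩ := st
  let f : ZMod n ≃ ZMod n :=
    { toFun := fun a => c + e * a
      invFun := fun a => e * (a - c)
      left_inv := by intro a; simp [← mul_assoc, sqe he]
      right_inv := by intro a; simp [← mul_assoc, sqe he] }
  refine ⟨⟨f, ?_⟩⟩
  intro a b
  have q := hc a.val b.val (ZMod.val_lt a) (ZMod.val_lt b)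
  unfold phi at q
  rw [ZMod.natCast_zmod_val, ZMod.natCast_zmod_val] at q
  have hcyc : IsCycleEdge n s(c + e * a, c + e * b) ↔ (b = a + 1 ∨ a = b + 1) := by
    rw [cyc_iff]
    rcases he with rfl | rfl
    · constructor
      · rintro (r | r)
        · left; linear_combination r
        · right; linear_combination r
      · rintro (r | r)
        · left; linear_combination r
        · right; linear_combination r
    · constructor
      · rintro (r | r)
        · right; linear_combination r
        · left; linear_combination r
      · rintro (r | r)
        · right; linear_combination r
        · left; linear_combination r
  have hadj : G.Adj (c + e * a) (c + e * b) ↔ (b = a + 1 ∨ a = b + 1) ∨ EE m a.val b.val := by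
    rw [← SimpleGraph.mem_edgeSet, hE, Set.mem_union, Set.mem_ofPred_eq, hcyc, q]
  change G.Adj (c + e * a) (c + e * b) ↔ a ≠ b ∧ _
  constructor
  · intro l
    refine ⟨?_, hadj.1 l⟩
    rintro rfl
    exact G.loopless.irrefl _ l
  · intro l
    exact hadj.2 l.2

end zm
section ex
variable {n : ℕ} [NeZero n]

theorem vsub' (a v : ZMod n) :
    (v - a).val = if a.val ≤ v.val then v.val - a.val else n + v.val - a.val := by
  have := vsub (ZMod.val_lt a) (ZMod.val_lt v)
  rwa [ZMod.natCast_zmod_val, ZMod.natCast_zmod_val] at this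

theorem btwv (a b v : ZMod n) : Between n a b v ↔
    if a.val ≤ b.val then a.val < v.val ∧ v.val < b.val else a.val < v.val ∨ v.val < b.val := by
  unfold Between
  rw [vsub', vsub']
  have := ZMod.val_lt a
  have := ZMod.val_lt b
  have := ZMod.val_lt v
  split_ifs <;> omega

def S0 (n m : ℕ) : Set (Sym2 (ZMod n)) := {e | ∃ a b : ZMod n, e = s(a, b) ∧ EE m a.val b.val}

theorem EEsymm {m i j : ℕ} (h : EE m i j) : EE m j i := Or.symm h

theorem memS0 {m : ℕ} (a b : ZMod n) : s(a, b) ∈ S0 n m ↔ EE m a.val b.val := by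
  constructor
  · rintro ⟨c, d, h, q⟩
    rw [Sym2.eq_iff] at h
    rcases h with ⟨rfl, rfl⟩ | ⟨rfl, rfl⟩
    · exact q
    · exact EEsymm q
  · intro q
    exact ⟨a, b, rfl, q⟩

set_option maxHeartbeats 1000000 in
theorem EEnc {m i j k l : ℕ} (hm : 3 ≤ m) (hl : l + 2 ≤ 4 * m) (hk : k + 2 ≤ 4 * m)
    (hj : j + 2 ≤ 4 * m) (h1 : EE m i j) (h2 : EE m k l)
    (hik : i < k) (hkj : k < j) (ho : l < i ∨ j < l) : False := by
  unfold EE EH at h1 h2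
  rcases h1 with (h1 | h1 | h1 | h1) | (h1 | h1 | h1 | h1) <;> omega

theorem EEgap {m i j : ℕ} (hm : 3 ≤ m) (hj : j + 2 ≤ 4 * m) (h1 : EE m i j) (h : i < j) :
    i + 2 ≤ j ∧ ¬ (i = 0 ∧ j + 2 = 4 * m) := by
  unfold EE EH at h1
  omega

theorem EEirr {m i : ℕ} (hm : 3 ≤ m) : ¬ EE m i i := by
  unfold EE EH
  omega

theorem vadd1 (hn : 3 ≤ n) (a : ZMod n) :
    (a + 1).val = a.val + 1 ∨ (a.val + 1 = n ∧ (a + 1).val = 0) := by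
  have : Fact (1 < n) := ⟨by omega⟩
  have h1 : (1 : ZMod n).val = 1 := ZMod.val_one n
  have ha := ZMod.val_lt a
  rw [ZMod.val_add, h1]
  by_cases h : a.val + 1 = n
  · right; exact ⟨h, by rw [h, Nat.mod_self]⟩
  · left; rw [Nat.mod_eq_of_lt (by omega)]

theorem ncS0 {m : ℕ} (hm : 3 ≤ m) (hnm : n + 1 = 4 * m) : NonCrossingChords n (S0 n m) := by
  have key : ∀ a b c d : ZMod n, EE m a.val b.val → EE m c.val d.val → a.val < b.val →
      Cross n s(a, b) s(c, d) → False := by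
    intro a b c d h1 h2 hab hc
    have x1 := hc a b c d rfl rfl
    have x2 := hc b a c d Sym2.eq_swap rfl
    rw [btwv, btwv] at x1 x2
    have := ZMod.val_lt a
    have := ZMod.val_lt b
    have := ZMod.val_lt c
    have := ZMod.val_lt d
    have e1 : a.val ≤ b.val := by omega
    have e2 : ¬ b.val ≤ a.val := by omega
    simp only [if_pos e1, if_neg e2] at x1 x2
    unfold Xor' Xor at x1 x2
    have : (a.val < c.val ∧ c.val < b.val ∧ (d.val < a.val ∨ b.val < d.val)) ∨
        (a.val < d.val ∧ d.val < b.val ∧ (c.val < a.val ∨ b.val < c.val)) := by omega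
    rcases this with ⟨q1, q2, q3⟩ | ⟨q1, q2, q3⟩
    · exact EEnc hm (by omega) (by omega) (by omega) h1 h2 q1 q2 q3
    · exact EEnc hm (by omega) (by omega) (by omega) h1 (EEsymm h2) q1 q2 q3
  constructor
  · rintro e ⟨a, b, rfl, h⟩
    have va := ZMod.val_lt a
    have vb := ZMod.val_lt b
    constructor
    · intro hd
      rw [Sym2.mk_isDiag_iff] at hd
      subst hd
      exact EEirr hm h
    · rw [cyc_iff]
      have aux : ∀ a : ZMod n, EE m a.val (a + 1).val → False := by
        intro a h
        have va := ZMod.val_lt a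
        rcases vadd1 (by omega) a with q | ⟨q1, q2⟩
        · have vs := ZMod.val_lt (a + 1)
          have := EEgap hm (by omega) h (by omega)
          omega
        · rw [q2] at h
          have := EEgap hm (by omega) (EEsymm h) (by omega)
          omega
      rintro (rfl | rfl)
      · exact aux _ h
      · exact aux _ (EEsymm h)
  · rintro e ⟨a, b, rfl, h⟩ f ⟨c, d, rfl, h'⟩ _ hc
    rcases lt_trichotomy a.val b.val with q | q | q
    · exact key a b c d h h' q hc
    · rw [q] at h; exact EEirr hm h
    · exact key b a c d (EEsymm h) h' q (by rwa [Sym2.eq_swap])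

theorem edgeG0 {m : ℕ} (hm : 3 ≤ m) (hnm : n + 1 = 4 * m) :
    (G0 n m).edgeSet = {e | IsCycleEdge n e} ∪ S0 n m := by
  ext e
  induction e using Sym2.ind with
  | _ a b =>
  rw [SimpleGraph.mem_edgeSet, Set.mem_union, Set.mem_ofPred_eq, cyc_iff, memS0]
  change (a ≠ b ∧ _) ↔ _
  constructor
  · exact fun q => q.2
  · intro q
    refine ⟨?_, q⟩
    rintro rfl
    rcases q with q | q
    · have := vadd1 (n := n) (by omega) a
      have e1 : a + 1 = a := by rcases q with q | q <;> exact q.symm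
      rw [e1] at this
      omega
    · exact EEirr hm q

def gdeg (m i : ℕ) : ℕ :=
  if i = 0 ∨ i = m + 1 ∨ i = 2 * m + 1 ∨ i = 3 * m + 1 then m
  else if i = 1 ∨ i = 2 * m ∨ i = 3 * m then 0 else 1

set_option maxHeartbeats 1000000 in
theorem gdeg_spec {m : ℕ} (hm : 3 ≤ m) (hnm : n + 1 = 4 * m) {i : ℕ} (hi : i < n) :
    dL n (EE m) i = gdeg m i := by
  classical
  unfold dL
  have main : ∀ T : Finset ℕ, (∀ j, j ∈ T ↔ j < n ∧ EE m i j) →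
      ((Finset.range n).filter (fun j => EE m i j)).card = T.card := by
    intro T hT
    congr 1
    ext j
    rw [Finset.mem_filter, Finset.mem_range, hT]
  have main' : ∀ T : Finset ℕ, T.card = gdeg m i → (∀ j, j ∈ T ↔ j < n ∧ EE m i j) →
      ((Finset.range n).filter (fun j => EE m i j)).card = gdeg m i := by
    intro T h hT
    rw [main T hT, h]
  have sing : ∀ k, gdeg m i = 1 → (∀ j, j = k ↔ j < n ∧ EE m i j) →
      ((Finset.range n).filter (fun j => EE m i j)).card = gdeg m i := by
    intro k h hk
    refine main' {k} (by simp [h]) ?_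
    intro j
    rw [Finset.mem_singleton, hk]
  by_cases c0 : i = 0
  · refine main' (Finset.Icc 2 (m + 1)) ?_ ?_
    · rw [Nat.card_Icc, gdeg, if_pos (by omega)]; omega
    · intro j
      rw [Finset.mem_Icc, c0, EE0 hm]; omega
  by_cases cx : i = m + 1
  · refine main' (insert 0 (insert (2 * m + 1) (Finset.Icc (3 * m + 1) (4 * m - 2)))) ?_ ?_
    · rw [Finset.card_insert_of_notMem, Finset.card_insert_of_notMem, Nat.card_Icc, gdeg,
        if_pos (by omega)]
      · omega
      · rw [Finset.mem_Icc]; omega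
      · rw [Finset.mem_insert, Finset.mem_Icc]; omega
    · intro j
      rw [Finset.mem_insert, Finset.mem_insert, Finset.mem_Icc, cx]
      constructor
      · intro q; exact ⟨by omega, (EEx hm (by omega)).2 (by omega)⟩
      · rintro ⟨q1, q2⟩
        have := (EEx hm (by omega)).1 q2
        omega
  by_cases cy : i = 2 * m + 1
  · refine main' (insert (3 * m + 1) (Finset.Icc (m + 1) (2 * m - 1))) ?_ ?_
    · rw [Finset.card_insert_of_notMem, Nat.card_Icc, gdeg, if_pos (by omega)]
      · omega
      · rw [Finset.mem_Icc]; omega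
    · intro j
      rw [Finset.mem_insert, Finset.mem_Icc, cy, EEy hm]
      omega
  by_cases cz : i = 3 * m + 1
  · refine main' (insert (m + 1) (Finset.Icc (2 * m + 1) (3 * m - 1))) ?_ ?_
    · rw [Finset.card_insert_of_notMem, Nat.card_Icc, gdeg, if_pos (by omega)]
      · omega
      · rw [Finset.mem_Icc]; omega
    · intro j
      rw [Finset.mem_insert, Finset.mem_Icc, cz, EEz hm]
      omega
  by_cases zz : i = 1 ∨ i = 2 * m ∨ i = 3 * m
  · refine main' ∅ ?_ ?_
    · rw [gdeg, if_neg (by omega), if_pos zz]; rfl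
    · intro j
      simp only [Finset.notMem_empty, false_iff, not_and]
      intro _
      unfold EE EH
      omega
  have g1 : gdeg m i = 1 := by
    rw [gdeg, if_neg (by omega), if_neg zz]
  by_cases r1 : i < m + 1
  · exact sing 0 g1 (fun j => by unfold EE EH; omega)
  by_cases r2 : i < 2 * m
  · exact sing (2 * m + 1) g1 (fun j => by unfold EE EH; omega)
  by_cases r3 : i < 3 * m
  · exact sing (3 * m + 1) g1 (fun j => by unfold EE EH; omega)
  · exact sing (m + 1) g1 (fun j => by unfold EE EH; omega)

theorem cdegS0 {m : ℕ} (hm : 3 ≤ m) (hnm : n + 1 = 4 * m) (v : ZMod n) :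
    cdeg (S0 n m) v = gdeg m v.val := by
  rw [← gdeg_spec hm hnm (ZMod.val_lt v)]
  classical
  unfold cdeg dL
  rw [← card_range' (c := 0) (e := 1) (Or.inl rfl)]
  congr 1
  ext j
  rw [Finset.mem_filter, Finset.mem_filter, memS0]
  refine and_congr_right fun hj => ?_
  rw [Finset.mem_range] at hj
  have : (phi (0 : ZMod n) 1 j).val = j := by
    unfold phi
    rw [zero_add, one_mul, ZMod.val_natCast, Nat.mod_eq_of_lt hj]
  rw [this]

theorem degG0 {m : ℕ} (hm : 3 ≤ m) (hnm : n + 1 = 4 * m) :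
    degreeMultiset n (G0 n m) = Multiset.replicate 4 (m + 2) +
        Multiset.replicate (4 * m - 8) 3 + Multiset.replicate 3 2 := by
  rw [degMul (by omega) (ncS0 hm hnm) (edgeG0 hm hnm)]
  have e1 : (Finset.univ : Finset (ZMod n)).val.map (fun v => cdeg (S0 n m) v + 2) =
      (Finset.range n).val.map (fun i => gdeg m i + 2) := by
    have im : (Finset.univ : Finset (ZMod n)).image ZMod.val = Finset.range n := by
      ext j
      rw [Finset.mem_image, Finset.mem_range]
      constructor
      · rintro ⟨v, _, rfl⟩; exact ZMod.val_lt v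
      · intro hj
        exact ⟨(j : ZMod n), Finset.mem_univ _, by rw [ZMod.val_natCast, Nat.mod_eq_of_lt hj]⟩
    rw [← im, Finset.image_val_of_injOn (fun a _ b _ h => ZMod.val_injective n h),
      Multiset.map_map]
    refine Multiset.map_congr rfl fun v _ => ?_
    rw [cdegS0 hm hnm]
    rfl
  rw [e1]
  have dec : Finset.range n = (({0, m + 1, 2 * m + 1, 3 * m + 1} : Finset ℕ) ∪
      (Finset.range n \ ({0, m + 1, 2 * m + 1, 3 * m + 1} ∪ {1, 2 * m, 3 * m}))) ∪
      {1, 2 * m, 3 * m} := by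
    ext j
    simp only [Finset.mem_range, Finset.mem_union, Finset.mem_sdiff, Finset.mem_insert,
      Finset.mem_singleton]
    omega
  have cB : ({0, m + 1, 2 * m + 1, 3 * m + 1} : Finset ℕ).card = 4 := by
    rw [Finset.card_insert_of_notMem, Finset.card_insert_of_notMem, Finset.card_insert_of_notMem,
      Finset.card_singleton] <;>
    simp only [Finset.mem_insert, Finset.mem_singleton] <;> omega
  have cZ : ({1, 2 * m, 3 * m} : Finset ℕ).card = 3 := by
    rw [Finset.card_insert_of_notMem, Finset.card_insert_of_notMem,
      Finset.card_singleton] <;>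
    simp only [Finset.mem_insert, Finset.mem_singleton] <;> omega
  have dBZ : Disjoint ({0, m + 1, 2 * m + 1, 3 * m + 1} : Finset ℕ) {1, 2 * m, 3 * m} := by
    rw [Finset.disjoint_left]
    intro j
    simp only [Finset.mem_insert, Finset.mem_singleton]
    omega
  have cR : (Finset.range n \ (({0, m + 1, 2 * m + 1, 3 * m + 1} : Finset ℕ) ∪
      {1, 2 * m, 3 * m})).card = 4 * m - 8 := by
    rw [Finset.card_sdiff_of_subset, Finset.card_union_of_disjoint dBZ, cB, cZ, Finset.card_range]
    · omega
    · intro j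
      simp only [Finset.mem_range, Finset.mem_union, Finset.mem_insert, Finset.mem_singleton]
      omega
  rw [dec, ← Finset.disjUnion_eq_union _ _ ?d1, Finset.disjUnion_val, ← Finset.disjUnion_eq_union _ _ ?d2,
    Finset.disjUnion_val, Multiset.map_add, Multiset.map_add]
  case d1 =>
    rw [Finset.disjoint_left]
    intro j
    simp only [Finset.mem_range, Finset.mem_union, Finset.mem_sdiff, Finset.mem_insert,
      Finset.mem_singleton]
    omega
  case d2 =>
    rw [Finset.disjoint_left]
    intro j
    simp only [Finset.mem_range, Finset.mem_union, Finset.mem_sdiff, Finset.mem_insert,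
      Finset.mem_singleton]
    omega
  have const : ∀ (T : Finset ℕ) (r k : ℕ), T.card = r → (∀ i ∈ T, gdeg m i + 2 = k) →
      T.val.map (fun i => gdeg m i + 2) = Multiset.replicate r k := by
    intro T r k hT h
    rw [Multiset.eq_replicate]
    refine ⟨by rw [Multiset.card_map]; exact hT, ?_⟩
    intro b hb
    obtain ⟨i, hi, rfl⟩ := Multiset.mem_map.1 hb
    exact h i hi
  rw [const _ _ _ cB ?_, const _ _ _ cR ?_, const _ _ _ cZ ?_]
  · intro i hi
    simp only [Finset.mem_insert, Finset.mem_singleton] at hi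
    rw [gdeg, if_neg (by omega), if_pos hi]
  · intro i hi
    simp only [Finset.mem_range, Finset.mem_union, Finset.mem_sdiff, Finset.mem_insert,
      Finset.mem_singleton] at hi
    rw [gdeg, if_neg (by omega), if_neg (by omega)]
  · intro i hi
    simp only [Finset.mem_insert, Finset.mem_singleton] at hi
    rw [gdeg, if_pos hi]

end ex

/-- Type D1 of the paper's Theorem 2: for `p ≥ 12` divisible by `4` and
`n = p - 1`, the multiset `{(p/4+2)^4, 3^(p-8), 2^3}` is outerplane-unigraphic. -/
theorem unigraphic_D1 (p : ℕ) (hp : 12 ≤ p) (hdvd : 4 ∣ p) :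
    OuterplaneUnigraphic (p - 1)
      (Multiset.replicate 4 (p / 4 + 2) +
        Multiset.replicate (p - 8) 3 + Multiset.replicate 3 2) := by
  obtain ⟨m, rfl⟩ := hdvd
  have h3 : 3 ≤ m := by omega
  have hnm : 4 * m - 1 + 1 = 4 * m := by omega
  have : NeZero (4 * m - 1) := ⟨by omega⟩
  have e : 4 * m / 4 = m := by omega
  rw [e]
  refine ⟨⟨G0 (4 * m - 1) m, ⟨S0 (4 * m - 1) m, ncS0 h3 hnm, edgeG0 h3 hnm⟩, degG0 h3 hnm⟩, ?_⟩
  intro G G' hG hG' d d'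
  obtain ⟨i1⟩ := isoG0 h3 hnm hG d
  obtain ⟨i2⟩ := isoG0 h3 hnm hG' d'
  exact ⟨i1.symm.trans i2⟩
end
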